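/- Let T be a tree with at least three vertices such that n_2(T) ≤ n_1(T), with diameter D(T) ≥ 4, and such that T is not isomorphic to any tree of the form Q(r,2,0) (r ≥ 0) or Q(0,1,1). Then χ'_s(T) = n_1(T). -/

import Mathlib

open SimpleGraph

variable {V : Type*}

/-- A vertex distinguishing proper edge `k`-coloring (vdec): a proper edge coloring
(edges sharing an endpoint get different colors) such that distinct vertices have
distinct sets of colors on their incident edges. -/
def IsVDEC (G : SimpleGraph V) (k : ℕ) (c : Sym2 V → Fin k) : Prop :=
  (∀ ⦃u v w : V⦄, G.Adj u v → G.Adj u w → v ≠ w → c s(u, v) ≠ c s(u, w)) ∧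
  (∀ u v : V, u ≠ v →
    {i : Fin k | ∃ w, G.Adj u w ∧ c s(u, w) = i} ≠
    {i : Fin k | ∃ w, G.Adj v w ∧ c s(v, w) = i})

/-- `χ'ₛ(G)`: the minimum number of colors in a vdec of `G`. -/
noncomputable def vdecNum (G : SimpleGraph V) : ℕ :=
  sInf {k : ℕ | ∃ c : Sym2 V → Fin k, IsVDEC G k c}

/-- `n_d(G)`: the number of vertices of degree `d` in `G`. -/
noncomputable def numDeg (G : SimpleGraph V) (d : ℕ) : ℕ :=
  Nat.card {v : V // Nat.card (G.neighborSet v) = d}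

/-- Vertex type of the tree `Q(r,m,n)`: the center `w₀`, the leaves `w₁,…,w_r`,
the pairs `sᵢ, s'ᵢ` (encoded as `(i,0)` and `(i,1)`), the vertices `t₁,…,tₙ`,
and the leaves `t'_{i,j}` for `j < rv i`. -/
abbrev QVert (r m n : ℕ) (rv : Fin n → ℕ) : Type :=
  Unit ⊕ Fin r ⊕ (Fin m × Fin 2) ⊕ (Fin n ⊕ Σ i : Fin n, Fin (rv i))

/-- The tree `Q(r,m,n)` of diameter four: the center `w₀` is adjacent to the `r` leaves
`wᵢ`, to the `m` vertices `sᵢ` (each `sᵢ` having one further leaf neighbor `s'ᵢ`),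
and to the `n` vertices `tᵢ`, where `tᵢ` has `rv i` further neighbors, all leaves. -/
def QGraph (r m n : ℕ) (rv : Fin n → ℕ) : SimpleGraph (QVert r m n rv) :=
  SimpleGraph.fromRel (fun a b =>
    (a = Sum.inl () ∧
      ((∃ i, b = Sum.inr (Sum.inl i)) ∨
       (∃ i, b = Sum.inr (Sum.inr (Sum.inl (i, (0 : Fin 2))))) ∨
       (∃ i, b = Sum.inr (Sum.inr (Sum.inr (Sum.inl i)))))) ∨
    (∃ i : Fin m, a = Sum.inr (Sum.inr (Sum.inl (i, (0 : Fin 2)))) ∧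
       b = Sum.inr (Sum.inr (Sum.inl (i, (1 : Fin 2))))) ∨
    (∃ (i : Fin n) (j : Fin (rv i)), a = Sum.inr (Sum.inr (Sum.inr (Sum.inl i))) ∧
       b = Sum.inr (Sum.inr (Sum.inr (Sum.inr ⟨i, j⟩)))))

/-!
The color sets of the leaves are distinct singletons, so at least `numDeg G 1` colors are needed.
That they suffice is proved by induction on the number of vertices. One leaf is removed, together
with one or two vertices of degree two where `numDeg G 2 ≤ numDeg G 1` would otherwise fail, by
deleting leaves and pendant paths and by suppressing vertices of degree two. When the removed part
is put back, its edges receive old colors or the one new color, and only the few vertices whose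
color sets contain the new color have to be compared with each other.

The difference `numDeg G 1 - numDeg G 2` decides which reduction is available. If it is at least
two, any leaf can be removed, except from trees close to the exceptional ones. If it is one, there
is a leaf at a vertex of degree at least four, or two adjacent vertices of degree two, or else there
are many pendant paths, by a count along the tree. If it is zero, the reduction takes place at a
branch vertex farthest from a root, where all branches but one are legs. The exceptional trees
interfere with the induction only in a few small cases, and what remains for three leaves is a
handful of small spiders, which are colored explicitly.
-/

local infixl:70 " ⊖ " => SimpleGraph.deleteIncidenceSet

/-! ### Degrees, leaves and vertices of degree two -/

section Degree

variable {G : SimpleGraph V}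

/-- The degree of `v`, in the decidability-free form that occurs in `numDeg`. -/
noncomputable def deg (G : SimpleGraph V) (v : V) : ℕ := Nat.card (G.neighborSet v)

/-- The vertex `x` is a leaf, and its neighbor is `v`. -/
structure IsLeafAt (G : SimpleGraph V) (x v : V) : Prop where
  adj : G.Adj v x
  eq : ∀ w, G.Adj x w → w = v

/-- The vertex `s` has exactly the two distinct neighbors `a` and `b`. -/
structure IsMid (G : SimpleGraph V) (a s b : V) : Prop where
  left : G.Adj s a
  right : G.Adj s b
  ne : a ≠ b
  eq : ∀ w, G.Adj s w → w = a ∨ w = b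

/-- A pendant path of length two at `w`: the vertex `s` has the neighbors `w` and `s'`, and `s'` is
a leaf. -/
structure IsPendantPath (G : SimpleGraph V) (w s s' : V) : Prop where
  mid : IsMid G w s s'
  leaf : IsLeafAt G s' s

theorem deg_eq_ncard (v : V) : deg G v = (G.neighborSet v).ncard := Nat.card_coe_set_eq _

theorem numDeg_eq_ncard (d : ℕ) : numDeg G d = {u | deg G u = d}.ncard := Nat.card_coe_set_eq _

theorem deg_eq_degree [Fintype V] [DecidableRel G.Adj] (v : V) : deg G v = G.degree v := by
  rw [deg, Nat.card_eq_fintype_card, G.card_neighborSet_eq_degree]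

theorem exists_adj_of_deg_ne_zero {u : V} (h : deg G u ≠ 0) : ∃ w, G.Adj u w :=
  Set.nonempty_of_ncard_ne_zero (deg_eq_ncard u ▸ h)

theorem IsLeafAt.deg_eq {x v : V} (h : IsLeafAt G x v) : deg G x = 1 := by
  rw [deg_eq_ncard, Set.ncard_eq_one]
  exact ⟨v, Set.ext fun w => ⟨h.eq w, fun e => e ▸ h.adj.symm⟩⟩

theorem IsMid.symm {a s b : V} (h : IsMid G a s b) : IsMid G b s a :=
  ⟨h.right, h.left, h.ne.symm, fun w hw => (h.eq w hw).symm⟩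

theorem IsMid.deg_eq {a s b : V} (h : IsMid G a s b) : deg G s = 2 := by
  rw [deg_eq_ncard, Set.ncard_eq_two]
  exact ⟨a, b, h.ne, Set.ext fun w =>
    ⟨h.eq w, by rintro (rfl | rfl); exacts [h.left, h.right]⟩⟩

variable [Finite V]

theorem deg_pos {u w : V} (h : G.Adj u w) : 0 < deg G u := by
  rw [deg_eq_ncard]
  exact (Set.ncard_pos (Set.toFinite _)).2 ⟨w, h⟩

theorem mem_support_iff_deg_ne_zero {u : V} : u ∈ G.support ↔ deg G u ≠ 0 :=
  ⟨fun ⟨_, h⟩ => (deg_pos h).ne', exists_adj_of_deg_ne_zero⟩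

theorem two_le_deg {u w w' : V} (h : G.Adj u w) (h' : G.Adj u w') (hne : w ≠ w') :
    2 ≤ deg G u := by
  rw [deg_eq_ncard]
  exact (Set.one_lt_ncard (Set.toFinite _)).2 ⟨w, h, w', h', hne⟩

theorem three_le_deg {u w w' w'' : V} (h : G.Adj u w) (h' : G.Adj u w') (h'' : G.Adj u w'')
    (h₁ : w ≠ w') (h₂ : w ≠ w'') (h₃ : w' ≠ w'') : 3 ≤ deg G u := by
  rw [deg_eq_ncard]
  exact (Set.two_lt_ncard (Set.toFinite _)).2 ⟨w, h, w', h', w'', h'', h₁, h₂, h₃⟩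

theorem isLeafAt_of_deg_eq_one {x v : V} (h : G.Adj v x) (hd : deg G x = 1) : IsLeafAt G x v := by
  refine ⟨h, fun w hw => by_contra fun hne => ?_⟩
  have := two_le_deg hw h.symm hne
  omega

theorem exists_isLeafAt_of_deg_eq_one {x : V} (hd : deg G x = 1) : ∃ v, IsLeafAt G x v := by
  obtain ⟨v, hv⟩ := exists_adj_of_deg_ne_zero (G := G) (u := x) (by omega)
  exact ⟨v, isLeafAt_of_deg_eq_one hv.symm hd⟩

theorem exists_adj_notMem {u : V} (A : Finset V) (hA : A.card < deg G u) :
    ∃ w, G.Adj u w ∧ w ∉ A := by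
  rw [deg_eq_ncard, ← Set.ncard_coe_finset] at hA
  exact Set.exists_mem_notMem_of_ncard_lt_ncard hA

theorem exists_adj_ne {u : V} (hd : 2 ≤ deg G u) (w : V) : ∃ z, G.Adj u z ∧ z ≠ w := by
  simpa using exists_adj_notMem {w} (Finset.card_singleton w ▸ hd)

theorem exists_adj_ne_ne {u : V} (hd : 3 ≤ deg G u) (w w' : V) :
    ∃ z, G.Adj u z ∧ z ≠ w ∧ z ≠ w' := by
  classical
  simpa using exists_adj_notMem {w, w'} (Finset.card_le_two.trans_lt hd)

theorem exists_isMid_of_deg_eq_two {a s : V} (h : G.Adj a s) (hd : deg G s = 2) :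
    ∃ b, IsMid G a s b := by
  obtain ⟨b, hb, hne⟩ := exists_adj_ne hd.ge a
  refine ⟨b, h.symm, hb, hne.symm, fun w hw => by_contra fun hc => ?_⟩
  push Not at hc
  have := three_le_deg hw h.symm hb hc.1 hc.2 hne.symm
  omega

theorem eq_of_deg_eq_three {v a b c : V} (ha : G.Adj v a) (hb : G.Adj v b) (hc : G.Adj v c)
    (hab : a ≠ b) (hac : a ≠ c) (hbc : b ≠ c) (hd : deg G v = 3) (w : V) (hw : G.Adj v w) :
    w = a ∨ w = b ∨ w = c := by
  have hsub : ({a, b, c} : Set V) ⊆ G.neighborSet v := by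
    rintro z (rfl | rfl | rfl)
    exacts [ha, hb, hc]
  have hcard : ({a, b, c} : Set V).ncard = 3 := Set.ncard_eq_three.2 ⟨a, b, c, hab, hac, hbc, rfl⟩
  have heq := Set.eq_of_subset_of_ncard_le hsub (by rw [← deg_eq_ncard, hd, hcard])
  have hmem : w ∈ ({a, b, c} : Set V) := heq ▸ hw
  simpa using hmem

end Degree

/-! ### Deleting a leaf and suppressing a vertex of degree two -/

section Operations

variable {G : SimpleGraph V} {x v a s b : V}

/-- Replacement of the path `a, s, b` by the edge `a b`; the vertex `s` stays, isolated. -/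
def suppressMid (G : SimpleGraph V) (a s b : V) : SimpleGraph V := G ⊖ s ⊔ edge a b

theorem suppressMid_adj {u w : V} :
    (suppressMid G a s b).Adj u w ↔ (G.Adj u w ∧ u ≠ s ∧ w ≠ s) ∨
      ((u = a ∧ w = b ∨ u = b ∧ w = a) ∧ u ≠ w) := by
  simp only [suppressMid, sup_adj, deleteIncidenceSet_adj, edge_adj]

theorem suppressMid_comm : suppressMid G b s a = suppressMid G a s b := by
  rw [suppressMid, suppressMid, edge_comm]

theorem IsMid.not_adj_of_isAcyclic (h : IsMid G a s b) (hG : G.IsAcyclic) : ¬ G.Adj a b := by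
  intro hab
  have hbridge := isAcyclic_iff_forall_adj_isBridge.1 hG h.left
  rw [isBridge_iff] at hbridge
  refine hbridge ((Adj.reachable (v := b) ?_).trans (Adj.reachable ?_))
  · simp [h.right, h.ne.symm, h.left.ne]
  · simp [hab.symm, h.right.ne', h.left.ne']

theorem IsLeafAt.deleteLeaf {y u : V} (hx : IsLeafAt G x v) (hy : IsLeafAt G y u) (hyx : y ≠ x)
    (hyv : y ≠ v) : IsLeafAt (G ⊖ x) y u :=
  ⟨deleteIncidenceSet_adj.2 ⟨hy.adj, by rintro rfl; exact hyv (hx.eq y hy.adj), hyx⟩,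
    fun w hw => hy.eq w (deleteIncidenceSet_adj.1 hw).1⟩

theorem IsMid.deleteLeaf (hx : IsLeafAt G x v) (hs : IsMid G a s b) (hsv : s ≠ v) :
    IsMid (G ⊖ x) a s b := by
  have hsx : s ≠ x := by rintro rfl; simpa [hs.deg_eq] using hx.deg_eq
  exact ⟨deleteIncidenceSet_adj.2
      ⟨hs.left, hsx, by rintro rfl; exact hsv (hx.eq s hs.left.symm)⟩,
    deleteIncidenceSet_adj.2
      ⟨hs.right, hsx, by rintro rfl; exact hsv (hx.eq s hs.right.symm)⟩, hs.ne,
    fun w hw => hs.eq w (deleteIncidenceSet_adj.1 hw).1⟩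

theorem IsLeafAt.of_deleteLeaf {z y : V} (hx : IsLeafAt G x v) (h : IsLeafAt (G ⊖ x) z y)
    (hz : z ≠ v) : IsLeafAt G z y := by
  have hadj := deleteIncidenceSet_adj.1 h.adj
  refine ⟨hadj.1, fun w hw => h.eq w (deleteIncidenceSet_adj.2 ⟨hw, hadj.2.2, ?_⟩)⟩
  rintro rfl
  exact hz (hx.eq z hw.symm)

theorem IsMid.of_deleteLeaf (hx : IsLeafAt G x v) (h : IsMid (G ⊖ x) a s b)
    (hs : s ≠ v) : IsMid G a s b := by
  have hleft := deleteIncidenceSet_adj.1 h.left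
  refine ⟨hleft.1, (deleteIncidenceSet_adj.1 h.right).1, h.ne,
    fun w hw => h.eq w (deleteIncidenceSet_adj.2 ⟨hw, hleft.2.1, ?_⟩)⟩
  rintro rfl
  exact hs (hx.eq s hw.symm)

theorem IsMid.isLeafAt_delete (hs : IsMid G a s b) : IsLeafAt (G ⊖ b) s a := by
  refine ⟨deleteIncidenceSet_adj.2 ⟨hs.left.symm, hs.ne, hs.right.ne⟩, fun u hu => ?_⟩
  have := deleteIncidenceSet_adj.1 hu
  exact (hs.eq u this.1).resolve_right this.2.2

theorem IsMid.suppress {u y z : V} (hs : IsMid G a s b) (hm : IsMid G u y z) (hys : y ≠ s)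
    (hya : y ≠ a) (hyb : y ≠ b) : IsMid (suppressMid G a s b) u y z := by
  have hn : ∀ w, G.Adj y w → w ≠ s := by
    rintro w hw rfl
    exact (hs.eq y hw.symm).elim hya hyb
  refine ⟨suppressMid_adj.2 (.inl ⟨hm.left, hys, hn _ hm.left⟩),
    suppressMid_adj.2 (.inl ⟨hm.right, hys, hn _ hm.right⟩), hm.ne, fun w hw => ?_⟩
  rcases suppressMid_adj.1 hw with h | ⟨⟨h, -⟩ | ⟨h, -⟩, -⟩
  exacts [hm.eq w h.1, absurd h hya, absurd h hyb]

theorem neighborSet_deleteIncidenceSet_of_ne {u : V} (hux : u ≠ x) :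
    (G ⊖ x).neighborSet u = G.neighborSet u \ {x} := by
  ext w
  simp [deleteIncidenceSet_adj, hux]

theorem deg_deleteLeaf [DecidableEq V] (h : IsLeafAt G x v) (u : V) :
    deg (G ⊖ x) u = if u = x then 0 else if u = v then deg G v - 1 else deg G u := by
  simp only [deg_eq_ncard]
  split_ifs with hux huv
  · have : (G ⊖ x).neighborSet u = ∅ := by ext w; simp [deleteIncidenceSet_adj, hux]
    rw [this, Set.ncard_empty]
  · rw [neighborSet_deleteIncidenceSet_of_ne hux, huv]
    exact Set.ncard_sdiff_singleton_of_mem h.adj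
  · rw [neighborSet_deleteIncidenceSet_of_ne hux, Set.sdiff_singleton_eq_self]
    exact fun hxu => huv (h.eq u (G.adj_symm hxu))

theorem deg_deleteLeaf_self (h : IsLeafAt G x v) : deg (G ⊖ x) v = deg G v - 1 := by
  classical
  rw [deg_deleteLeaf h, if_neg h.adj.ne, if_pos rfl]

theorem deg_deleteLeaf_of_ne {u : V} (h : IsLeafAt G x v) (hux : u ≠ x) (huv : u ≠ v) :
    deg (G ⊖ x) u = deg G u := by
  classical
  rw [deg_deleteLeaf h, if_neg hux, if_neg huv]

theorem deg_deletePendantPath [DecidableEq V] {w s' : V} (h : IsPendantPath G w s s') (u : V) :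
    deg (G ⊖ s' ⊖ s) u =
      if u = s ∨ u = s' then 0 else if u = w then deg G w - 1 else deg G u := by
  rw [deg_deleteLeaf h.mid.isLeafAt_delete, deg_deleteLeaf h.leaf, deg_deleteLeaf h.leaf]
  have := h.mid.ne
  have := h.mid.left.ne
  grind

theorem deg_suppressMid_left [Finite V] (h : IsMid G a s b) (hab : ¬ G.Adj a b) :
    deg (suppressMid G a s b) a = deg G a := by
  have hnbr : (suppressMid G a s b).neighborSet a = insert b (G.neighborSet a \ {s}) := by
    ext w
    simp only [mem_neighborSet, suppressMid_adj, Set.mem_insert_iff, Set.mem_sdiff,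
      Set.mem_singleton_iff]
    have := h.left.ne'
    have := h.ne
    grind
  have hs : s ∈ G.neighborSet a := h.left.symm
  rw [deg_eq_ncard, hnbr, Set.ncard_insert_of_notMem fun hb => hab hb.1,
    Set.ncard_sdiff_singleton_add_one hs, deg_eq_ncard]

theorem deg_suppressMid [DecidableEq V] [Finite V] (h : IsMid G a s b) (hab : ¬ G.Adj a b) (u : V) :
    deg (suppressMid G a s b) u = if u = s then 0 else deg G u := by
  have hsa := h.left.ne
  have hsb := h.right.ne
  by_cases hua : u = a
  · rw [hua, deg_suppressMid_left h hab, if_neg hsa.symm]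
  by_cases hub : u = b
  · rw [hub, ← suppressMid_comm, deg_suppressMid_left h.symm fun hba => hab hba.symm,
      if_neg hsb.symm]
  have hadj : ∀ w, G.Adj u w → u ≠ s → w ≠ s := by
    rintro w hw - rfl
    exact (h.eq u hw.symm).elim hua hub
  have hnbr : (suppressMid G a s b).neighborSet u = if u = s then ∅ else G.neighborSet u := by
    ext w
    simp only [mem_neighborSet, suppressMid_adj]
    split_ifs with hus <;> simp only [mem_neighborSet, Set.mem_empty_iff_false] <;> grind
  rw [deg_eq_ncard, hnbr, deg_eq_ncard]
  split_ifs <;> simp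

end Operations

section Count

variable {G : SimpleGraph V} {x v a s b : V}

theorem sum_ite_eq_update [Fintype V] [DecidableEq V] (φ : ℕ → ℤ) (f : V → ℕ) (x : V) (k : ℕ) :
    ∑ u, φ (if u = x then k else f u) = ∑ u, φ (f u) - φ (f x) + φ k := by
  have hcongr : ∑ u ∈ Finset.univ.erase x, φ (if u = x then k else f u) =
      ∑ u ∈ Finset.univ.erase x, φ (f u) :=
    Finset.sum_congr rfl fun u hu => by rw [if_neg (Finset.ne_of_mem_erase hu)]
  rw [← Finset.add_sum_erase _ _ (Finset.mem_univ x), hcongr, if_pos rfl,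
    ← Finset.add_sum_erase _ (fun u => φ (f u)) (Finset.mem_univ x)]
  ring

theorem sum_deg_deleteLeaf [Fintype V] (φ : ℕ → ℤ) (h : IsLeafAt G x v) :
    ∑ u, φ (deg (G ⊖ x) u) =
      ∑ u, φ (deg G u) - φ 1 + φ 0 - φ (deg G v) + φ (deg G v - 1) := by
  classical
  simp only [deg_deleteLeaf h]
  rw [sum_ite_eq_update φ (fun u => if u = v then deg G v - 1 else deg G u), sum_ite_eq_update]
  simp only [h.adj.ne', if_false, h.deg_eq]
  ring

theorem sum_deg_suppressMid [Fintype V] (φ : ℕ → ℤ) (h : IsMid G a s b) (hab : ¬ G.Adj a b) :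
    ∑ u, φ (deg (suppressMid G a s b) u) = ∑ u, φ (deg G u) - φ 2 + φ 0 := by
  classical
  simp only [deg_suppressMid h hab]
  rw [sum_ite_eq_update, h.deg_eq]

theorem numDeg_eq_card_filter [Fintype V] (d : ℕ) :
    numDeg G d = (Finset.univ.filter fun u => deg G u = d).card := by
  rw [numDeg, Nat.card_eq_fintype_card, Fintype.card_subtype]
  rfl

theorem numDeg_eq_sum [Fintype V] (d : ℕ) :
    (numDeg G d : ℤ) = ∑ u, if deg G u = d then 1 else 0 := by
  simp [numDeg_eq_card_filter]

theorem ncard_support_eq_sum [Fintype V] :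
    (G.support.ncard : ℤ) = ∑ u, if deg G u = 0 then 0 else 1 := by
  have hsupp : G.support = ↑(Finset.univ.filter fun u => deg G u ≠ 0) := by
    ext u
    simp [mem_support_iff_deg_ne_zero]
  rw [hsupp, Set.ncard_coe_finset]
  simp [Finset.sum_ite]

variable [Finite V]

theorem numDeg_deleteLeaf (h : IsLeafAt G x v) (d : ℕ) (hd : d ≠ 0) :
    numDeg (G ⊖ x) d + (if 1 = d then 1 else 0) + (if deg G v = d then 1 else 0) =
      numDeg G d + (if deg G v - 1 = d then 1 else 0) := by
  cases nonempty_fintype V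
  rw [← Nat.cast_inj (R := ℤ)]
  push_cast
  rw [numDeg_eq_sum, numDeg_eq_sum, sum_deg_deleteLeaf (fun k => if k = d then 1 else 0) h]
  simp only [hd.symm, if_false]
  ring

theorem numDeg_suppressMid (h : IsMid G a s b) (hab : ¬ G.Adj a b) (d : ℕ) (hd : d ≠ 0) :
    numDeg (suppressMid G a s b) d + (if 2 = d then 1 else 0) = numDeg G d := by
  cases nonempty_fintype V
  rw [← Nat.cast_inj (R := ℤ)]
  push_cast
  rw [numDeg_eq_sum, numDeg_eq_sum, sum_deg_suppressMid (fun k => if k = d then 1 else 0) h hab]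
  simp only [hd.symm, if_false]
  ring

theorem ncard_support_deleteLeaf (h : IsLeafAt G x v) (hv : 2 ≤ deg G v) :
    (G ⊖ x).support.ncard + 1 = G.support.ncard := by
  cases nonempty_fintype V
  zify
  rw [ncard_support_eq_sum, ncard_support_eq_sum,
    sum_deg_deleteLeaf (fun k => if k = 0 then 0 else 1) h,
    if_neg (by omega : deg G v - 1 ≠ 0), if_neg (by omega : deg G v ≠ 0)]
  simp

theorem ncard_support_suppress (h : IsMid G a s b) (hab : ¬ G.Adj a b) :
    (suppressMid G a s b).support.ncard + 1 = G.support.ncard := by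
  cases nonempty_fintype V
  zify
  rw [ncard_support_eq_sum, ncard_support_eq_sum,
    sum_deg_suppressMid (fun k => if k = 0 then 0 else 1) h hab]
  simp

end Count

section TreeLike

variable {G : SimpleGraph V} {x v a s b : V}

/-- `G` consists of a tree with at least one edge and of isolated vertices. The vertices removed
from a tree in the induction stay behind as isolated ones, so that the vertex type is fixed. -/
structure TreeLike (G : SimpleGraph V) : Prop where
  nonempty : G.support.Nonempty
  acyclic : G.IsAcyclic
  reachable : ∀ u ∈ G.support, ∀ w ∈ G.support, G.Reachable u w

theorem reachable_map {V' : Type*} {G' : SimpleGraph V'} (φ : V → V')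
    (h : ∀ a b, G.Adj a b → G'.Reachable (φ a) (φ b)) {a b : V} (hab : G.Reachable a b) :
    G'.Reachable (φ a) (φ b) := by
  obtain ⟨p⟩ := hab
  induction p with
  | nil => exact Reachable.refl _
  | cons h' _ ih => exact (h _ _ h').trans ih

theorem TreeLike.deleteLeaf [Finite V] (hT : TreeLike G) (hx : IsLeafAt G x v)
    (hv : 2 ≤ deg G v) : TreeLike (G ⊖ x) := by
  classical
  refine ⟨?_, hT.acyclic.anti (G.deleteIncidenceSet_le x), fun u hu w hw => ?_⟩
  · obtain ⟨z, hz, hzx⟩ := exists_adj_ne hv x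
    exact ⟨v, z, deleteIncidenceSet_adj.2 ⟨hz, hx.adj.ne, hzx⟩⟩
  · obtain ⟨u', hu : (G ⊖ x).Adj u u'⟩ := hu
    obtain ⟨w', hw : (G ⊖ x).Adj w w'⟩ := hw
    rw [deleteIncidenceSet_adj] at hu hw
    have hreach := reachable_map (G' := G ⊖ x) (fun z => if z = x then v else z) ?_
      (hT.reachable u ⟨u', hu.1⟩ w ⟨w', hw.1⟩)
    · simpa [hu.2.1, hw.2.1] using hreach
    intro y z hyz
    split_ifs with hy hz hz
    · exact Reachable.refl _
    · rw [hx.eq z (hy ▸ hyz)]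
    · rw [hx.eq y (hz ▸ hyz.symm)]
    · exact Adj.reachable (deleteIncidenceSet_adj.2 ⟨hyz, hy, hz⟩)

theorem TreeLike.not_adj (hT : TreeLike G) (hs : IsMid G a s b) : ¬ G.Adj a b :=
  hs.not_adj_of_isAcyclic hT.acyclic

theorem IsMid.isAcyclic_suppressMid (hs : IsMid G a s b) (hG : G.IsAcyclic) :
    (suppressMid G a s b).IsAcyclic := by
  refine (hG.anti (G.deleteIncidenceSet_le s)).sup_edge_of_not_reachable fun hreach => ?_
  have hbridge := isAcyclic_iff_forall_adj_isBridge.1 hG hs.left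
  rw [isBridge_iff] at hbridge
  refine hbridge ((Adj.reachable (v := b) ?_).trans (hreach.symm.mono fun y z hyz => ?_))
  · simp [hs.right, hs.ne.symm, hs.left.ne]
  · simp only [deleteIncidenceSet_adj] at hyz
    simp [hyz.1, hyz.2.1, hyz.2.2]

theorem TreeLike.suppress (hT : TreeLike G) (hs : IsMid G a s b) :
    TreeLike (suppressMid G a s b) := by
  classical
  have hadj : (suppressMid G a s b).Adj a b := suppressMid_adj.2 (.inr ⟨.inl ⟨rfl, rfl⟩, hs.ne⟩)
  have hsupp : ∀ u ∈ (suppressMid G a s b).support, u ≠ s ∧ u ∈ G.support := by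
    rintro u ⟨w, hw⟩
    rcases suppressMid_adj.1 hw with ⟨hw, hu, -⟩ | ⟨⟨rfl, -⟩ | ⟨rfl, -⟩, -⟩
    exacts [⟨hu, w, hw⟩, ⟨hs.left.ne', s, hs.left.symm⟩, ⟨hs.right.ne', s, hs.right.symm⟩]
  refine ⟨⟨a, b, hadj⟩, hs.isAcyclic_suppressMid hT.acyclic, fun u hu w hw => ?_⟩
  obtain ⟨hus, hu⟩ := hsupp u hu
  obtain ⟨hws, hw⟩ := hsupp w hw
  have hreach := reachable_map (G' := suppressMid G a s b) (fun z => if z = s then a else z) ?_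
    (hT.reachable u hu w hw)
  · simpa [hus, hws] using hreach
  intro y z hyz
  split_ifs with hy hz hz
  · exact Reachable.refl _
  · rcases hs.eq z (hy ▸ hyz) with rfl | rfl
    exacts [Reachable.refl _, hadj.reachable]
  · rcases hs.eq y (hz ▸ hyz.symm) with rfl | rfl
    exacts [Reachable.refl _, hadj.symm.reachable]
  · exact (suppressMid_adj.2 (.inl ⟨hyz, hy, hz⟩)).reachable

theorem TreeLike.isTree_induce_support (hT : TreeLike G) : (G.induce G.support).IsTree := by
  classical
  obtain ⟨r, hr⟩ := hT.nonempty
  have : Nonempty G.support := ⟨r, hr⟩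
  refine ⟨⟨fun y z => ?_⟩, hT.acyclic.induce _⟩
  have hreach := reachable_map (G' := G.induce G.support)
    (fun u => if hu : u ∈ G.support then ⟨u, hu⟩ else ⟨r, hr⟩) ?_ (hT.reachable y y.2 z z.2)
  · simpa using hreach
  intro u w huw
  have hu : u ∈ G.support := ⟨w, huw⟩
  have hw : w ∈ G.support := ⟨u, huw.symm⟩
  simp only [hu, hw, dif_pos]
  exact Adj.reachable (by simpa using huw)

theorem TreeLike.sum_deg [Fintype V] (hT : TreeLike G) :
    ∑ u, (if deg G u = 0 then 0 else (deg G u : ℤ) - 2) = -2 := by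
  classical
  have hedges := hT.isTree_induce_support.card_edgeFinset
  rw [card_edgeFinset_induce_support, ← Nat.card_eq_fintype_card, Nat.card_coe_set_eq] at hedges
  have hsum : ∑ u, deg G u = 2 * G.edgeFinset.card := by
    simp only [deg_eq_degree, sum_degrees_eq_twice_card_edges]
  have hterm : ∀ u, (if deg G u = 0 then 0 else (deg G u : ℤ) - 2) =
      deg G u - 2 * if deg G u = 0 then 0 else 1 := fun u => by
    split_ifs with hu <;> simp [hu]
  rw [Finset.sum_congr rfl fun u _ => hterm u, Finset.sum_sub_distrib, ← Finset.mul_sum,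
    ← ncard_support_eq_sum]
  zify at hsum hedges
  rw [hsum, ← hedges]
  ring

theorem TreeLike.counts_deleteLeaf [Finite V] (hT : TreeLike G) (hx : IsLeafAt G x v)
    (hv : 2 ≤ deg G v) :
    TreeLike (G ⊖ x) ∧ (G ⊖ x).support.ncard + 1 = G.support.ncard ∧
      numDeg (G ⊖ x) 1 + 1 = numDeg G 1 + (if deg G v = 2 then 1 else 0) ∧
      numDeg (G ⊖ x) 2 + (if deg G v = 2 then 1 else 0) =
        numDeg G 2 + (if deg G v = 3 then 1 else 0) := by
  have hn₁ := numDeg_deleteLeaf hx 1 (by omega)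
  have hn₂ := numDeg_deleteLeaf hx 2 (by omega)
  refine ⟨hT.deleteLeaf hx hv, ncard_support_deleteLeaf hx hv, ?_, ?_⟩ <;>
    split_ifs at hn₁ hn₂ ⊢ <;> omega

theorem TreeLike.counts_suppress [Finite V] (hT : TreeLike G) (hs : IsMid G a s b) :
    TreeLike (suppressMid G a s b) ∧
      (suppressMid G a s b).support.ncard + 1 = G.support.ncard ∧
      numDeg (suppressMid G a s b) 1 = numDeg G 1 ∧
      numDeg (suppressMid G a s b) 2 + 1 = numDeg G 2 := by
  have hab := hT.not_adj hs
  exact ⟨hT.suppress hs, ncard_support_suppress hs hab, numDeg_suppressMid hs hab 1 (by omega),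
    numDeg_suppressMid hs hab 2 (by omega)⟩

theorem TreeLike.counts_deletePendantPath [Finite V] (hT : TreeLike G) {w s' : V}
    (h : IsPendantPath G w s s') (hw : 3 ≤ deg G w) :
    TreeLike (G ⊖ s' ⊖ s) ∧ (G ⊖ s' ⊖ s).support.ncard + 2 = G.support.ncard ∧
      numDeg (G ⊖ s' ⊖ s) 1 + 1 = numDeg G 1 ∧
      numDeg (G ⊖ s' ⊖ s) 2 + 1 = numDeg G 2 + (if deg G w = 3 then 1 else 0) := by
  classical
  have hs := h.mid.deg_eq
  have hdeg : deg (G ⊖ s') w = deg G w := by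
    rw [deg_deleteLeaf h.leaf, if_neg h.mid.ne, if_neg h.mid.left.ne.symm]
  obtain ⟨hT₁, hsupp₁, h₁, h₁'⟩ := hT.counts_deleteLeaf h.leaf hs.ge
  obtain ⟨hT₂, hsupp₂, h₂, h₂'⟩ := hT₁.counts_deleteLeaf h.mid.isLeafAt_delete (by omega)
  rw [hs, if_pos rfl] at h₁
  rw [hs, if_pos rfl, if_neg (by omega)] at h₁'
  rw [hdeg, if_neg (by omega)] at h₂
  rw [hdeg, if_neg (by omega)] at h₂'
  exact ⟨hT₂, by omega, by omega, by omega⟩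

end TreeLike

/-! ### Edge colorings and their color sets -/

section Coloring

open Finset

variable {G : SimpleGraph V} {c : Sym2 V → ℕ} {S : V → Finset ℕ}

/-- `c` is a proper edge coloring of `G` whose color set at each vertex `u` is `S u`. The values of
`c` outside the edges of `G` are irrelevant, so that one `c` serves a graph and its subgraphs. -/
structure IsEdgeColoring (G : SimpleGraph V) (c : Sym2 V → ℕ) (S : V → Finset ℕ) : Prop where
  mem : ∀ u i, i ∈ S u ↔ ∃ w, G.Adj u w ∧ c s(u, w) = i
  inj : ∀ u w w', G.Adj u w → G.Adj u w' → c s(u, w) = c s(u, w') → w = w'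

namespace IsEdgeColoring

theorem color_mem_left (h : IsEdgeColoring G c S) {u w : V} (huw : G.Adj u w) :
    c s(u, w) ∈ S u :=
  (h.mem u _).2 ⟨w, huw, rfl⟩

theorem color_mem_right (h : IsEdgeColoring G c S) {u w : V} (huw : G.Adj u w) :
    c s(u, w) ∈ S w :=
  Sym2.eq_swap (a := u) ▸ h.color_mem_left huw.symm

theorem card_eq (h : IsEdgeColoring G c S) (u : V) : (S u).card = deg G u := by
  have hinj : Set.InjOn (fun w => c s(u, w)) (G.neighborSet u) :=
    fun w hw w' hw' he => h.inj u w w' hw hw' he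
  have himage : (S u : Set ℕ) = (fun w => c s(u, w)) '' G.neighborSet u := by
    ext i
    simp [h.mem u i]
  rw [deg, ← Set.ncard_coe_finset, himage, hinj.ncard_image]
  rfl

theorem eq_of_isLeafAt (h : IsEdgeColoring G c S) {x v : V} (hx : IsLeafAt G x v) :
    S x = {c s(v, x)} := by
  ext i
  rw [h.mem, mem_singleton]
  constructor
  · rintro ⟨w, hw, rfl⟩
    rw [hx.eq w hw, Sym2.eq_swap]
  · rintro rfl
    exact ⟨v, hx.adj.symm, by rw [Sym2.eq_swap]⟩

theorem eq_of_isMid (h : IsEdgeColoring G c S) {a s b : V} (hs : IsMid G a s b) :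
    S s = {c s(a, s), c s(s, b)} := by
  ext i
  rw [h.mem, mem_insert, mem_singleton]
  constructor
  · rintro ⟨w, hw, rfl⟩
    rcases hs.eq w hw with rfl | rfl
    · exact Or.inl (by rw [Sym2.eq_swap])
    · exact Or.inr rfl
  · rintro (rfl | rfl)
    · exact ⟨a, hs.left, by rw [Sym2.eq_swap]⟩
    · exact ⟨b, hs.right, rfl⟩

theorem ne_of_isMid (h : IsEdgeColoring G c S) {a s b : V} (hs : IsMid G a s b) :
    c s(a, s) ≠ c s(s, b) := fun e =>
  hs.ne (h.inj s a b hs.left hs.right (by rw [Sym2.eq_swap, e]))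

theorem recolor [DecidableEq V] (h : IsEdgeColoring G c S) {u w : V} (huw : G.Adj u w) {e i : ℕ}
    (he : c s(u, w) = e) (hu : i ∉ S u) (hw : i ∉ S w) :
    IsEdgeColoring G (Function.update c s(u, w) i)
      (Function.update (Function.update S u (insert i ((S u).erase e))) w
        (insert i ((S w).erase e))) := by
  obtain ⟨hm, hi⟩ := h
  have hne := huw.ne
  have hwu := huw.symm
  have he' : c s(w, u) = e := by rw [Sym2.eq_swap, he]
  refine ⟨fun z k => ?_, fun z y y' h1 h2 => ?_⟩
  · by_cases hzw : z = w
    · subst hzw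
      simp only [Function.update_self, mem_insert, mem_erase, hm, Function.update_apply,
        Sym2.eq_iff]
      grind
    by_cases hzu : z = u
    · subst hzu
      simp only [Function.update_apply, Sym2.eq_iff]
      grind
    · simp only [Function.update_apply, hzw, hzu, if_false, hm, Sym2.eq_iff]
      grind
  · simp only [Function.update_apply, Sym2.eq_iff]
    grind

theorem addLeaf [DecidableEq V] {x v : V} (h : IsEdgeColoring (G ⊖ x) c S)
    (hx : IsLeafAt G x v) {i : ℕ} (hi : i ∉ S v) :
    IsEdgeColoring G (Function.update c s(v, x) i)
      (Function.update (Function.update S v (insert i (S v))) x {i}) := by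
  obtain ⟨hm, hin⟩ := h
  obtain ⟨hvx, hx⟩ := hx
  have hne := hvx.ne
  have hxv := hvx.symm
  simp only [deleteIncidenceSet_adj] at hm hin
  refine ⟨fun z k => ?_, fun z y y' h1 h2 => ?_⟩
  · by_cases hzw : z = x
    · subst hzw
      simp only [Function.update_self, mem_singleton, Function.update_apply, Sym2.eq_iff]
      grind
    by_cases hzu : z = v
    · subst hzu
      simp only [Function.update_apply, Sym2.eq_iff]
      grind
    · simp only [Function.update_apply, hzw, hzu, if_false, hm, Sym2.eq_iff]
      grind [G.adj_comm]
  · have hy : y = x → z = v := by rintro rfl; exact hx _ h1.symm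
    have hy' : y' = x → z = v := by rintro rfl; exact hx _ h2.symm
    have hinz := hin z y y'
    have hfresh : ∀ w, G.Adj v w → w ≠ x → c s(v, w) ≠ i := fun w h h' h'' =>
      hi ((hm v i).2 ⟨w, ⟨h, hne, h'⟩, h''⟩)
    have hzx : z = x → y = v ∧ y' = v := by rintro rfl; exact ⟨hx _ h1, hx _ h2⟩
    clear hm hin
    simp only [Function.update_apply, Sym2.eq_iff]
    grind

theorem subdivide [DecidableEq V] {a s b : V} (h : IsEdgeColoring (suppressMid G a s b) c S)
    (hs : IsMid G a s b) (hnab : ¬ G.Adj a b) {i e : ℕ} (he : c s(a, b) = e) (hi : i ∉ S a) :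
    IsEdgeColoring G (Function.update (Function.update c s(a, s) i) s(s, b) e)
      (Function.update (Function.update S a (insert i ((S a).erase e))) s {i, e}) := by
  obtain ⟨hm, hin⟩ := h
  obtain ⟨ha, hb, hab, hs⟩ := hs
  have hsa := ha.ne
  have hsb := hb.ne
  have has := ha.symm
  have hbs := hb.symm
  have hnba : ¬ G.Adj b a := fun h => hnab h.symm
  have he' : c s(b, a) = e := by rw [Sym2.eq_swap, he]
  simp only [suppressMid_adj] at hm hin
  have hea : e ∈ S a := by rw [hm]; exact ⟨b, by tauto⟩
  have heb : e ∈ S b := by rw [hm]; exact ⟨a, by tauto⟩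
  have hie : i ≠ e := by rintro rfl; exact hi hea
  refine ⟨fun z k => ?_, fun z y y' h1 h2 => ?_⟩
  · by_cases hzs : z = s
    · subst hzs
      simp only [Function.update_self, mem_insert, mem_singleton, Function.update_apply,
        Sym2.eq_iff]
      grind
    by_cases hza : z = a
    · subst hza
      rw [Function.update_of_ne hzs, Function.update_self]
      simp only [mem_insert, mem_erase, Function.update_apply, Sym2.eq_iff]
      simp only [hm] at hi ⊢
      grind
    · rw [Function.update_of_ne hzs, Function.update_of_ne hza]
      simp only [Function.update_apply, Sym2.eq_iff, hm]
      by_cases hzb : z = b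
      · subst hzb
        grind
      · grind [G.adj_comm]
  · have hy : y = s → z = a ∨ z = b := by rintro rfl; exact hs _ h1.symm
    have hy' : y' = s → z = a ∨ z = b := by rintro rfl; exact hs _ h2.symm
    have h5 := hin z y y'
    have h8 := hin z y a
    have h9 := hin z y' a
    have hfresh : ∀ w, G.Adj a w → w ≠ s → c s(a, w) ≠ i := fun w h h' h'' =>
      hi ((hm a i).2 ⟨w, Or.inl ⟨h, hsa.symm, h'⟩, h''⟩)
    clear hin hm hi hea heb
    simp only [Function.update_apply, Sym2.eq_iff]
    by_cases hzs : z = s <;> by_cases hza : z = a <;> by_cases hzb : z = b <;> grind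

end IsEdgeColoring

/-- Distinct vertices with nonempty color sets have distinct color sets. -/
def Distinguishes (S : V → Finset ℕ) : Prop :=
  ∀ u w, S u = S w → (S u).Nonempty → u = w

/-- `G` has a proper edge coloring with colors below `k` that distinguishes its non-isolated
vertices: a vdec, except that vertices deleted from a graph are kept as isolated ones. -/
def VDColorable (G : SimpleGraph V) (k : ℕ) : Prop :=
  ∃ c S, IsEdgeColoring G c S ∧ (∀ u, S u ⊆ range k) ∧ Distinguishes S

theorem VDColorable.mono {k k' : ℕ} (h : VDColorable G k) (hk : k ≤ k') : VDColorable G k' := by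
  obtain ⟨c, S, hc, hr, hd⟩ := h
  exact ⟨c, S, hc, fun u => (hr u).trans (range_mono hk), hd⟩

/-- The vertices of `L` are those seeing the new color `N`; the permutation `σ` tells whose old
color set each of the other vertices now has. -/
theorem VDColorable.of_fresh_color {S' : V → Finset ℕ} {N : ℕ} (hc : IsEdgeColoring G c S')
    (hr : ∀ u, S u ⊆ range N) (hd : Distinguishes S) (σ : Equiv.Perm V)
    (L : List (V × Finset ℕ)) (hL : ∀ e ∈ L, S' e.1 = insert N e.2 ∧ e.2 ⊆ range N)
    (hσ : ∀ u, (∀ e ∈ L, u ≠ e.1) → S' u = S (σ u)) (hL' : L.Pairwise fun e e' => e.2 ≠ e'.2) :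
    VDColorable G (N + 1) := by
  have hN : ∀ u, N ∉ S u := fun u hu => by simpa using hr u hu
  have hNL : ∀ e ∈ L, N ∉ e.2 := fun e he h => by simpa using (hL e he).2 h
  have dichotomy : ∀ u, (∃ e ∈ L, u = e.1) ∨ (N ∉ S' u ∧ S' u = S (σ u)) := by
    intro u
    by_cases hu : ∃ e ∈ L, u = e.1
    · exact Or.inl hu
    · push Not at hu
      exact Or.inr ⟨hσ u hu ▸ hN _, hσ u hu⟩
  refine ⟨c, S', hc, fun u => ?_, fun u w huw hne => ?_⟩
  · rcases dichotomy u with ⟨e, he, rfl⟩ | ⟨-, h⟩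
    · rw [(hL e he).1]
      exact insert_subset (by simp) ((hL e he).2.trans (range_mono N.le_succ))
    · rw [h]
      exact (hr _).trans (range_mono N.le_succ)
  · rcases dichotomy u with ⟨e, he, rfl⟩ | ⟨hu, hu'⟩ <;>
    rcases dichotomy w with ⟨e', he', rfl⟩ | ⟨hw, hw'⟩
    · rw [(hL e he).1, (hL e' he').1] at huw
      have := congrArg (fun A => A.erase N) huw
      simp only [erase_insert (hNL e he), erase_insert (hNL e' he')] at this
      rw [List.inj_on_of_nodup_map (List.pairwise_map.2 hL') he he' this]
    · exact absurd (huw ▸ (hL e he).1 ▸ mem_insert_self N e.2) hw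
    · exact absurd (huw ▸ (hL e' he').1 ▸ mem_insert_self N e'.2) hu
    · exact σ.injective (hd _ _ (by rw [← hu', ← hw', huw]) (hu' ▸ hne))

theorem VDColorable.addLeaf {x v : V} (hx : IsLeafAt G x v) (hv : deg (G ⊖ x) v ≠ 0) {N : ℕ}
    (h : VDColorable (G ⊖ x) N) : VDColorable G (N + 1) := by
  classical
  obtain ⟨c, S, hc, hr, hd⟩ := h
  have hN : N ∉ S v := fun hu => by simpa using hr v hu
  have hSv : S v ≠ ∅ := fun e => hv (by rw [← hc.card_eq, e, card_empty])
  refine .of_fresh_color (hc.addLeaf hx hN) hr hd 1 [(v, S v), (x, ∅)] ?_ ?_ (by simpa using hSv)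
  · simp [Function.update_apply, hx.adj.ne, hr v]
  · simp +contextual

end Coloring

/-! ### Extending a coloring by one color -/

section Extension

open Finset

variable {G : SimpleGraph V}

theorem exists_lt_ne_ne {N : ℕ} (hN : 3 ≤ N) (i j : ℕ) : ∃ f < N, f ≠ i ∧ f ≠ j := by
  obtain ⟨f, hf, hfij⟩ := exists_mem_notMem_of_card_lt_card (s := {i, j}) (t := range N)
    (by grw [card_le_two, card_range]; omega)
  exact ⟨f, by simpa using hf, by simpa using hfij⟩

theorem exists_lt_ne_singleton {N : ℕ} (hN : 3 ≤ N) (j : ℕ) (A : Finset ℕ) :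
    ∃ f < N, f ≠ j ∧ A ≠ {f} := by
  by_cases hA : ∃ i, A = {i}
  · obtain ⟨i, rfl⟩ := hA
    obtain ⟨f, hf, hfi, hfj⟩ := exists_lt_ne_ne hN i j
    exact ⟨f, hf, hfj, fun e => hfi (singleton_injective e).symm⟩
  · obtain ⟨f, hf, hfj, -⟩ := exists_lt_ne_ne hN j j
    exact ⟨f, hf, hfj, fun e => hA ⟨f, e⟩⟩

theorem IsMid.deletePendantPath {w s s' g y z : V} (hs : IsPendantPath G w s s')
    (hy : IsMid G g y z) (hys : y ≠ s) (hyw : y ≠ w) : IsMid (G ⊖ s' ⊖ s) g y z :=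
  IsMid.deleteLeaf hs.mid.isLeafAt_delete (IsMid.deleteLeaf hs.leaf hy hys) hyw

theorem IsLeafAt.deletePendantPath {w s s' y z : V} (hs : IsPendantPath G w s s')
    (hy : IsLeafAt G y z) (hys : y ≠ s') (hyw : y ≠ w) : IsLeafAt (G ⊖ s' ⊖ s) y z := by
  have hy_ne : y ≠ s := ne_of_apply_ne (deg G) (by rw [hy.deg_eq, hs.mid.deg_eq]; omega)
  exact hs.mid.isLeafAt_delete.deleteLeaf (hs.leaf.deleteLeaf hy hys hy_ne) hy_ne hyw

theorem IsEdgeColoring.addPendantPath [DecidableEq V] {c : Sym2 V → ℕ} {S : V → Finset ℕ}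
    {w s s' : V} (hs : IsPendantPath G w s s') (h : IsEdgeColoring (G ⊖ s' ⊖ s) c S) {i j : ℕ}
    (hi : i ∉ S w) (hij : i ≠ j) :
    ∃ c', IsEdgeColoring G c'
      (Function.update (Function.update (Function.update S w (insert i (S w))) s {j, i}) s'
        {j}) := by
  have h' := (h.addLeaf hs.mid.isLeafAt_delete hi).addLeaf hs.leaf (i := j) (by simp [hij.symm])
  simp only [Function.update_self, Function.update_idem] at h'
  exact ⟨_, h'⟩

theorem VDColorable.addPendantPath_of_pendantPath {w s s' g y y' : V}
    (hs : IsPendantPath G w s s') (hw : 3 ≤ deg G w) (hy : IsPendantPath G g y y') (hys : y ≠ s)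
    {N : ℕ} (h : VDColorable (G ⊖ s' ⊖ s) N) : VDColorable G (N + 1) := by
  classical
  obtain ⟨c, S, hc, hr, hd⟩ := h
  have hN : ∀ u, N ∉ S u := fun u hu => by simpa using hr u hu
  have deg_s := hs.mid.deg_eq
  have deg_s' := hs.leaf.deg_eq
  have deg_y := hy.mid.deg_eq
  have deg_y' := hy.leaf.deg_eq
  have hys' : y' ≠ s' := by rintro rfl; exact hys (hs.leaf.eq y hy.leaf.adj.symm)
  have hy_mid := IsMid.deletePendantPath hs hy.mid hys (by grind)
  have hy_leaf := IsLeafAt.deletePendantPath hs hy.leaf hys' (by grind)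
  have card_w : 2 ≤ (S w).card := by rw [hc.card_eq, deg_deletePendantPath hs]; grind
  have hSy := hc.eq_of_isMid hy_mid
  have hSy' := hc.eq_of_isLeafAt hy_leaf
  have hij := hc.ne_of_isMid hy_mid
  generalize hi : c s(g, y) = i at hSy hij
  generalize hj : c s(y, y') = j at hSy hSy' hij
  have hlt : i < N ∧ j < N := by simpa [hSy, insert_subset_iff] using hr y
  have hrw := hr w
  obtain ⟨c', hc'⟩ := (hc.recolor hy_mid.right hj (hN y) (hN y')).addPendantPath hs (i := N)
    (j := j) (by simp only [Function.update_apply]; grind) (by grind)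
  refine .of_fresh_color hc' hr hd (Equiv.swap s' y')
    [(y', ∅), (y, {i}), (w, S w), (s, {j})] ?_ ?_ ?_
  · simp only [List.forall_mem_cons, Function.update_apply]
    and_intros <;> grind
  · simp only [List.forall_mem_cons, Function.update_apply, Equiv.swap_apply_def]
    grind
  · simp only [List.pairwise_cons, List.forall_mem_cons]
    grind [card_singleton, card_empty]

theorem VDColorable.addPendantPath_of_isMid {v s s' r z : V} (hs : IsPendantPath G v s s')
    (hv : 3 ≤ deg G v) (hr : IsMid G v r z) (hrs : r ≠ s) {N : ℕ}
    (h : VDColorable (G ⊖ s' ⊖ s) N) : VDColorable G (N + 1) := by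
  classical
  obtain ⟨c, S, hc, hR, hd⟩ := h
  have hN : ∀ u, N ∉ S u := fun u hu => by simpa using hR u hu
  have deg_s := hs.mid.deg_eq
  have deg_s' := hs.leaf.deg_eq
  have deg_r := hr.deg_eq
  have hr_mid := IsMid.deletePendantPath hs hr hrs (by grind)
  have card_v : 2 ≤ (S v).card := by rw [hc.card_eq, deg_deletePendantPath hs]; grind
  have hSr := hc.eq_of_isMid hr_mid
  have hb_mem := hc.color_mem_left hr_mid.left.symm
  have hbe := hc.ne_of_isMid hr_mid
  generalize hb : c s(v, r) = b at hSr hb_mem hbe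
  generalize c s(r, z) = e at hSr hbe
  have hlt : b < N ∧ e < N := by simpa [hSr, insert_subset_iff] using hR r
  have hRv := hR v
  obtain ⟨c', hc'⟩ := (hc.recolor hr_mid.left.symm hb (hN v) (hN r)).addPendantPath hs (i := b)
    (j := N) (by simp only [Function.update_apply]; grind) (by grind)
  refine .of_fresh_color hc' hR hd 1 [(s', ∅), (s, {b}), (v, S v), (r, {e})] ?_ ?_ ?_
  · simp only [List.forall_mem_cons, Function.update_apply]
    and_intros <;> grind
  · simp only [List.forall_mem_cons, Function.update_apply, Equiv.Perm.one_apply]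
    grind
  · simp only [List.pairwise_cons, List.forall_mem_cons]
    grind [card_singleton, card_empty]

theorem VDColorable.addLeaf_subdivide [Finite V] {x v a s b : V} (hx : IsLeafAt G x v)
    (hs : IsMid G a s b) (hab : ¬ G.Adj a b) (hv : 3 ≤ deg G v) (ha : 2 ≤ deg G a)
    (hav : deg G a ≠ deg G v) {N : ℕ} (h : VDColorable (suppressMid (G ⊖ x) a s b) N) :
    VDColorable G (N + 1) := by
  classical
  obtain ⟨c, S, hc, hR, hd⟩ := h
  have hN : ∀ u, N ∉ S u := fun u hu => by simpa using hR u hu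
  have hsa := hs.left.ne
  have deg_s := hs.deg_eq
  have deg_x := hx.deg_eq
  have hs_mid := IsMid.deleteLeaf hx hs (by grind)
  have hab' : ¬ (G ⊖ x).Adj a b := fun h => hab (deleteIncidenceSet_adj.1 h).1
  have card_v : (S v).card = deg G v - 1 := by
    rw [hc.card_eq, deg_suppressMid hs_mid hab', deg_deleteLeaf hx]
    grind
  have card_a : (S a).card = deg G a := by
    rw [hc.card_eq, deg_suppressMid_left hs_mid hab', deg_deleteLeaf hx]
    grind
  have hadj : (suppressMid (G ⊖ x) a s b).Adj a b := suppressMid_adj.2 (by simp [hs.ne])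
  have he_mem := hc.color_mem_left hadj
  generalize he : c s(a, b) = e at he_mem
  have hRv := hR v
  have hRa := hR a
  have card_erase := card_erase_of_mem he_mem
  have hc' := (hc.subdivide hs_mid hab' he (hN a)).addLeaf hx (i := N)
    (by simp only [Function.update_apply]; grind)
  refine .of_fresh_color hc' hR hd 1 [(x, ∅), (s, {e}), (v, S v), (a, (S a).erase e)] ?_ ?_ ?_
  · simp only [List.forall_mem_cons, Function.update_apply]
    and_intros <;> grind
  · simp only [List.forall_mem_cons, Function.update_apply, Equiv.Perm.one_apply]
    grind
  · simp only [List.pairwise_cons, List.forall_mem_cons]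
    have : e ∉ (S a).erase e := notMem_erase e _
    grind [card_singleton, card_empty]

theorem IsPendantPath.deleteLeaf {x v w s s' : V} (hx : IsLeafAt G x v)
    (hs : IsPendantPath G w s s') (hsv : s ≠ v) (hs'x : s' ≠ x) (hs'v : s' ≠ v) :
    IsPendantPath (G ⊖ x) w s s' :=
  ⟨IsMid.deleteLeaf hx hs.mid hsv, IsLeafAt.deleteLeaf hx hs.leaf hs'x hs'v⟩

theorem VDColorable.addLeaf_addPendantPath [Finite V] {v x s s' p : V} (hx : IsLeafAt G x v)
    (hs : IsPendantPath G v s s') (hp : G.Adj v p) (hv : deg G v = 3) (hps : p ≠ s)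
    (hp2 : 2 ≤ deg G p) {N : ℕ} (hN3 : 3 ≤ N) (h : VDColorable (G ⊖ x ⊖ s' ⊖ s) N) :
    VDColorable G (N + 1) := by
  classical
  obtain ⟨c, S, hc, hR, hd⟩ := h
  have hN : ∀ u, N ∉ S u := fun u hu => by simpa using hR u hu
  have hvp := hp.ne
  have deg_s := hs.mid.deg_eq
  have deg_s' := hs.leaf.deg_eq
  have deg_x := hx.deg_eq
  have hs'x : s' ≠ x := by rintro rfl; have := hx.eq s hs.leaf.adj.symm; grind
  have hs_path := hs.deleteLeaf hx (by grind) hs'x (by grind)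
  have hdeg := deg_deletePendantPath hs_path
  simp only [deg_deleteLeaf hx] at hdeg
  have hadj : (G ⊖ x ⊖ s' ⊖ s).Adj p v := by
    simp only [deleteIncidenceSet_adj]
    grind [hp.symm]
  have hv_leaf : IsLeafAt (G ⊖ x ⊖ s' ⊖ s) v p := isLeafAt_of_deg_eq_one hadj (by grind)
  have card_p : 2 ≤ (S p).card := by rw [hc.card_eq]; grind
  have hSv := hc.eq_of_isLeafAt hv_leaf
  have hj_mem := hc.color_mem_left hadj
  generalize hj : c s(p, v) = j at hSv hj_mem
  have hRp := hR p
  have card_erase := card_erase_of_mem hj_mem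
  obtain ⟨f, hf, hfj, hAf⟩ := exists_lt_ne_singleton hN3 j ((S p).erase j)
  obtain ⟨c', hc'⟩ := (hc.recolor hadj hj (hN p) (hN v)).addPendantPath hs_path (i := f)
    (j := N) (by simp only [Function.update_apply]; grind) (by grind)
  have hc'' := hc'.addLeaf hx (i := j) (by simp only [Function.update_apply]; grind)
  refine .of_fresh_color hc'' hR hd (Equiv.swap x v)
    [(s', ∅), (s, {f}), (v, {j, f}), (p, (S p).erase j)] ?_ ?_ ?_
  · simp only [List.forall_mem_cons, Function.update_apply]
    and_intros <;> grind
  · simp only [List.forall_mem_cons, Function.update_apply, Equiv.swap_apply_def]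
    grind
  · simp only [List.pairwise_cons, List.forall_mem_cons]
    have : j ∉ (S p).erase j := notMem_erase j _
    grind [card_singleton, card_empty, card_pair]

end Extension

section Fork

open Finset

variable {G : SimpleGraph V} {p v x₁ x₂ : V}

/-- `v` has exactly three neighbors: the leaves `x₁`, `x₂`, and `p`. -/
structure IsFork (G : SimpleGraph V) (p v x₁ x₂ : V) : Prop where
  left : IsLeafAt G x₁ v
  right : IsLeafAt G x₂ v
  ne : x₁ ≠ x₂
  adj : G.Adj p v
  ne_left : p ≠ x₁
  ne_right : p ≠ x₂
  eq : ∀ w, G.Adj v w → w = p ∨ w = x₁ ∨ w = x₂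

namespace IsFork

theorem of_deg_eq_three [Finite V] (h₁ : IsLeafAt G x₁ v) (h₂ : IsLeafAt G x₂ v) (hne : x₁ ≠ x₂)
    (hp : G.Adj p v) (hp₁ : p ≠ x₁) (hp₂ : p ≠ x₂) (hv : deg G v = 3) : IsFork G p v x₁ x₂ :=
  ⟨h₁, h₂, hne, hp, hp₁, hp₂, eq_of_deg_eq_three hp.symm h₁.adj h₂.adj hp₁ hp₂ hne hv⟩

theorem deg_eq (h : IsFork G p v x₁ x₂) : deg G v = 3 := by
  have : G.neighborSet v = {p, x₁, x₂} := by
    ext w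
    have := h.eq w
    have := h.adj.symm
    have := h.left.adj
    have := h.right.adj
    simp only [mem_neighborSet, Set.mem_insert_iff, Set.mem_singleton_iff]
    grind
  rw [deg_eq_ncard, this, Set.ncard_eq_three]
  exact ⟨_, _, _, h.ne_left, h.ne_right, h.ne, rfl⟩

theorem right_delete (h : IsFork G p v x₁ x₂) : IsLeafAt (G ⊖ x₁) x₂ v :=
  h.left.deleteLeaf h.right h.ne.symm h.right.adj.ne'

theorem deg_delete [DecidableEq V] (h : IsFork G p v x₁ x₂) (u : V) :
    deg (G ⊖ x₁ ⊖ x₂) u =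
      if u = x₁ ∨ u = x₂ then 0 else if u = v then 1 else deg G u := by
  have := h.deg_eq
  have := h.left.adj.ne
  have := h.right.adj.ne
  rw [deg_deleteLeaf h.right_delete, deg_deleteLeaf h.left, deg_deleteLeaf h.left]
  grind

theorem isLeafAt_delete (h : IsFork G p v x₁ x₂) : IsLeafAt (G ⊖ x₁ ⊖ x₂) v p := by
  constructor
  · simp only [deleteIncidenceSet_adj]
    exact ⟨⟨h.adj, h.ne_left, h.left.adj.ne⟩, h.ne_right, h.right.adj.ne⟩
  · simp only [deleteIncidenceSet_adj]
    grind [h.eq]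

theorem deleteLeaf_leaf (h : IsFork G p v x₁ x₂) {y z : V} (hz : IsLeafAt G z y) (hyv : y ≠ v)
    (hzv : z ≠ v) : IsLeafAt (G ⊖ x₁ ⊖ x₂) z y := by
  have hz₁ : z ≠ x₁ := by rintro rfl; exact hyv (h.left.eq y hz.adj.symm)
  have hz₂ : z ≠ x₂ := by rintro rfl; exact hyv (h.right.eq y hz.adj.symm)
  exact h.right_delete.deleteLeaf (h.left.deleteLeaf hz hz₁ hzv) hz₂ hzv

theorem delete_mid (h : IsFork G p v x₁ x₂) {a s b : V} (hs : IsMid G a s b) (hsv : s ≠ v) :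
    IsMid (G ⊖ x₁ ⊖ x₂) a s b :=
  IsMid.deleteLeaf h.right_delete (IsMid.deleteLeaf h.left hs hsv) hsv

end IsFork

theorem VDColorable.addFork {q : V} (hv : IsFork G p v x₁ x₂) (hp : IsMid G v p q)
    (hq : 2 ≤ deg G q) {N : ℕ} (hN3 : 3 ≤ N) (h : VDColorable (G ⊖ x₁ ⊖ x₂ ⊖ v) N) :
    VDColorable G (N + 1) := by
  classical
  obtain ⟨c, S, hc, hr, hd⟩ := h
  have hN : ∀ u, N ∉ S u := fun u hu => by simpa using hr u hu
  have deg_x₁ := hv.left.deg_eq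
  have deg_x₂ := hv.right.deg_eq
  have deg_v := hv.deg_eq
  have deg_p := hp.deg_eq
  have hp_mid := hv.delete_mid hp hv.adj.ne
  have hp_leaf := hp_mid.symm.isLeafAt_delete
  have hpq := hp.right.ne
  have hvq := hp.ne
  have hx₁₂ := hv.ne
  have card_q : 2 ≤ (S q).card := by
    rw [hc.card_eq, deg_deleteLeaf hv.isLeafAt_delete, hv.deg_delete, hv.deg_delete]
    grind
  have hSp := hc.eq_of_isLeafAt hp_leaf
  have hj_mem := hc.color_mem_left hp_leaf.adj
  generalize hj : c s(q, p) = j at hSp hj_mem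
  have hrq := hr q
  obtain ⟨f, hf, hfj, hAf⟩ := exists_lt_ne_singleton hN3 j ((S q).erase j)
  have hc' := (hc.recolor hp_leaf.adj hj (hN q) (hN p)).addLeaf hv.isLeafAt_delete (i := f)
    (by simp only [Function.update_apply]; grind)
  have hc'' := (hc'.addLeaf hv.right_delete (i := N)
    (by simp only [Function.update_apply]; grind)).addLeaf hv.left (i := j)
    (by simp only [Function.update_apply]; grind)
  refine .of_fresh_color hc'' hr hd (Equiv.swap x₁ p)
    [(x₂, ∅), (v, {j, f}), (p, {f}), (q, (S q).erase j)] ?_ ?_ ?_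
  all_goals clear hc hc' hc''
  · simp only [List.forall_mem_cons, Function.update_apply]
    and_intros <;> grind
  · simp only [List.forall_mem_cons, Function.update_apply, Equiv.swap_apply_def]
    grind
  · simp only [List.pairwise_cons, List.forall_mem_cons]
    have := notMem_erase j (S q)
    grind [card_singleton, card_empty, card_pair]

end Fork

section Subdivision

open Finset

variable {G : SimpleGraph V}

theorem IsMid.suppressMid_next {a s₁ s₂ s₃ : V} (h₁ : IsMid G a s₁ s₂) (h₂ : IsMid G s₁ s₂ s₃)
    (hne : a ≠ s₃) : IsMid (suppressMid G a s₁ s₂) a s₂ s₃ := by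
  have hs₁s₂ := h₁.right.ne
  have hs₁s₃ := h₂.ne
  have hs₁a := h₁.ne
  refine ⟨suppressMid_adj.2 (by grind), suppressMid_adj.2 ?_, hne, fun z hz => ?_⟩
  · grind [h₂.right]
  · rw [suppressMid_adj] at hz
    grind [h₂.eq]

variable [Finite V] {v : V} {N : ℕ}

theorem VDColorable.addPendantPath_subdivide {s s' s₁ s₂ : V} (hs : IsPendantPath G v s s')
    (hm : IsMid G v s₁ s₂) (hne : s₁ ≠ s) (hab : ¬ G.Adj v s₂) (hv : 3 ≤ deg G v)
    (hvN : deg G v ≤ N) (h : VDColorable (suppressMid (G ⊖ s' ⊖ s) v s₁ s₂) N) :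
    VDColorable G (N + 1) := by
  classical
  obtain ⟨c, S, hc, hR, hd⟩ := h
  have hN : ∀ u, N ∉ S u := fun u hu => by simpa using hR u hu
  have deg_s := hs.mid.deg_eq
  have deg_s' := hs.leaf.deg_eq
  have deg_s₁ := hm.deg_eq
  have hm' := IsMid.deletePendantPath hs hm hne hm.left.ne
  have hab' : ¬ (G ⊖ s' ⊖ s).Adj v s₂ := by
    simp only [deleteIncidenceSet_adj]
    tauto
  have card_v : (S v).card = deg G v - 1 := by
    rw [hc.card_eq, deg_suppressMid hm' hab', deg_deletePendantPath hs]
    grind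
  have hadj : (suppressMid (G ⊖ s' ⊖ s) v s₁ s₂).Adj v s₂ := suppressMid_adj.2 (by simp [hm.ne])
  have hb_mem := hc.color_mem_left hadj
  generalize hb : c s(v, s₂) = b at hb_mem
  have card_erase := card_erase_of_mem hb_mem
  obtain ⟨g, hgN, hg⟩ := exists_mem_notMem_of_card_lt_card (s := S v) (t := range N)
    (by rw [card_range]; omega)
  have hRv := hR v
  rw [mem_range] at hgN
  obtain ⟨c', hc'⟩ := (hc.subdivide hm' hab' hb (hN v)).addPendantPath hs (i := g) (j := N)
    (by simp only [Function.update_apply]; grind) hgN.ne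
  refine .of_fresh_color hc' hR hd 1
    [(s', ∅), (s, {g}), (v, insert g ((S v).erase b)), (s₁, {b})] ?_ ?_ ?_
  · simp only [List.forall_mem_cons, Function.update_apply]
    and_intros <;> grind
  · simp only [List.forall_mem_cons, Function.update_apply, Equiv.Perm.one_apply]
    grind
  · have : (insert g ((S v).erase b)).card = (S v).card := by grind
    simp only [List.pairwise_cons, List.forall_mem_cons]
    grind [card_singleton, card_empty, singleton_inj]

theorem VDColorable.addLeaf_subdivide_subdivide {x s₁ s₂ s₃ : V} (hT : TreeLike G)
    (hx : IsLeafAt G x v) (h₁ : IsMid G v s₁ s₂) (h₂ : IsMid G s₁ s₂ s₃) (hv : 3 ≤ deg G v)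
    (hvN : deg G v ≤ N)
    (h : VDColorable (suppressMid (suppressMid (G ⊖ x) v s₁ s₂) v s₂ s₃) N) :
    VDColorable G (N + 1) := by
  classical
  obtain ⟨c, S, hc, hR, hd⟩ := h
  have hN : ∀ u, N ∉ S u := fun u hu => by simpa using hR u hu
  have deg_x := hx.deg_eq
  have deg_s₁ := h₁.deg_eq
  have deg_s₂ := h₂.deg_eq
  have hs₁s₂ := h₁.right.ne
  have hs₁s₃ := h₂.ne
  have hs₂s₃ := h₂.right.ne
  have hvs₃ : v ≠ s₃ := by rintro rfl; exact hT.not_adj h₁ h₂.right.symm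
  have hT' := hT.deleteLeaf hx (by omega)
  have h₁' := IsMid.deleteLeaf hx h₁ h₁.left.ne
  have h₂' := h₁'.suppressMid_next (IsMid.deleteLeaf hx h₂ h₁.ne.symm) hvs₃
  have hab₁ := hT'.not_adj h₁'
  have hab₂ := (hT'.suppress h₁').not_adj h₂'
  have card_v : (S v).card = deg G v - 1 := by
    rw [hc.card_eq, deg_suppressMid h₂' hab₂, deg_suppressMid h₁' hab₁, deg_deleteLeaf hx]
    grind
  have hb_mem := hc.color_mem_left (u := v) (w := s₃) (suppressMid_adj.2 (by simp [hvs₃]))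
  generalize hb : c s(v, s₃) = b at hb_mem
  have card_erase := card_erase_of_mem hb_mem
  obtain ⟨g, hgN, hg⟩ := exists_mem_notMem_of_card_lt_card (s := S v) (t := range N)
    (by rw [card_range]; omega)
  have hRv := hR v
  rw [mem_range] at hgN
  have hc' := (hc.subdivide h₂' hab₂ hb (hN v)).subdivide h₁' hab₁ (i := g) (e := N)
    (by simp [Function.update_apply]; grind)
    (by simp only [Function.update_apply]; grind)
  have hc'' := hc'.addLeaf hx (i := N) (by simp only [Function.update_apply]; grind)
  refine .of_fresh_color hc'' hR hd 1
    [(x, ∅), (s₁, {g}), (v, insert g ((S v).erase b)), (s₂, {b})] ?_ ?_ ?_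
  all_goals clear hc hc' hc''
  · simp only [List.forall_mem_cons, Function.update_apply]
    and_intros <;> grind
  · simp only [List.forall_mem_cons, Function.update_apply, Equiv.Perm.one_apply]
    grind
  · have : (insert g ((S v).erase b)).card = (S v).card := by grind
    simp only [List.pairwise_cons, List.forall_mem_cons]
    grind [card_singleton, card_empty, singleton_inj]

end Subdivision

section ForkSubdivision

open Finset

variable {G : SimpleGraph V}

theorem IsEdgeColoring.exists_erase_ne {c : Sym2 V → ℕ} {S : V → Finset ℕ}
    (hc : IsEdgeColoring G c S) {y y₁ y₂ : V} (h₁ : G.Adj y y₁) (h₂ : G.Adj y y₂) (hne : y₁ ≠ y₂)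
    (A : Finset ℕ) : ∃ z, (z = y₁ ∨ z = y₂) ∧ (S y).erase (c s(y, z)) ≠ A := by
  by_contra! hcon
  have h : c s(y, y₁) ∉ (S y).erase (c s(y, y₂)) :=
    (hcon y₁ (.inl rfl)).trans (hcon y₂ (.inr rfl)).symm ▸ notMem_erase _ _
  exact h (mem_erase.2 ⟨fun e => hne (hc.inj y y₁ y₂ h₁ h₂ e), hc.color_mem_left h₁⟩)

variable {p v x₁ x₂ : V} {N : ℕ}

theorem IsFork.not_adj_of_isPendantPath {w s s' : V} (hv : IsFork G p v x₁ x₂)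
    (hs : IsPendantPath G w s s') :
    ¬ G.Adj s' w ∧ s ≠ v ∧ s' ≠ v ∧ s' ≠ x₁ ∧ s' ≠ x₂ := by
  have deg_v := hv.deg_eq
  have deg_s := hs.mid.deg_eq
  have deg_s' := hs.leaf.deg_eq
  have hs_eq := hs.leaf.eq
  have hsw := hs.mid.left.ne
  grind [hv.left.adj.symm, hv.right.adj.symm]

theorem IsEdgeColoring.addFork_subdivide [DecidableEq V] {c : Sym2 V → ℕ} {S : V → Finset ℕ}
    {a s b : V} {e f i j : ℕ} (hc : IsEdgeColoring (suppressMid (G ⊖ x₁ ⊖ x₂) a s b) c S)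
    (hv : IsFork G p v x₁ x₂) (hs : IsMid G a s b) (hab : ¬ G.Adj a b) (hva : v ≠ a)
    (he : c s(a, b) = e) (hf : f ∉ S a) (hi : i ∉ S v) (hj : j ∉ S v) (hij : i ≠ j) :
    ∃ c', IsEdgeColoring G c' fun u => if u = x₁ then {i} else if u = x₂ then {j} else
      if u = v then insert i (insert j (S v)) else if u = s then {f, e} else
      if u = a then insert f ((S a).erase e) else S u := by
  have hvs : v ≠ s := by rintro rfl; have := hs.deg_eq; have := hv.deg_eq; omega
  have hv₂ := hv.right.adj.ne
  have hab' : ¬ (G ⊖ x₁ ⊖ x₂).Adj a b := by simp only [deleteIncidenceSet_adj]; tauto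
  obtain ⟨c', hc'⟩ : ∃ c', IsEdgeColoring G c' _ :=
    ⟨_, ((hc.subdivide (hv.delete_mid hs hvs.symm) hab' he hf).addLeaf hv.right_delete
    (i := j) (by simpa [hva, hvs])).addLeaf hv.left (i := i)
    (by simp [hva, hvs, hv₂, hi, hij])⟩
  refine ⟨c', ?_⟩
  convert hc' using 1
  funext u
  simp only [Function.update_apply]
  grind

variable [Finite V]

theorem IsFork.deg_suppressMid [DecidableEq V] {a s b : V} (hv : IsFork G p v x₁ x₂)
    (hs : IsMid G a s b) (hab : ¬ G.Adj a b) (u : V) :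
    deg (suppressMid (G ⊖ x₁ ⊖ x₂) a s b) u =
      if u = s ∨ u = x₁ ∨ u = x₂ then 0 else if u = v then 1 else deg G u := by
  have hsv : s ≠ v := by rintro rfl; have := hs.deg_eq; have := hv.deg_eq; omega
  have hab' : ¬ (G ⊖ x₁ ⊖ x₂).Adj a b := by simp only [deleteIncidenceSet_adj]; tauto
  rw [_root_.deg_suppressMid (hv.delete_mid hs hsv) hab', hv.deg_delete]
  grind

theorem IsFork.isLeafAt_suppressMid {a s b : V} (hv : IsFork G p v x₁ x₂)
    (hs : IsMid G a s b) (hab : ¬ G.Adj a b) (hps : p ≠ s) :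
    IsLeafAt (suppressMid (G ⊖ x₁ ⊖ x₂) a s b) v p := by
  classical
  have hsv : s ≠ v := by rintro rfl; have := hs.deg_eq; have := hv.deg_eq; omega
  refine isLeafAt_of_deg_eq_one ?_ ?_
  · exact suppressMid_adj.2 (.inl ⟨hv.isLeafAt_delete.adj, hps, hsv.symm⟩)
  · rw [hv.deg_suppressMid hs hab]
    grind [hv.left.adj.ne, hv.right.adj.ne]

theorem IsFork.isLeafAt_suppressMid_pendant {w s s' : V} (hv : IsFork G p v x₁ x₂)
    (hs : IsPendantPath G w s s') :
    IsLeafAt (suppressMid (G ⊖ x₁ ⊖ x₂) s' s w) s' w := by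
  classical
  obtain ⟨hab, -, -, hs'x₁, hs'x₂⟩ := hv.not_adj_of_isPendantPath hs
  refine isLeafAt_of_deg_eq_one (suppressMid_adj.2 (by grind [hs.mid.ne])) ?_
  rw [hv.deg_suppressMid hs.mid.symm hab]
  grind [hs.leaf.deg_eq, hs.leaf.adj.ne]

theorem VDColorable.addTwoLeaves_subdivide_pendant {w s s' : V} (hv : IsFork G p v x₁ x₂)
    (hp : 3 ≤ deg G p) (hs : IsPendantPath G w s s')
    (h : VDColorable (suppressMid (G ⊖ x₁ ⊖ x₂) s' s w) N) : VDColorable G (N + 1) := by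
  classical
  obtain ⟨c, S, hc, hR, hd⟩ := h
  have hN : ∀ u, N ∉ S u := fun u hu => by simpa using hR u hu
  have deg_x₁ := hv.left.deg_eq
  have deg_x₂ := hv.right.deg_eq
  have deg_v := hv.deg_eq
  have deg_s := hs.mid.deg_eq
  have deg_s' := hs.leaf.deg_eq
  have hne : x₁ ≠ x₂ ∧ p ≠ v := ⟨hv.ne, hv.adj.ne⟩
  obtain ⟨hab, hs'⟩ := hv.not_adj_of_isPendantPath hs
  have hdeg := hv.deg_suppressMid hs.mid.symm hab
  have hv_leaf := hv.isLeafAt_suppressMid hs.mid.symm hab (by grind)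
  have card_p : 3 ≤ (S p).card := by rw [hc.card_eq]; grind
  have hSv := hc.eq_of_isLeafAt hv_leaf
  have hSs' := hc.eq_of_isLeafAt (hv.isLeafAt_suppressMid_pendant hs)
  have hi_mem := hc.color_mem_left hv_leaf.adj
  generalize hi : c s(p, v) = i at hSv hi_mem
  generalize hj : c s(w, s') = j at hSs'
  have hij : i ≠ j := by have := hd v s'; grind [singleton_ne_empty]
  have hlt : i < N ∧ j < N := ⟨by simpa [hSv] using hR v, by simpa [hSs'] using hR s'⟩
  have hRp := hR p
  have card_erase := card_erase_of_mem hi_mem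
  obtain ⟨c', hc'⟩ := (hc.recolor hv_leaf.adj hi (hN p) (hN v)).addFork_subdivide hv hs.mid.symm hab
    hs'.2.1.symm (f := N) (i := i) (j := j)
    (by rw [Function.update_of_ne (by simp; grind), Sym2.eq_swap, hj])
    (by simp only [Function.update_apply]; grind) (by simp; grind) (by simp; grind) hij
  refine .of_fresh_color hc' hR hd (Equiv.swap x₁ v * Equiv.swap x₂ s')
    [(s', ∅), (s, {j}), (v, {i, j}), (p, (S p).erase i)] ?_ ?_ ?_
  all_goals clear hc hc'
  · simp only [List.forall_mem_cons, Function.update_apply]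
    and_intros <;> grind
  · simp only [List.forall_mem_cons, Function.update_apply, Equiv.Perm.mul_apply,
      Equiv.swap_apply_def]
    grind
  · have := notMem_erase i (S p)
    simp only [List.pairwise_cons, List.forall_mem_cons]
    grind [card_singleton, card_empty, card_pair]

theorem IsFork.leaf_suppressMid {a s b y z : V} (hv : IsFork G p v x₁ x₂) (hs : IsMid G a s b)
    (hab : ¬ G.Adj a b) (hz : IsLeafAt G z y) (hyv : y ≠ v) (hys : y ≠ s) :
    IsLeafAt (suppressMid (G ⊖ x₁ ⊖ x₂) a s b) z y := by
  classical
  have deg_z := hz.deg_eq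
  have hz_leaf := hv.deleteLeaf_leaf hz hyv (by grind [hv.deg_eq])
  refine isLeafAt_of_deg_eq_one (suppressMid_adj.2 (.inl ⟨hz_leaf.adj, hys, ?_⟩)) ?_
  · grind [hs.deg_eq]
  · have hz₁ : z ≠ x₁ := by rintro rfl; exact hyv (hv.left.eq y hz.adj.symm)
    have hz₂ : z ≠ x₂ := by rintro rfl; exact hyv (hv.right.eq y hz.adj.symm)
    rw [hv.deg_suppressMid hs hab]
    grind [hv.deg_eq, hs.deg_eq]

theorem IsEdgeColoring.addFork_subdivide_recolor [DecidableEq V] {c : Sym2 V → ℕ}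
    {S : V → Finset ℕ} {a s b y z : V} {e i j : ℕ}
    (hc : IsEdgeColoring (suppressMid (G ⊖ x₁ ⊖ x₂) a s b) c S) (hN : ∀ u, N ∉ S u)
    (hv : IsFork G p v x₁ x₂) (hp : 3 ≤ deg G p) (hs : IsMid G a s b) (ha : deg G a = 2)
    (hab : ¬ G.Adj a b) (hz : IsLeafAt G z y) (hy : 3 ≤ deg G y) (hyp : y ≠ p) (hyv : y ≠ v)
    (hi : c s(p, v) = i) (hj : c s(y, z) = j) (he : c s(a, b) = e) (hij : i ≠ j) :
    ∃ c', IsEdgeColoring G c' fun u => if u = x₁ then {i} else if u = x₂ then {j} else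
      if u = v then {i, j, N} else if u = s then {N, e} else
      if u = a then insert N ((S a).erase e) else if u = p then insert N ((S p).erase i) else
      if u = y then insert N ((S y).erase j) else if u = z then {N} else S u := by
  have deg_v := hv.deg_eq
  have deg_s := hs.deg_eq
  have deg_z := hz.deg_eq
  have hv_leaf := hv.isLeafAt_suppressMid hs hab (by grind)
  have hz_leaf := hv.leaf_suppressMid hs hab hz hyv (by grind)
  have hSv := hc.eq_of_isLeafAt hv_leaf
  have hSz := hc.eq_of_isLeafAt hz_leaf
  have hsymm : s(p, v) ≠ s(y, z) ∧ s(p, v) ≠ s(a, b) ∧ s(y, z) ≠ s(a, b) := by simp; grind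
  obtain ⟨c', hc'⟩ := ((hc.recolor hv_leaf.adj hi (hN p) (hN v)).recolor hz_leaf.adj
    (i := N) (e := j) (by rw [Function.update_of_ne hsymm.1.symm, hj])
    (by simp only [Function.update_apply]; grind)
    (by simp only [Function.update_apply]; grind)).addFork_subdivide hv hs hab
    (e := e) (f := N) (i := i) (j := j) (by grind)
    (by rw [Function.update_of_ne hsymm.2.2.symm, Function.update_of_ne hsymm.2.1.symm, he])
    (by simp only [Function.update_apply]; grind) (by simp only [Function.update_apply]; grind)
    (by simp only [Function.update_apply]; grind) hij
  refine ⟨c', ?_⟩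
  convert hc' using 1
  funext u
  clear hc hc'
  simp only [Function.update_apply]
  grind

theorem VDColorable.addTwoLeaves_subdivide_inner {a s b y y₁ y₂ : V} (hv : IsFork G p v x₁ x₂)
    (hp : 3 ≤ deg G p) (hs : IsMid G a s b) (ha : deg G a = 2) (hab : ¬ G.Adj a b)
    (hy₁ : IsLeafAt G y₁ y) (hy₂ : IsLeafAt G y₂ y) (hy_ne : y₁ ≠ y₂) (hy : 3 ≤ deg G y)
    (hyp : y ≠ p) (hyv : y ≠ v) (h : VDColorable (suppressMid (G ⊖ x₁ ⊖ x₂) a s b) N) :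
    VDColorable G (N + 1) := by
  classical
  obtain ⟨c, S, hc, hR, hd⟩ := h
  have hN : ∀ u, N ∉ S u := fun u hu => by simpa using hR u hu
  have deg_x₁ := hv.left.deg_eq
  have deg_x₂ := hv.right.deg_eq
  have deg_v := hv.deg_eq
  have deg_s := hs.deg_eq
  have hne : x₁ ≠ x₂ ∧ p ≠ v ∧ s ≠ a := ⟨hv.ne, hv.adj.ne, hs.left.ne⟩
  have hdeg := hv.deg_suppressMid hs hab
  have hv_leaf := hv.isLeafAt_suppressMid hs hab (by grind)
  have leaf_y {z} (hz : IsLeafAt G z y) := hv.leaf_suppressMid hs hab hz hyv (by grind)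
  obtain ⟨z, hz, hSy_ne⟩ := hc.exists_erase_ne (leaf_y hy₁).adj (leaf_y hy₂).adj hy_ne
    ((S p).erase (c s(p, v)))
  replace hz : IsLeafAt G z y := by obtain rfl | rfl := hz <;> assumption
  have hz_leaf := leaf_y hz
  have deg_z := hz.deg_eq
  have hz' : z ≠ x₁ ∧ z ≠ x₂ := by grind [hz.adj.symm, hv.left.eq, hv.right.eq]
  have card_p : 3 ≤ (S p).card := by rw [hc.card_eq, hdeg]; grind
  have card_y : 3 ≤ (S y).card := by rw [hc.card_eq, hdeg]; grind
  have card_a : (S a).card = 2 := by rw [hc.card_eq, hdeg]; grind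
  have hSv := hc.eq_of_isLeafAt hv_leaf
  have hSz := hc.eq_of_isLeafAt hz_leaf
  have hi_mem := hc.color_mem_left hv_leaf.adj
  have hj_mem := hc.color_mem_left hz_leaf.adj
  have he_mem := hc.color_mem_left (suppressMid_adj.2 (.inr ⟨.inl ⟨rfl, rfl⟩, hs.ne⟩))
  generalize hi : c s(p, v) = i at hSv hi_mem hSy_ne
  generalize hj : c s(y, z) = j at hSz hj_mem hSy_ne
  generalize he : c s(a, b) = e at he_mem
  have hij : i ≠ j := by have := hd v z; grind [singleton_ne_empty]
  obtain ⟨c', hc'⟩ := hc.addFork_subdivide_recolor hN hv hp hs ha hab hz hy hyp hyv hi hj he hij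
  refine .of_fresh_color hc' hR hd (Equiv.swap x₁ v * Equiv.swap x₂ z) [(z, ∅), (s, {e}),
    (a, (S a).erase e), (v, {i, j}), (p, (S p).erase i), (y, (S y).erase j)] ?_ ?_ ?_
  all_goals clear hc hc' hdeg leaf_y hz_leaf hv_leaf
  · have hlt : {i, j, e} ⊆ range N := by grind
    simp only [List.forall_mem_cons]
    and_intros <;> grind
  · simp only [List.forall_mem_cons, Equiv.Perm.mul_apply, Equiv.swap_apply_def]
    grind
  · have : i ∉ (S p).erase i ∧ j ∉ (S y).erase j ∧ e ∉ (S a).erase e := by simp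
    have := card_erase_of_mem hi_mem
    have := card_erase_of_mem hj_mem
    have := card_erase_of_mem he_mem
    simp only [List.pairwise_cons, List.forall_mem_cons]
    and_intros <;> grind [card_singleton, card_empty, card_pair]

end ForkSubdivision

section FreeColor

open Finset

variable {G : SimpleGraph V} {c : Sym2 V → ℕ} {S : V → Finset ℕ} {N : ℕ}

theorem exists_forall_not_of_card_lt {C : Finset ℕ} {K : Finset V} (P : ℕ → V → Prop)
    (hlt : K.card < C.card) (hK : ∀ g ∈ C, ∀ u, P g u → u ∈ K)
    (hinj : ∀ g ∈ C, ∀ g' ∈ C, ∀ u, P g u → P g' u → g = g') : ∃ g ∈ C, ∀ u, ¬ P g u := by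
  by_contra! h
  obtain ⟨g₀, hg₀⟩ := card_pos.1 (by omega : 0 < C.card)
  obtain ⟨u₀, -⟩ := h g₀ hg₀
  have : Nonempty V := ⟨u₀⟩
  choose! f hf using h
  exact absurd (card_le_card_of_injOn f (fun g hg => hK g hg _ (hf g hg))
    fun g hg g' hg' h => hinj g hg g' hg' _ (hf g hg) (h ▸ hf g' hg')) (by omega)

theorem exists_injOn_of_card_le {C : Finset ℕ} {K : Finset V} (P : ℕ → V → Prop)
    (hle : K.card ≤ C.card) (hK : ∀ g ∈ C, ∀ u, P g u → u ∈ K)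
    (hinj : ∀ g ∈ C, ∀ g' ∈ C, ∀ u, P g u → P g' u → g = g') (h : ∀ g ∈ C, ∃ u, P g u) :
    ∃ φ : V → ℕ, Set.InjOn φ K ∧ ∀ u ∈ K, φ u ∈ C ∧ P (φ u) u := by
  rcases isEmpty_or_nonempty V with hV | hV
  · exact ⟨fun _ => 0, fun u => isEmptyElim u, fun u => isEmptyElim u⟩
  choose! f hf using h
  have hsurj : Set.SurjOn f C K := surjOn_of_injOn_of_card_le f (fun g hg => hK g hg _ (hf g hg))
    (fun g hg g' hg' h => hinj g hg g' hg' _ (hf g hg) (h ▸ hf g' hg')) hle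
  have hsurj' : ∀ u ∈ K, ∃ g ∈ C, f g = u := hsurj
  choose! φ hφC hφ using hsurj'
  exact ⟨φ, fun u hu w hw h => by rw [← hφ u hu, ← hφ w hw, h],
    fun u hu => ⟨hφC u hu, by simpa only [hφ u hu] using hf _ (hφC u hu)⟩⟩

theorem mem_pair_of_eq_pair {A : Finset ℕ} {i j : ℕ} (h : A = {i, j}) :
    i ∈ A ∧ j ∈ A ∧ ∀ k ∈ A, k = i ∨ k = j := by
  subst h; simp

theorem IsEdgeColoring.exists_forall_ne_pair [Finite V] (hc : IsEdgeColoring G c S)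
    (hR : ∀ u, S u ⊆ range N) {v s u : V} (hs : IsMid G v s u) (hu : deg G u = 2)
    (hn : numDeg G 2 < N) : ∃ g < N, g ≠ c s(v, s) ∧ ∀ w, S w ≠ {c s(v, s), g} := by
  classical
  cases nonempty_fintype V
  have hSs := hc.eq_of_isMid hs
  have hsb := hc.ne_of_isMid hs
  have heu := hc.color_mem_right hs.right
  generalize c s(v, s) = b at hSs hsb ⊢
  generalize c s(s, u) = e at hSs hsb heu
  have hlt : b < N ∧ e < N := by simpa [hSs, insert_subset_iff] using hR s
  have hmid {w} (hw : (S w).card = 2) : w ∈ univ.filter fun w => deg G w = 2 := by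
    simpa [← hc.card_eq]
  have hu2 := hmid (hc.card_eq u ▸ hu)
  have hs2 := hmid (hc.card_eq s ▸ hs.deg_eq)
  have hcard : (((univ.filter fun w => deg G w = 2).erase s).erase u).card <
      (((range N).erase b).erase e).card := by
    rw [card_erase_of_mem (mem_erase.2 ⟨hs.right.ne', hu2⟩), card_erase_of_mem hs2,
      card_erase_of_mem (by simp [hsb.symm, hlt]), card_erase_of_mem (by simp [hlt]), card_range,
      ← numDeg_eq_card_filter]
    have : 1 < numDeg G 2 := by
      rw [numDeg_eq_card_filter]
      exact one_lt_card.2 ⟨u, hu2, s, hs2, hs.right.ne'⟩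
    omega
  have hK (g) (hg : g ∈ ((range N).erase b).erase e) (w) (hw : S w = {b, g}) :
      w ∈ ((univ.filter fun w => deg G w = 2).erase s).erase u := by
    have := mem_pair_of_eq_pair hw
    have := hmid (w := w) (by rw [hw, card_pair (by grind)])
    grind
  obtain ⟨g, hg, hgS⟩ := exists_forall_not_of_card_lt (fun g w => S w = {b, g}) hcard hK
    fun g _ g' _ w hw hw' => by
      have := mem_pair_of_eq_pair hw
      have := mem_pair_of_eq_pair hw'
      grind
  simp only [mem_erase, mem_range] at hg
  exact ⟨g, hg.2.2, hg.2.1, hgS⟩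

theorem Distinguishes.exists_forall_eq_of_eq_pair (hd : Distinguishes S) {v : V} {b : ℕ}
    (hv : (S v).card = 2) (hR : S v ⊆ range N) (hb : b ∈ S v) :
    ∃ g < N, g ≠ b ∧ ∀ w, S w = {b, g} → w = v := by
  obtain ⟨g, hg⟩ := card_eq_one.1 ((card_erase_of_mem hb).trans (by rw [hv]))
  have hgv := hg ▸ mem_singleton_self g
  refine ⟨g, by simpa using hR (mem_of_mem_erase hgv), ne_of_mem_erase hgv, fun w hw => ?_⟩
  exact hd _ _ (by rw [hw, ← insert_erase hb, hg]) (by simp [hw])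

theorem IsEdgeColoring.exists_forall_eq_of_eq_pair [Finite V] (hc : IsEdgeColoring G c S)
    (hR : ∀ u, S u ⊆ range N) (hd : Distinguishes S) {v s u : V} (hs : IsMid G v s u)
    (hcase : deg G v = 2 ∨ deg G u = 2 ∧ numDeg G 2 < N) :
    ∃ g < N, g ≠ c s(v, s) ∧ ∀ w, S w = {c s(v, s), g} → w = v := by
  rcases hcase with hv | ⟨hu, hn⟩
  · exact hd.exists_forall_eq_of_eq_pair (by rw [hc.card_eq, hv]) (hR v)
      (hc.color_mem_left hs.left.symm)
  · obtain ⟨g, hg, hgb, hgS⟩ := hc.exists_forall_ne_pair hR hs hu hn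
    exact ⟨g, hg, hgb, fun w hw => absurd hw (hgS w)⟩

end FreeColor

section ThreePath

open Finset

variable {G : SimpleGraph V} {v r₁ r₂ r' : V}

theorem IsMid.isLeafAt_deletePendantPath (hr₁ : IsMid G v r₁ r₂) (hr : IsPendantPath G r₁ r₂ r') :
    IsLeafAt (G ⊖ r' ⊖ r₂) r₁ v :=
  (IsMid.deleteLeaf hr.leaf hr₁ hr₁.right.ne).isLeafAt_delete

theorem IsMid.ne_of_isPendantPath (hr₁ : IsMid G v r₁ r₂) (hr : IsPendantPath G r₁ r₂ r') :
    v ≠ r₁ ∧ v ≠ r₂ ∧ v ≠ r' ∧ r₁ ≠ r₂ ∧ r₁ ≠ r' ∧ r₂ ≠ r' := by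
  have hv : v ≠ r' := by rintro rfl; exact hr₁.right.ne (hr.leaf.eq r₁ hr₁.left.symm)
  grind [hr₁.left.ne, hr₁.right.ne, hr₁.ne, hr.mid.ne, hr.mid.right.ne]

theorem deg_deletePendantThreePath [DecidableEq V] (hr₁ : IsMid G v r₁ r₂)
    (hr : IsPendantPath G r₁ r₂ r') (u : V) : deg (G ⊖ r' ⊖ r₂ ⊖ r₁) u =
      if u = r₁ ∨ u = r₂ ∨ u = r' then 0 else if u = v then deg G v - 1 else deg G u := by
  have := hr₁.ne_of_isPendantPath hr
  rw [deg_deleteLeaf (hr₁.isLeafAt_deletePendantPath hr), deg_deletePendantPath hr,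
    deg_deletePendantPath hr]
  grind

theorem IsMid.deletePendantThreePath {s u : V} (hr₁ : IsMid G v r₁ r₂)
    (hr : IsPendantPath G r₁ r₂ r') (hs : IsMid G v s u) (hne : s ≠ r₁) :
    IsMid (G ⊖ r' ⊖ r₂ ⊖ r₁) v s u := by
  have hv := hr₁.ne_of_isPendantPath hr
  have hsr₂ : s ≠ r₂ := by rintro rfl; exact (hr.mid.eq v hs.left).elim hv.1 hv.2.2.1
  exact IsMid.deleteLeaf (hr₁.isLeafAt_deletePendantPath hr)
    (IsMid.deletePendantPath hr hs hsr₂ hne) hs.left.ne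

theorem IsEdgeColoring.addPendantThreePath [DecidableEq V] {c : Sym2 V → ℕ} {S : V → Finset ℕ}
    {b g N : ℕ} (hc : IsEdgeColoring (G ⊖ r' ⊖ r₂ ⊖ r₁) c S) (hr₁ : IsMid G v r₁ r₂)
    (hr : IsPendantPath G r₁ r₂ r') (hb : b ∉ S v) (hbg : b ≠ g) (hgN : g ≠ N) :
    ∃ c', IsEdgeColoring G c' fun u => if u = r' then {N} else if u = r₂ then {g, N} else
      if u = r₁ then {b, g} else if u = v then insert b (S v) else S u := by
  obtain ⟨c', hc'⟩ := (hc.addLeaf (hr₁.isLeafAt_deletePendantPath hr) hb).addPendantPath hr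
    (i := g) (j := N) (by simpa using hbg.symm) hgN
  refine ⟨c', ?_⟩
  convert hc' using 1
  funext u
  simp only [Function.update_apply]
  grind

theorem VDColorable.addPendantThreePath [Finite V] {s u : V} (hr₁ : IsMid G v r₁ r₂)
    (hr : IsPendantPath G r₁ r₂ r') (hs : IsMid G v s u) (hne : s ≠ r₁) (hv : 3 ≤ deg G v) {N : ℕ}
    (hcase : deg G v = 3 ∨ deg G u = 2 ∧ numDeg (G ⊖ r' ⊖ r₂ ⊖ r₁) 2 < N)
    (h : VDColorable (G ⊖ r' ⊖ r₂ ⊖ r₁) N) : VDColorable G (N + 1) := by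
  classical
  obtain ⟨c, S, hc, hR, hd⟩ := h
  have hN : ∀ u, N ∉ S u := fun u hu => by simpa using hR u hu
  have hdeg := deg_deletePendantThreePath hr₁ hr
  have hr_ne := hr₁.ne_of_isPendantPath hr
  have hs_mid := hr₁.deletePendantThreePath hr hs hne
  have deg_s := hs_mid.deg_eq
  have card_v : (S v).card = deg G v - 1 := by rw [hc.card_eq]; grind
  have hSr₁ : S r₁ = ∅ := by rw [← card_eq_zero, hc.card_eq]; grind
  have hb_mem := hc.color_mem_left hs_mid.left.symm
  have hs_ne : s ≠ r₂ ∧ s ≠ r' ∧ s ≠ v := by grind [hs.left.ne]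
  have hu_adj := hs_mid.right
  simp only [deleteIncidenceSet_adj] at hu_adj
  obtain ⟨g, hg, hgb, hgS⟩ := hc.exists_forall_eq_of_eq_pair hR hd hs_mid (by grind [hs.ne])
  have hSs := hc.eq_of_isMid hs_mid
  have hbe := hc.ne_of_isMid hs_mid
  generalize hb : c s(v, s) = b at hSs hbe hb_mem hgb hgS
  generalize c s(s, u) = e at hSs hbe
  have hRv := hR v
  have hRs := hR s
  obtain ⟨c', hc'⟩ := (hc.recolor hs_mid.left.symm hb (hN v) (hN s)).addPendantThreePath hr₁ hr
    (b := b) (g := g) (N := N) (by simp only [Function.update_apply]; grind) hgb.symm hg.ne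
  have hd' : Distinguishes (Function.update (Function.update S v ∅) r₁ {b, g}) := by
    intro w z h hw
    simp only [Function.update_apply] at h hw
    have := hgS w
    have := hgS z
    have := hd w z
    grind
  refine .of_fresh_color hc' (fun w => ?_) hd' 1 [(r', ∅), (r₂, {g}), (v, S v), (s, {e})] ?_ ?_ ?_
  all_goals clear hc hc' hdeg hu_adj
  · have := hR w
    simp only [Function.update_apply]
    grind
  · simp only [List.forall_mem_cons, Function.update_apply]
    and_intros <;> grind
  · simp only [List.forall_mem_cons, Function.update_apply, Equiv.Perm.one_apply]
    grind
  · simp only [List.pairwise_cons, List.forall_mem_cons]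
    and_intros <;> grind [card_singleton, card_empty]

end ThreePath

section Subdivide

open Finset

variable {G : SimpleGraph V} {c : Sym2 V → ℕ} {S : V → Finset ℕ} {k c₁ c₂ : ℕ}

theorem IsEdgeColoring.eq_pair_of_eq_pair_or {w₀ w₁ w₂ : V} {f : ℕ} (hc : IsEdgeColoring G c S)
    (hw : IsMid G w₀ w₁ w₂) (h : S w₁ = {c₁, f} ∨ S w₁ = {f, c₂}) :
    (c s(w₀, w₁) = f ∧ (c s(w₁, w₂) = c₁ ∨ c s(w₁, w₂) = c₂)) ∨
      (c s(w₁, w₂) = f ∧ (c s(w₀, w₁) = c₁ ∨ c s(w₀, w₁) = c₂)) := by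
  have hmem := mem_pair_of_eq_pair (hc.eq_of_isMid hw)
  rcases h with h | h <;> have := mem_pair_of_eq_pair h <;> grind

/-- `G` contains a path with three consecutive interior vertices of degree two, none of them `a`. -/
def HasFourPathAvoiding (G : SimpleGraph V) (a : V) : Prop :=
  ∃ w₀ w₁ w₂ w₃ w₄, IsMid G w₀ w₁ w₂ ∧ IsMid G w₁ w₂ w₃ ∧ IsMid G w₂ w₃ w₄ ∧
    w₁ ≠ a ∧ w₂ ≠ a ∧ w₃ ≠ a

-- Every interior vertex of the path would pair `c₁` or `c₂` with a color of its own, and three such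
-- pairs cannot be consecutive.
theorem IsEdgeColoring.not_hasFourPathAvoiding (hc : IsEdgeColoring G c S) {a : V} {φ : V → ℕ}
    {K : Set V} (hK : ∀ u, deg G u = 2 → u ≠ a → u ∈ K) (hφ : Set.InjOn φ K)
    (hne : ∀ u ∈ K, φ u ≠ c₁ ∧ φ u ≠ c₂)
    (hS : ∀ u ∈ K, S u = {c₁, φ u} ∨ S u = {φ u, c₂}) : ¬ HasFourPathAvoiding G a := by
  rintro ⟨w₀, w₁, w₂, w₃, w₄, h₁, h₂, h₃, hw₁, hw₂, hw₃⟩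
  have hK₁ := hK w₁ h₁.deg_eq hw₁
  have hK₂ := hK w₂ h₂.deg_eq hw₂
  have hK₃ := hK w₃ h₃.deg_eq hw₃
  have := hφ.ne hK₁ hK₂ h₁.right.ne
  have := hφ.ne hK₂ hK₃ h₂.right.ne
  have := hφ.ne hK₁ hK₃ h₂.ne
  have := hc.eq_pair_of_eq_pair_or h₁ (hS w₁ hK₁)
  have := hc.eq_pair_of_eq_pair_or h₂ (hS w₂ hK₂)
  have := hc.eq_pair_of_eq_pair_or h₃ (hS w₃ hK₃)
  have := hc.ne_of_isMid h₁
  have := hc.ne_of_isMid h₂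
  have := hc.ne_of_isMid h₃
  have := hne w₁ hK₁
  have := hne w₂ hK₂
  have := hne w₃ hK₃
  clear hS hne hK hφ
  grind

theorem IsEdgeColoring.exists_forall_not_pair [Finite V] (hc : IsEdgeColoring G c S) {a : V}
    (hSa : S a = {c₁, c₂}) (h12 : c₁ ≠ c₂) (hR : S a ⊆ range k)
    (hcase : numDeg G 2 + 2 ≤ k ∨ numDeg G 2 + 1 ≤ k ∧ HasFourPathAvoiding G a) :
    ∃ f ∈ ((range k).erase c₁).erase c₂, ∀ u, ¬ (u ≠ a ∧ (S u = {c₁, f} ∨ S u = {f, c₂})) := by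
  classical
  cases nonempty_fintype V
  let K := (univ.filter fun w => deg G w = 2).erase a
  have hlt : c₁ < k ∧ c₂ < k := by simpa [hSa, insert_subset_iff] using hR
  have ha : deg G a = 2 := by rw [← hc.card_eq, hSa, card_pair h12]
  have hcardC : (((range k).erase c₁).erase c₂).card = k - 1 - 1 := by
    rw [card_erase_of_mem (by simp [h12.symm, hlt]), card_erase_of_mem (by simp [hlt]), card_range]
  have hcardK : K.card = numDeg G 2 - 1 := by
    rw [card_erase_of_mem (by simp [ha]), numDeg_eq_card_filter]
  have hpos : 1 ≤ numDeg G 2 := by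
    rw [numDeg_eq_card_filter]; exact card_pos.2 ⟨a, by simp [ha]⟩
  have hmem (g) (hg : g ∈ ((range k).erase c₁).erase c₂) (u)
      (hu : u ≠ a ∧ (S u = {c₁, g} ∨ S u = {g, c₂})) : u ∈ K := by
    have : (S u).card = 2 := by rcases hu.2 with h | h <;> rw [h, card_pair (by grind)]
    simpa [K, ← hc.card_eq, this] using hu.1
  have hinj (g) (hg : g ∈ ((range k).erase c₁).erase c₂) (g')
      (hg' : g' ∈ ((range k).erase c₁).erase c₂) (u)
      (hu : u ≠ a ∧ (S u = {c₁, g} ∨ S u = {g, c₂}))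
      (hu' : u ≠ a ∧ (S u = {c₁, g'} ∨ S u = {g', c₂})) : g = g' := by
    rcases hu.2 with h | h <;> rcases hu'.2 with h' | h' <;>
      grind [mem_pair_of_eq_pair h, mem_pair_of_eq_pair h']
  rcases hcase with hn | ⟨hn, hpath⟩
  · exact exists_forall_not_of_card_lt (fun g u => u ≠ a ∧ (S u = {c₁, g} ∨ S u = {g, c₂}))
      (by omega) hmem hinj
  · by_contra! hcon
    obtain ⟨φ, hφ, hφS⟩ := exists_injOn_of_card_le _ (by omega : K.card ≤ _) hmem hinj hcon
    refine hc.not_hasFourPathAvoiding (K := K) (fun u hu hua => by simp [K, hu, hua]) hφ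
      (fun u hu => ?_) (fun u hu => (hφS u hu).2.2) hpath
    grind

theorem VDColorable.subdivide [Finite V] {a s b : V} (hs : IsMid G a s b) (hab : ¬ G.Adj a b)
    (ha : deg G a = 2) (hcase : numDeg (suppressMid G a s b) 2 + 2 ≤ k ∨
      numDeg (suppressMid G a s b) 2 + 1 ≤ k ∧ HasFourPathAvoiding (suppressMid G a s b) a)
    (h : VDColorable (suppressMid G a s b) k) : VDColorable G k := by
  classical
  obtain ⟨c, S, hc, hR, hd⟩ := h
  have hdeg := deg_suppressMid hs hab
  have hab' : (suppressMid G a s b).Adj a b := by grind [suppressMid_adj, hs.ne]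
  have hmem := hc.color_mem_left hab'
  obtain ⟨c₂, hc₂⟩ : ∃ c₂, c s(a, b) = c₂ := ⟨_, rfl⟩
  rw [hc₂] at hmem
  obtain ⟨c₁, hc₁⟩ := card_eq_one.1 <| (card_erase_of_mem hmem).trans <| by
    rw [hc.card_eq, hdeg, if_neg hs.left.ne', ha]
  have h12 : c₁ ≠ c₂ := ne_of_mem_erase (hc₁ ▸ mem_singleton_self c₁ : c₁ ∈ (S a).erase c₂)
  have hSa : S a = {c₁, c₂} := by rw [← insert_erase hmem, hc₁, pair_comm]
  obtain ⟨f, hf, hfS⟩ := hc.exists_forall_not_pair hSa h12 (hR a) hcase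
  have hRa := hR a
  simp only [mem_erase, mem_range] at hf
  have hc' := hc.subdivide hs hab hc₂ (i := f) (by rw [hSa]; grind)
  refine ⟨_, _, hc', fun u => ?_, fun u w h hu => ?_⟩
  · have := hR u
    simp only [Function.update_apply]
    grind
  · simp only [Function.update_apply, hc₁] at h hu
    have := hd u w
    have := hfS u
    have := hfS w
    have hne : ({f, c₁} : Finset ℕ) ≠ {f, c₂} := fun h => by
      have := mem_pair_of_eq_pair h
      grind
    grind [pair_comm]

end Subdivide

/-! ### Rooted trees -/

section Rooting

/-- `h` is the height and `par` the parent function of the tree `G` rooted at `v`. -/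
structure IsRooting (G : SimpleGraph V) (v : V) (h : V → ℕ) (par : V → V) : Prop where
  adj : ∀ u w, G.Adj u w → (h w = h u + 1 ∧ par w = u) ∨ (h u = h w + 1 ∧ par u = w)
  par : ∀ u, deg G u ≠ 0 → u ≠ v → G.Adj u (par u) ∧ h u = h (par u) + 1
  root : h v = 0

variable {G : SimpleGraph V} {v : V} {h : V → ℕ} {par : V → V}

theorem exists_isPath_penultimate_eq {u w : V} (hv : G.Reachable v w) (hw : G.Adj u w)
    (hd : G.dist v u = G.dist v w + 1) : ∃ p : G.Walk v u, p.IsPath ∧ p.penultimate = w := by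
  obtain ⟨p, hp⟩ := hv.exists_walk_length_eq_dist
  exact ⟨p.concat hw.symm, Walk.isPath_of_length_eq_dist _ (by rw [Walk.length_concat, hp, hd]),
    by simp⟩

theorem eq_of_dist_eq_dist_add_one {u w w' : V} (hG : G.IsAcyclic) (hv : G.Reachable v u)
    (hw : G.Adj u w) (hw' : G.Adj u w') (hd : G.dist v u = G.dist v w + 1)
    (hd' : G.dist v u = G.dist v w' + 1) : w = w' := by
  obtain ⟨p, hp, rfl⟩ := exists_isPath_penultimate_eq (hv.trans hw.reachable) hw hd
  obtain ⟨q, hq, rfl⟩ := exists_isPath_penultimate_eq (hv.trans hw'.reachable) hw' hd'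
  rw [Subtype.mk.inj ((hG.subsingleton_path _ _).elim ⟨p, hp⟩ ⟨q, hq⟩)]

theorem exists_adj_dist_eq_dist_add_one {u : V} (hv : G.Reachable v u) (hne : u ≠ v) :
    ∃ w, G.Adj u w ∧ G.dist v u = G.dist v w + 1 := by
  obtain ⟨p, hp⟩ := hv.exists_walk_length_eq_dist
  have hnil : ¬ p.Nil := fun hn => hne hn.eq.symm
  have hadj := p.adj_penultimate hnil
  have hle : G.dist v p.penultimate ≤ p.dropLast.length := dist_le _
  have hlen := p.length_dropLast_add_one hnil
  have hge := hadj.symm.diff_dist_adj (u := v)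
  exact ⟨p.penultimate, hadj.symm, by omega⟩

theorem TreeLike.exists_isRooting [Finite V] (hT : TreeLike G) (hv : deg G v ≠ 0) :
    ∃ h par, IsRooting G v h par := by
  have hreach {u w} (huw : G.Adj u w) : G.Reachable v u :=
    hT.reachable v (mem_support_iff_deg_ne_zero.2 hv) u ⟨w, huw⟩
  have hpar (u) : ∃ w, deg G u ≠ 0 → u ≠ v → G.Adj u w ∧ G.dist v u = G.dist v w + 1 := by
    by_cases hu : deg G u ≠ 0 ∧ u ≠ v
    · obtain ⟨w, huw⟩ := exists_adj_of_deg_ne_zero hu.1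
      obtain ⟨w, hw⟩ := exists_adj_dist_eq_dist_add_one (hreach huw) hu.2
      exact ⟨w, fun _ _ => hw⟩
    · exact ⟨u, fun h₁ h₂ => absurd ⟨h₁, h₂⟩ hu⟩
  choose par hpar using hpar
  have hpar_eq {u w} (huw : G.Adj u w) (hd : G.dist v w = G.dist v u + 1) : par w = u := by
    have hw := hpar w (deg_pos huw.symm).ne' (by rintro rfl; simp at hd)
    exact eq_of_dist_eq_dist_add_one hT.acyclic (hreach huw.symm) hw.1 huw.symm hw.2 hd
  refine ⟨G.dist v, par, fun u w huw => ?_, hpar, by simp⟩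
  rcases hT.acyclic.dist_eq_dist_add_one_of_adj_of_reachable v huw (hreach huw) with hd | hd
  · exact .inr ⟨hd, hpar_eq huw.symm hd⟩
  · exact .inl ⟨hd, hpar_eq huw hd⟩

theorem IsRooting.eq_par_of_isLeafAt (hR : IsRooting G v h par) {x s : V} (hx : IsLeafAt G x s)
    (hxv : x ≠ v) : h x = h s + 1 ∧ par x = s := by
  have hpar := hR.par x (by rw [hx.deg_eq]; omega) hxv
  rw [hx.eq _ hpar.1] at hpar
  exact ⟨hpar.2, hx.eq _ (hR.par x (by rw [hx.deg_eq]; omega) hxv).1⟩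

theorem IsRooting.child_of_ne_par (hR : IsRooting G v h par) {u w : V} (huw : G.Adj u w)
    (hw : w ≠ par u) : h w = h u + 1 ∧ par w = u :=
  (hR.adj u w huw).resolve_right fun h => hw h.2.symm

theorem IsRooting.par_eq (hR : IsRooting G v h par) {u w : V} (huw : G.Adj u w)
    (hw : h w = h u + 1) : par w = u :=
  ((hR.adj u w huw).resolve_right (by omega)).2

theorem TreeLike.mem_of_closed [Finite V] (hT : TreeLike G) {P : V → Prop} (hv : P v)
    (hd : deg G v ≠ 0) (hP : ∀ u w, G.Adj u w → P u → P w) {u : V} (hu : deg G u ≠ 0) : P u := by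
  obtain ⟨p⟩ := hT.reachable v (mem_support_iff_deg_ne_zero.2 hd) u
    (mem_support_iff_deg_ne_zero.2 hu)
  induction p with
  | nil => exact hv
  | cons h _ ih => exact ih (hP _ _ h hv) (deg_pos h.symm).ne' hu

end Rooting

/-! ### Counting leaves and vertices of degree two -/

section Counting

open Finset

variable {G : SimpleGraph V}

theorem TreeLike.sum_deg_sub_two_le [Finite V] (hT : TreeLike G) (H : Finset V)
    (hH : ∀ u ∈ H, 2 ≤ deg G u) : ∑ u ∈ H, (deg G u - 2) + 2 ≤ numDeg G 1 := by
  classical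
  cases nonempty_fintype V
  zify
  have hsum : ∑ u ∈ H, ((deg G u - 2 : ℕ) : ℤ) = ∑ u, if u ∈ H then (deg G u : ℤ) - 2 else 0 := by
    rw [sum_ite_mem, univ_inter]
    exact sum_congr rfl fun u hu => Nat.cast_sub (hH u hu)
  have hle : ∑ u, ((if u ∈ H then (deg G u : ℤ) - 2 else 0) - if deg G u = 1 then 1 else 0) ≤
      ∑ u, (if deg G u = 0 then 0 else (deg G u : ℤ) - 2) := by
    refine sum_le_sum fun u _ => ?_
    have := hH u
    split_ifs <;> omega
  rw [sum_sub_distrib, ← hsum, hT.sum_deg, ← numDeg_eq_sum] at hle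
  omega

theorem TreeLike.deg_le [Finite V] (hT : TreeLike G) {v : V} (hv : 2 ≤ deg G v) :
    deg G v ≤ numDeg G 1 := by
  have := hT.sum_deg_sub_two_le {v} (by simpa using hv)
  rw [sum_singleton] at this
  omega

theorem TreeLike.deg_add_deg_le [Finite V] (hT : TreeLike G) {v w : V} (hv : 2 ≤ deg G v)
    (hw : 2 ≤ deg G w) (hne : v ≠ w) : deg G v + deg G w ≤ numDeg G 1 + 2 := by
  classical
  have := hT.sum_deg_sub_two_le {v, w} (by simp [hv, hw])
  rw [sum_pair hne] at this
  omega

theorem TreeLike.two_le_numDeg_one [Finite V] (hT : TreeLike G) : 2 ≤ numDeg G 1 := by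
  simpa using hT.sum_deg_sub_two_le ∅ (by simp)

theorem TreeLike.numDeg_one_le_max [Finite V] (hT : TreeLike G) {v : V}
    (h : ∀ u, u ≠ v → deg G u ≤ 2) : numDeg G 1 ≤ max (deg G v) 2 := by
  classical
  cases nonempty_fintype V
  have hle : ∑ u, (if deg G u = 0 then 0 else (deg G u : ℤ) - 2) ≤
      ∑ u, ((if u = v then max ((deg G v : ℤ) - 2) 0 else 0) - if deg G u = 1 then 1 else 0) := by
    refine sum_le_sum fun u _ => ?_
    by_cases huv : u = v
    · rw [if_pos huv, huv]
      split_ifs <;> omega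
    · have := h u huv
      rw [if_neg huv]
      split_ifs <;> omega
  rw [hT.sum_deg, sum_sub_distrib, sum_ite_eq' univ v, if_pos (mem_univ v), ← numDeg_eq_sum] at hle
  omega

theorem TreeLike.numDeg_one_eq_two [Finite V] (hT : TreeLike G) (h : ∀ u, deg G u ≤ 2) :
    numDeg G 1 = 2 := by
  obtain ⟨v, -⟩ := hT.nonempty
  have := hT.numDeg_one_le_max (v := v) fun u _ => h u
  have := hT.two_le_numDeg_one
  have := h v
  omega

/-- The number of vertices of degree two that are adjacent to a leaf. -/
noncomputable def numPendant (G : SimpleGraph V) : ℕ :=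
  {s | deg G s = 2 ∧ ∃ x, IsLeafAt G x s}.ncard

theorem TreeLike.card_three_le_deg_add_two_le [Fintype V] (hT : TreeLike G) :
    (univ.filter fun u => 3 ≤ deg G u).card + 2 ≤ numDeg G 1 := by
  have hsum := hT.sum_deg_sub_two_le (univ.filter fun u => 3 ≤ deg G u) (by simp; omega)
  have hcard : (univ.filter fun u => 3 ≤ deg G u).card • 1 ≤
      ∑ u ∈ univ.filter fun u => 3 ≤ deg G u, (deg G u - 2) :=
    card_nsmul_le_sum _ _ _ (by simp; omega)
  rw [smul_eq_mul, mul_one] at hcard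
  omega

-- Below a vertex of degree two without a leaf lies a branch vertex other than the root.
theorem TreeLike.numDeg_two_le [Finite V] (hT : TreeLike G) {v : V} (hv : 3 ≤ deg G v)
    (h₂₂ : ∀ a s, G.Adj a s → deg G a = 2 → deg G s ≠ 2) :
    numDeg G 2 + 3 ≤ numPendant G + numDeg G 1 := by
  classical
  cases nonempty_fintype V
  obtain ⟨h, par, hR⟩ := hT.exists_isRooting (v := v) (by omega)
  have hroot := hR.root
  set H := univ.filter fun u => 3 ≤ deg G u
  have hvH : v ∈ H := by simp [H, hv]
  set B := univ.filter fun s => deg G s = 2 ∧ ∃ x, IsLeafAt G x s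
  have hB_sub : B ⊆ univ.filter fun s => deg G s = 2 := monotone_filter_right _ fun _ _ h => h.1
  have hchild (s) (hs : s ∈ (univ.filter fun s => deg G s = 2) \ B) :
      ∃ u ∈ H.erase v, par u = s := by
    simp only [B, mem_sdiff, mem_filter, mem_univ, true_and, not_and, not_exists] at hs
    have hsv : s ≠ v := by rintro rfl; omega
    obtain ⟨u, hu⟩ := exists_isMid_of_deg_eq_two (hR.par s (by omega) hsv).1.symm hs.1
    obtain ⟨hhu, hpu⟩ := (hR.adj _ _ hu.right).resolve_right fun h => hu.ne h.2
    have := h₂₂ s u hu.right hs.1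
    have := deg_pos hu.right.symm
    have : deg G u ≠ 1 := fun h => hs.2 hs.1 u (isLeafAt_of_deg_eq_one hu.right h)
    refine ⟨u, ?_, hpu⟩
    simp only [H, mem_erase, mem_filter, mem_univ, true_and]
    exact ⟨by rintro rfl; omega, by omega⟩
  choose! f hf using hchild
  have hle := card_le_card_of_injOn f (fun s hs => (hf s hs).1)
    fun s hs s' hs' he => by rw [← (hf s hs).2, ← (hf s' hs').2, he]
  rw [card_erase_of_mem hvH, card_sdiff_of_subset hB_sub,
    ← numDeg_eq_card_filter] at hle
  have hpendant : numPendant G = B.card := by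
    rw [numPendant, ← Set.ncard_coe_finset B, coe_filter_univ]
  have hHle : H.card + 2 ≤ numDeg G 1 := hT.card_three_le_deg_add_two_le
  have hHpos := card_pos.2 ⟨v, hvH⟩
  omega

theorem IsRooting.three_le_deg [Finite V] {v x x' s : V} {h : V → ℕ} {par : V → V}
    (hR : IsRooting G v h par) (hv : 2 ≤ deg G v) (hx : IsLeafAt G x s) (hx' : IsLeafAt G x' s)
    (hne : x ≠ x') (hsv : s ≠ v) : 3 ≤ deg G s := by
  have hleaf {x} (hx : IsLeafAt G x s) : h x = h s + 1 :=
    (hR.eq_par_of_isLeafAt hx (by rintro rfl; have := hx.deg_eq; omega)).1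
  have hpar := hR.par s (deg_pos hx.adj).ne' hsv
  refine _root_.three_le_deg hx.adj hx'.adj hpar.1 hne ?_ ?_ <;> rintro rfl
  · have := hleaf hx; omega
  · have := hleaf hx'; omega

theorem IsRooting.two_le_deg_par [Finite V] {v u : V} {h : V → ℕ} {par : V → V}
    (hR : IsRooting G v h par) (hv : 2 ≤ deg G v) (hu : deg G u ≠ 0) (huv : u ≠ v) :
    2 ≤ deg G (par u) := by
  obtain ⟨hadj, hpar⟩ := hR.par u hu huv
  by_cases hv' : par u = v
  · rwa [hv']
  obtain ⟨hadj', hpar'⟩ := hR.par (par u) (deg_pos hadj.symm).ne' hv'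
  exact two_le_deg hadj' hadj.symm fun he => by rw [he] at hpar'; omega

theorem TreeLike.exists_isLeafAt_three_le_deg [Finite V] (hT : TreeLike G) {v : V}
    (hv : 3 ≤ deg G v) (hlt : numDeg G 2 < numDeg G 1) :
    ∃ x w, IsLeafAt G x w ∧ 3 ≤ deg G w := by
  classical
  cases nonempty_fintype V
  by_contra! hcon
  obtain ⟨h, par, hR⟩ := hT.exists_isRooting (v := v) (by omega)
  have hsv {x s} (hx : IsLeafAt G x s) : s ≠ v := by
    rintro rfl; have := hcon x _ hx; omega
  have hex (x) (hx : x ∈ univ.filter fun x => deg G x = 1) : ∃ s, IsLeafAt G x s :=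
    exists_isLeafAt_of_deg_eq_one (by simpa using hx)
  choose! f hf using hex
  rw [numDeg_eq_card_filter, numDeg_eq_card_filter] at hlt
  refine absurd (card_le_card_of_injOn f ?_ ?_) (not_le.2 hlt)
  · intro x hx
    have := hcon x _ (hf x hx)
    have hd := (hf x hx).deg_eq
    have hxv : x ≠ v := by rintro rfl; omega
    have := hR.two_le_deg_par (by omega) (by omega) hxv
    rw [(hR.eq_par_of_isLeafAt (hf x hx) hxv).2] at this
    simp only [coe_filter, mem_univ, true_and, Set.mem_ofPred_eq]
    omega
  · intro x hx x' hx' he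
    by_contra hne
    have := hcon x _ (hf x hx)
    have := hR.three_le_deg (by omega) (hf x hx) (he ▸ hf x' hx') hne (hsv (hf x hx))
    omega

end Counting

/-! ### Coverings -/

section Covering

variable {W : Type*} {G : SimpleGraph V} {H : SimpleGraph W} {φ : W → V}

/-- `φ` maps the neighbors of each vertex `i` bijectively onto the neighbors of `φ i`. A covering of
a tree is an embedding, so that a graph given by local data is recognized by a covering of it. -/
def IsGraphCovering (H : SimpleGraph W) (G : SimpleGraph V) (φ : W → V) : Prop :=
  ∀ i, Set.BijOn φ (H.neighborSet i) (G.neighborSet (φ i))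

theorem IsGraphCovering.height_eq_length {i j : W} {h : V → ℕ} {par : V → V}
    (hφ : IsGraphCovering H G φ) (hR : IsRooting G (φ j) h par) (p : H.Walk i j) (hp : p.IsPath) :
    h (φ i) = p.length ∧ (¬ p.Nil → par (φ i) = φ p.snd) := by
  induction p with
  | nil => exact ⟨hR.root, fun hn => absurd .nil hn⟩
  | @cons i i' j hii' p ih =>
    rw [Walk.cons_isPath_iff] at hp
    obtain ⟨hlen, hpar⟩ := ih hR hp.1
    rcases hR.adj (φ i) (φ i') ((hφ i).mapsTo hii') with ⟨hh, hp'⟩ | hdown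
    · by_cases hnil : p.Nil
      · rw [Walk.length_eq_zero_iff.2 hnil] at hlen
        omega
      · have hsnd : i = p.snd := (hφ i').injOn hii'.symm (p.adj_snd hnil) (hp' ▸ hpar hnil)
        exact absurd (hsnd ▸ p.getVert_mem_support 1) hp.2
    · rw [Walk.length_cons, ← hlen]
      exact ⟨hdown.1, fun _ => by simpa using hdown.2⟩

theorem IsGraphCovering.injective [Finite V] (hφ : IsGraphCovering H G φ) (hT : TreeLike G)
    (hH : H.Preconnected) : Function.Injective φ := by
  classical
  intro i j hij
  obtain ⟨p, hp⟩ := (hH i j).exists_isPath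
  cases p with
  | nil => rfl
  | cons hadj q =>
    obtain ⟨h, par, hR⟩ := hT.exists_isRooting (v := φ j)
      (hij ▸ (deg_pos ((hφ i).mapsTo hadj)).ne')
    have hheight := (hφ.height_eq_length hR _ hp).1
    rw [hij, hR.root, Walk.length_cons] at hheight
    omega

theorem IsGraphCovering.mem_range [Finite V] (hφ : IsGraphCovering H G φ) (hT : TreeLike G)
    {i : W} (hi : deg G (φ i) ≠ 0) {u : V} (hu : deg G u ≠ 0) : u ∈ Set.range φ := by
  refine hT.mem_of_closed (P := (· ∈ Set.range φ)) ⟨i, rfl⟩ hi ?_ hu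
  rintro _ w huw ⟨j, rfl⟩
  obtain ⟨k, -, hk⟩ := (hφ j).surjOn huw
  exact ⟨k, hk⟩

theorem IsGraphCovering.nonempty_iso [Finite V] [Nonempty W] (hφ : IsGraphCovering H G φ)
    (hT : TreeLike G) (hH : H.Preconnected) (h0 : ∀ u, deg G u ≠ 0) : Nonempty (G ≃g H) := by
  have hinj := hφ.injective hT hH
  have hbij : Function.Bijective φ :=
    ⟨hinj, fun u => hφ.mem_range hT (i := Classical.arbitrary W) (h0 _) (h0 u)⟩
  refine ⟨RelIso.symm ⟨.ofBijective φ hbij,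
    fun {i j} => ⟨fun hij => ?_, fun hij => (hφ i).mapsTo hij⟩⟩⟩
  obtain ⟨k, hk, hkj⟩ := (hφ i).surjOn hij
  rwa [← hinj hkj]

theorem IsEdgeColoring.extend {c : Sym2 W → ℕ} {S : W → Finset ℕ} (hc : IsEdgeColoring H c S)
    (hφ : IsGraphCovering H G φ) (hinj : φ.Injective)
    (hrange : ∀ u w, G.Adj u w → u ∈ Set.range φ) :
    IsEdgeColoring G (Function.extend (Sym2.map φ) c 0) (Function.extend φ S fun _ => ∅) := by
  have hcolor (i j : W) : Function.extend (Sym2.map φ) c 0 s(φ i, φ j) = c s(i, j) :=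
    (Sym2.map.injective hinj).extend_apply c 0 s(i, j)
  constructor
  · intro u a
    by_cases hu : u ∈ Set.range φ
    · obtain ⟨i, rfl⟩ := hu
      rw [hinj.extend_apply, hc.mem]
      constructor
      · rintro ⟨j, hij, hj⟩
        exact ⟨φ j, (hφ i).mapsTo hij, (hcolor i j).trans hj⟩
      · rintro ⟨w, hw, hwa⟩
        obtain ⟨j, hij, rfl⟩ := (hφ i).surjOn hw
        exact ⟨j, hij, (hcolor i j).symm.trans hwa⟩
    · rw [Function.extend_apply' _ _ _ hu]
      exact ⟨fun h => absurd h (Finset.notMem_empty a), fun ⟨w, hw, _⟩ => absurd (hrange u w hw) hu⟩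
  · intro u w w' hw hw' he
    obtain ⟨i, rfl⟩ := hrange u w hw
    obtain ⟨j, hij, rfl⟩ := (hφ i).surjOn hw
    obtain ⟨j', hij', rfl⟩ := (hφ i).surjOn hw'
    rw [hcolor, hcolor] at he
    rw [hc.inj i j j' hij hij' he]

theorem VDColorable.of_isGraphCovering [Finite V] [Nontrivial W] {k : ℕ} (h : VDColorable H k)
    (hφ : IsGraphCovering H G φ) (hT : TreeLike G) (hH : H.Preconnected) : VDColorable G k := by
  obtain ⟨c, S, hc, hr, hd⟩ := h
  have hinj := hφ.injective hT hH
  obtain ⟨i⟩ : Nonempty W := inferInstance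
  obtain ⟨j, hij⟩ : i ∈ H.support := hH.support_eq_univ ▸ Set.mem_univ i
  have hi : deg G (φ i) ≠ 0 := (deg_pos ((hφ i).mapsTo hij)).ne'
  refine ⟨_, _, hc.extend hφ hinj fun u w huw => hφ.mem_range hT hi (deg_pos huw).ne',
    fun u => ?_, fun u w hS hu => ?_⟩
  · by_cases hu : u ∈ Set.range φ
    · obtain ⟨i, rfl⟩ := hu
      exact hinj.extend_apply S _ i ▸ hr i
    · simp [Function.extend_apply' _ _ _ hu]
  · have hrange {u} (hu : (Function.extend φ S (fun _ => ∅) u).Nonempty) : u ∈ Set.range φ := by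
      by_contra hcon
      simp [Function.extend_apply' _ _ _ hcon] at hu
    obtain ⟨i, rfl⟩ := hrange hu
    obtain ⟨j, rfl⟩ := hrange (hS ▸ hu)
    rw [hinj.extend_apply, hinj.extend_apply] at hS
    rw [hinj.extend_apply] at hu
    rw [hd i j hS hu]

/-- `v` has exactly the three neighbors `a`, `b` and `c`. -/
structure IsTripod (G : SimpleGraph V) (v a b c : V) : Prop where
  adj₁ : G.Adj v a
  adj₂ : G.Adj v b
  adj₃ : G.Adj v c
  ne₁₂ : a ≠ b
  ne₁₃ : a ≠ c
  ne₂₃ : b ≠ c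
  eq : ∀ w, G.Adj v w → w = a ∨ w = b ∨ w = c

theorem IsTripod.of_deg_eq_three [Finite V] {v a b c : V} (ha : G.Adj v a) (hb : G.Adj v b)
    (hc : G.Adj v c) (hab : a ≠ b) (hac : a ≠ c) (hbc : b ≠ c) (hv : deg G v = 3) :
    IsTripod G v a b c :=
  ⟨ha, hb, hc, hab, hac, hbc, eq_of_deg_eq_three ha hb hc hab hac hbc hv⟩

theorem IsFork.isTripod {p v x₁ x₂ : V} (h : IsFork G p v x₁ x₂) : IsTripod G v p x₁ x₂ :=
  ⟨h.adj.symm, h.left.adj, h.right.adj, h.ne_left, h.ne_right, h.ne, h.eq⟩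

theorem IsLeafAt.bijOn {i j : W} (h : IsLeafAt G (φ i) (φ j)) (hH : IsLeafAt H i j) :
    Set.BijOn φ (H.neighborSet i) (G.neighborSet (φ i)) := by
  refine ⟨?_, ?_, ?_⟩
  · intro k hk
    rw [hH.eq k hk]
    exact h.adj.symm
  · intro k hk l hl _
    rw [hH.eq k hk, hH.eq l hl]
  · intro w hw
    exact ⟨j, hH.adj.symm, (h.eq w hw).symm⟩

theorem IsMid.bijOn {i a b : W} (h : IsMid G (φ a) (φ i) (φ b)) (hH : IsMid H a i b) :
    Set.BijOn φ (H.neighborSet i) (G.neighborSet (φ i)) := by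
  have := h.ne
  refine ⟨?_, ?_, ?_⟩
  · intro k hk
    rcases hH.eq k hk with rfl | rfl
    exacts [h.left, h.right]
  · intro k hk l hl he
    rcases hH.eq k hk with rfl | rfl <;> rcases hH.eq l hl with rfl | rfl <;> grind
  · intro w hw
    rcases h.eq w hw with rfl | rfl
    exacts [⟨a, hH.left, rfl⟩, ⟨b, hH.right, rfl⟩]

theorem IsTripod.bijOn {i a b c : W} (h : IsTripod G (φ i) (φ a) (φ b) (φ c))
    (hH : IsTripod H i a b c) : Set.BijOn φ (H.neighborSet i) (G.neighborSet (φ i)) := by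
  have := h.ne₁₂
  have := h.ne₁₃
  have := h.ne₂₃
  refine ⟨?_, ?_, ?_⟩
  · intro k hk
    rcases hH.eq k hk with rfl | rfl | rfl
    exacts [h.adj₁, h.adj₂, h.adj₃]
  · intro k hk l hl he
    rcases hH.eq k hk with rfl | rfl | rfl <;> rcases hH.eq l hl with rfl | rfl | rfl <;> grind
  · intro w hw
    rcases h.eq w hw with rfl | rfl | rfl
    exacts [⟨a, hH.adj₁, rfl⟩, ⟨b, hH.adj₂, rfl⟩, ⟨c, hH.adj₃, rfl⟩]

end Covering

/-! ### Five small trees -/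

section SmallTrees

open Finset

variable {G : SimpleGraph V}

/-- The graph on `0, …, n` in which each `i ≠ 0` is joined to its parent `p i`. -/
abbrev parentGraph {n : ℕ} (p : Fin (n + 1) → Fin (n + 1)) : SimpleGraph (Fin (n + 1)) :=
  SimpleGraph.fromRel fun i j => i ≠ 0 ∧ p i = j

theorem parentGraph_preconnected {n : ℕ} {p : Fin (n + 1) → Fin (n + 1)}
    (hp : ∀ i, i ≠ 0 → p i < i) : (parentGraph p).Preconnected := by
  have hreach (i) : (parentGraph p).Reachable i 0 := by
    induction i using WellFoundedLT.induction with
    | ind i ih =>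
      by_cases hi : i = 0
      · rw [hi]
      · have hadj : (parentGraph p).Adj i (p i) := ⟨(hp i hi).ne', .inl ⟨hi, rfl⟩⟩
        exact hadj.reachable.trans (ih _ (hp i hi))
  exact fun i j => (hreach i).trans (hreach j).symm

/-- The color set at `i` when each edge is colored by the label under `e` of its larger end, which
in `parentGraph p` is its lower end if `p i < i`. -/
def labelColors {n : ℕ} (H : SimpleGraph (Fin n)) [DecidableRel H.Adj] (e : Fin n → ℕ)
    (i : Fin n) : Finset ℕ :=
  (univ.filter (H.Adj i)).image fun j => e (max i j)

theorem vdColorable_of_labels {n k : ℕ} {H : SimpleGraph (Fin n)} [DecidableRel H.Adj]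
    {e : Fin n → ℕ}
    (hinj : ∀ i j j', H.Adj i j → H.Adj i j' → e (max i j) = e (max i j') → j = j')
    (hd : ∀ i j, labelColors H e i = labelColors H e j → i = j)
    (hk : ∀ i, labelColors H e i ⊆ range k) : VDColorable H k :=
  ⟨fun z => e z.sup, labelColors H e, ⟨fun i a => by simp [labelColors], hinj⟩, hk,
    fun i j h _ => hd i j h⟩

instance {W : Type*} [Fintype W] [DecidableEq W] (H : SimpleGraph W) [DecidableRel H.Adj]
    (x v : W) : Decidable (IsLeafAt H x v) :=
  decidable_of_iff (H.Adj v x ∧ ∀ w, H.Adj x w → w = v) ⟨fun h => ⟨h.1, h.2⟩, fun h => ⟨h.1, h.2⟩⟩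

instance {W : Type*} [Fintype W] [DecidableEq W] (H : SimpleGraph W) [DecidableRel H.Adj]
    (a s b : W) : Decidable (IsMid H a s b) :=
  decidable_of_iff (H.Adj s a ∧ H.Adj s b ∧ a ≠ b ∧ ∀ w, H.Adj s w → w = a ∨ w = b)
    ⟨fun h => ⟨h.1, h.2.1, h.2.2.1, h.2.2.2⟩, fun h => ⟨h.1, h.2, h.3, h.4⟩⟩

instance {W : Type*} [Fintype W] [DecidableEq W] (H : SimpleGraph W) [DecidableRel H.Adj]
    (v a b c : W) : Decidable (IsTripod H v a b c) :=
  decidable_of_iff (H.Adj v a ∧ H.Adj v b ∧ H.Adj v c ∧ a ≠ b ∧ a ≠ c ∧ b ≠ c ∧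
    ∀ w, H.Adj v w → w = a ∨ w = b ∨ w = c)
    ⟨fun ⟨h₁, h₂, h₃, h₄, h₅, h₆, h₇⟩ => ⟨h₁, h₂, h₃, h₄, h₅, h₆, h₇⟩,
      fun h => ⟨h.1, h.2, h.3, h.4, h.5, h.6, h.7⟩⟩

theorem TreeLike.vdColorable_spider_two_two_two [Finite V] (hT : TreeLike G)
    {w a b c a' b' c' : V} (hw : IsTripod G w a b c) (ha : IsPendantPath G w a a')
    (hb : IsPendantPath G w b b') (hc : IsPendantPath G w c c') : VDColorable G 3 := by
  let H := parentGraph ![0, 0, 0, 0, 1, 2, 3]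
  have hH : VDColorable H 3 :=
    vdColorable_of_labels (e := ![0, 0, 1, 2, 1, 2, 0]) (by decide) (by decide) (by decide)
  refine hH.of_isGraphCovering (φ := ![w, a, b, c, a', b', c']) (fun i => ?_) hT
    (parentGraph_preconnected (by decide))
  fin_cases i
  exacts [hw.bijOn (by decide : IsTripod H 0 1 2 3), ha.mid.bijOn (by decide : IsMid H 0 1 4),
    hb.mid.bijOn (by decide : IsMid H 0 2 5), hc.mid.bijOn (by decide : IsMid H 0 3 6),
    ha.leaf.bijOn (by decide : IsLeafAt H 4 1), hb.leaf.bijOn (by decide : IsLeafAt H 5 2),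
    hc.leaf.bijOn (by decide : IsLeafAt H 6 3)]

theorem TreeLike.vdColorable_spider_one_two_three [Finite V] (hT : TreeLike G)
    {w x a b a' b₂ b₃ : V} (hw : IsTripod G w x a b) (hx : IsLeafAt G x w)
    (ha : IsPendantPath G w a a') (hb : IsMid G w b b₂) (hb₂ : IsPendantPath G b b₂ b₃) :
    VDColorable G 3 := by
  let H := parentGraph ![0, 0, 0, 0, 2, 3, 5]
  have hH : VDColorable H 3 :=
    vdColorable_of_labels (e := ![0, 0, 1, 2, 2, 0, 1]) (by decide) (by decide) (by decide)
  refine hH.of_isGraphCovering (φ := ![w, x, a, b, a', b₂, b₃]) (fun i => ?_) hT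
    (parentGraph_preconnected (by decide))
  fin_cases i
  exacts [hw.bijOn (by decide : IsTripod H 0 1 2 3), hx.bijOn (by decide : IsLeafAt H 1 0),
    ha.mid.bijOn (by decide : IsMid H 0 2 4), hb.bijOn (by decide : IsMid H 0 3 5),
    ha.leaf.bijOn (by decide : IsLeafAt H 4 2), hb₂.mid.bijOn (by decide : IsMid H 3 5 6),
    hb₂.leaf.bijOn (by decide : IsLeafAt H 6 5)]

theorem TreeLike.vdColorable_spider_one_one_four [Finite V] (hT : TreeLike G)
    {w x x' b b₂ b₃ b₄ : V} (hw : IsTripod G w x x' b) (hx : IsLeafAt G x w)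
    (hx' : IsLeafAt G x' w) (hb : IsMid G w b b₂) (hb₂ : IsMid G b b₂ b₃)
    (hb₃ : IsPendantPath G b₂ b₃ b₄) : VDColorable G 3 := by
  let H := parentGraph ![0, 0, 0, 0, 3, 4, 5]
  have hH : VDColorable H 3 :=
    vdColorable_of_labels (e := ![0, 0, 1, 2, 0, 1, 2]) (by decide) (by decide) (by decide)
  refine hH.of_isGraphCovering (φ := ![w, x, x', b, b₂, b₃, b₄]) (fun i => ?_) hT
    (parentGraph_preconnected (by decide))
  fin_cases i
  exacts [hw.bijOn (by decide : IsTripod H 0 1 2 3), hx.bijOn (by decide : IsLeafAt H 1 0),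
    hx'.bijOn (by decide : IsLeafAt H 2 0), hb.bijOn (by decide : IsMid H 0 3 4),
    hb₂.bijOn (by decide : IsMid H 3 4 5), hb₃.mid.bijOn (by decide : IsMid H 4 5 6),
    hb₃.leaf.bijOn (by decide : IsLeafAt H 6 5)]

theorem TreeLike.vdColorable_leaf_fork_path [Finite V] (hT : TreeLike G)
    {w x s t l₁ l₂ l₃ : V} (hw : IsTripod G w x s t) (hx : IsLeafAt G x w)
    (hs : IsFork G w s l₁ l₂) (ht : IsPendantPath G w t l₃) : VDColorable G 4 := by
  let H := parentGraph ![0, 0, 0, 0, 2, 2, 3]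
  have hH : VDColorable H 4 :=
    vdColorable_of_labels (e := ![0, 0, 1, 2, 2, 3, 1]) (by decide) (by decide) (by decide)
  refine hH.of_isGraphCovering (φ := ![w, x, s, t, l₁, l₂, l₃]) (fun i => ?_) hT
    (parentGraph_preconnected (by decide))
  fin_cases i
  exacts [hw.bijOn (by decide : IsTripod H 0 1 2 3), hx.bijOn (by decide : IsLeafAt H 1 0),
    hs.isTripod.bijOn (by decide : IsTripod H 2 0 4 5), ht.mid.bijOn (by decide : IsMid H 0 3 6),
    hs.left.bijOn (by decide : IsLeafAt H 4 2), hs.right.bijOn (by decide : IsLeafAt H 5 2),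
    ht.leaf.bijOn (by decide : IsLeafAt H 6 3)]

theorem TreeLike.vdColorable_fork_fork [Finite V] (hT : TreeLike G)
    {w s t l₁ l₂ l₃ l₄ : V} (hw : IsMid G s w t) (hs : IsFork G w s l₁ l₂)
    (ht : IsFork G w t l₃ l₄) : VDColorable G 4 := by
  let H := parentGraph ![0, 0, 0, 1, 1, 2, 2]
  have hH : VDColorable H 4 :=
    vdColorable_of_labels (e := ![0, 0, 1, 1, 2, 0, 3]) (by decide) (by decide) (by decide)
  refine hH.of_isGraphCovering (φ := ![w, s, t, l₁, l₂, l₃, l₄]) (fun i => ?_) hT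
    (parentGraph_preconnected (by decide))
  fin_cases i
  exacts [hw.bijOn (by decide : IsMid H 1 0 2), hs.isTripod.bijOn (by decide : IsTripod H 1 0 3 4),
    ht.isTripod.bijOn (by decide : IsTripod H 2 0 5 6), hs.left.bijOn (by decide : IsLeafAt H 3 1),
    hs.right.bijOn (by decide : IsLeafAt H 4 1), ht.left.bijOn (by decide : IsLeafAt H 5 2),
    ht.right.bijOn (by decide : IsLeafAt H 6 2)]

end SmallTrees

/-! ### Exceptional trees -/

section Exceptional

variable {G : SimpleGraph V} {x v u w a a' b b' s z t : V}

/-- All vertices other than the adjacent vertices `u` and `w` have degree at most one: for trees,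
diameter at most three. -/
structure IsDoubleStar (G : SimpleGraph V) (u w : V) : Prop where
  adj : G.Adj u w
  eq : ∀ a, 2 ≤ deg G a → a = u ∨ a = w

/-- The trees `Q(r, 2, 0)`: two pendant paths `w a a'` and `w b b'`, and leaves at `w`. -/
structure IsTwoPathStar (G : SimpleGraph V) (w a a' b b' : V) : Prop where
  left : IsPendantPath G w a a'
  right : IsPendantPath G w b b'
  ne : a ≠ b
  eq : ∀ u, G.Adj w u → u = a ∨ u = b ∨ IsLeafAt G u w

/-- The trees `Q(0, 1, 1)`: the center `w` has the neighbors `s` and `t`; apart from `w`, `s` has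
the leaf `z` as its only neighbor, and `t` has at least two neighbors, all of them leaves. -/
structure IsPathBroom (G : SimpleGraph V) (w s z t : V) : Prop where
  mid : IsMid G s w t
  path : IsPendantPath G w s z
  three_le : 3 ≤ deg G t
  eq : ∀ u, G.Adj t u → u = w ∨ IsLeafAt G u t

/-- The trees that the main theorem excludes. -/
inductive IsExceptional (G : SimpleGraph V) : Prop
  | doubleStar {u w : V} (h : IsDoubleStar G u w)
  | twoPathStar {w a a' b b' : V} (h : IsTwoPathStar G w a a' b b')
  | pathBroom {w s z t : V} (h : IsPathBroom G w s z t)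

theorem IsDoubleStar.symm (h : IsDoubleStar G u w) : IsDoubleStar G w u :=
  ⟨h.adj.symm, fun a ha => (h.eq a ha).symm⟩

theorem IsTwoPathStar.symm (h : IsTwoPathStar G w a a' b b') : IsTwoPathStar G w b b' a a' :=
  ⟨h.right, h.left, h.ne.symm, fun u hu => or_left_comm.1 (h.eq u hu)⟩

theorem IsPendantPath.of_deleteLeaf (hx : IsLeafAt G x v) (h : IsPendantPath (G ⊖ x) w s z)
    (hs : s ≠ v) (hz : z ≠ v) : IsPendantPath G w s z :=
  ⟨.of_deleteLeaf hx h.mid hs, .of_deleteLeaf hx h.leaf hz⟩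

theorem IsFork.of_deleteLeaf {p l₁ l₂ : V} (hx : IsLeafAt G x v)
    (h : IsFork (G ⊖ x) p t l₁ l₂) (ht : t ≠ v) (hl₁ : l₁ ≠ v) (hl₂ : l₂ ≠ v) :
    IsFork G p t l₁ l₂ where
  left := .of_deleteLeaf hx h.left hl₁
  right := .of_deleteLeaf hx h.right hl₂
  ne := h.ne
  adj := (deleteIncidenceSet_adj.1 h.adj).1
  ne_left := h.ne_left
  ne_right := h.ne_right
  eq u hu := h.eq u (deleteIncidenceSet_adj.2 ⟨hu, (deleteIncidenceSet_adj.1 h.adj).2.2,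
    by rintro rfl; exact ht (hx.eq t hu.symm)⟩)

theorem IsLeafAt.adj_cases (hx : IsLeafAt G x v) (h : G.Adj v u) : u = x ∨ (G ⊖ x).Adj v u :=
  or_iff_not_imp_left.2 fun hu => deleteIncidenceSet_adj.2 ⟨h, hx.adj.ne, hu⟩

theorem IsDoubleStar.of_deleteLeaf (hx : IsLeafAt G x v) (h : IsDoubleStar (G ⊖ x) u w)
    (hv : 2 ≤ deg (G ⊖ x) v) : IsDoubleStar G u w := by
  refine ⟨(deleteIncidenceSet_adj.1 h.adj).1, fun a ha => ?_⟩
  by_cases hav : a = v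
  · exact hav ▸ h.eq v hv
  · refine h.eq a ?_
    rwa [deg_deleteLeaf_of_ne hx (by rintro rfl; have := hx.deg_eq; omega) hav]

theorem IsTwoPathStar.of_deleteLeaf (hx : IsLeafAt G x w)
    (h : IsTwoPathStar (G ⊖ x) w a a' b b') : IsTwoPathStar G w a a' b b' := by
  refine ⟨.of_deleteLeaf hx h.left h.left.mid.left.ne h.left.mid.ne.symm,
    .of_deleteLeaf hx h.right h.right.mid.left.ne h.right.mid.ne.symm, h.ne, fun u hu => ?_⟩
  rcases hx.adj_cases hu with rfl | hu'
  · exact .inr (.inr hx)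
  · exact (h.eq u hu').imp_right (.imp_right fun h => .of_deleteLeaf hx h hu.ne')

theorem IsPathBroom.of_deleteLeaf (hx : IsLeafAt G x t) (h : IsPathBroom (G ⊖ x) w s z t) :
    IsPathBroom G w s z t := by
  have hd := deg_deleteLeaf_self hx
  have ht := h.three_le
  have hs := h.path.mid.deg_eq
  have hz := h.path.leaf.deg_eq
  refine ⟨.of_deleteLeaf hx h.mid h.mid.right.ne,
    .of_deleteLeaf hx h.path h.mid.ne (by rintro rfl; omega), by omega, fun u hu => ?_⟩
  rcases hx.adj_cases hu with rfl | hu'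
  · exact .inr hx
  · exact (h.eq u hu').imp_right fun h => .of_deleteLeaf hx h hu.ne'

variable [Finite V]

theorem IsTwoPathStar.cases (h : IsTwoPathStar G w a a' b b') (hT : TreeLike G)
    (hv : deg G v ≠ 0) : v = w ∨ v = a ∨ v = b ∨ deg G v = 1 := by
  have := hT.mem_of_closed
    (P := fun u => u = w ∨ u = a ∨ u = b ∨ u = a' ∨ u = b' ∨ IsLeafAt G u w)
    (.inl rfl) (deg_pos h.left.mid.left.symm).ne' ?_ hv
  · have := h.left.leaf.deg_eq
    have := h.right.leaf.deg_eq
    have := IsLeafAt.deg_eq (G := G) (x := v) (v := w)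
    grind
  · have := h.eq
    have := h.left.mid.eq
    have := h.left.leaf.eq
    have := h.right.mid.eq
    have := h.right.leaf.eq
    have := fun u => IsLeafAt.eq (G := G) (x := u) (v := w)
    grind

theorem IsPathBroom.cases (h : IsPathBroom G w s z t) (hT : TreeLike G) (hv : deg G v ≠ 0) :
    v = w ∨ v = s ∨ v = t ∨ deg G v = 1 := by
  have := hT.mem_of_closed (P := fun u => u = w ∨ u = s ∨ u = z ∨ u = t ∨ IsLeafAt G u t)
    (.inl rfl) (deg_pos h.mid.left).ne' ?_ hv
  · have := h.path.leaf.deg_eq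
    have := IsLeafAt.deg_eq (G := G) (x := v) (v := t)
    grind
  · have := h.eq
    have := h.mid.eq
    have := h.path.mid.eq
    have := h.path.leaf.eq
    have := fun u => IsLeafAt.eq (G := G) (x := u) (v := t)
    grind

theorem TreeLike.isExceptional_of_ncard_le_two (hT : TreeLike G)
    (h : {u | 2 ≤ deg G u}.ncard ≤ 2) : IsExceptional G := by
  by_cases hmid : ∃ v, 2 ≤ deg G v
  · obtain ⟨v, hv⟩ := hmid
    by_cases hadj : ∃ w, G.Adj v w ∧ 2 ≤ deg G w
    · obtain ⟨w, hvw, hw⟩ := hadj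
      have heq : {v, w} = {u | 2 ≤ deg G u} := Set.eq_of_subset_of_ncard_le
        (by simp [Set.insert_subset_iff, hv, hw]) (by rwa [Set.ncard_pair hvw.ne])
      exact .doubleStar ⟨hvw, fun u hu => heq.ge hu⟩
    · push Not at hadj
      obtain ⟨w, hvw, -⟩ := exists_adj_ne hv v
      refine .doubleStar ⟨hvw, fun u hu => ?_⟩
      have := hT.mem_of_closed (P := fun u => u = v ∨ IsLeafAt G u v) (.inl rfl) (by omega)
        (fun y z hyz hy => ?_) (u := u) (by omega)
      · exact .inl (this.resolve_right fun h => by have := h.deg_eq; omega)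
      · rcases hy with rfl | hy
        · have := hadj z hyz
          have := deg_pos hyz.symm
          exact .inr (isLeafAt_of_deg_eq_one hyz (by omega))
        · exact .inl (hy.eq z hyz)
  · push Not at hmid
    obtain ⟨v, w, hvw⟩ := hT.nonempty
    exact .doubleStar ⟨hvw, fun u hu => absurd hu (hmid u).not_ge⟩

theorem TreeLike.isExceptional_of_deg_le_two (hT : TreeLike G) (h : ∀ u, deg G u ≤ 2)
    (h₂ : numDeg G 2 ≤ 2) : IsExceptional G := by
  refine hT.isExceptional_of_ncard_le_two (le_of_eq_of_le ?_ h₂)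
  exact congrArg Set.ncard (Set.ext fun u => ⟨fun hu => (h u).antisymm hu, fun hu => ge_of_eq hu⟩)

theorem numDeg_le_two_of_subset_pair (h : ∀ v, deg G v = 2 → v = a ∨ v = b) :
    numDeg G 2 ≤ 2 :=
  (Set.ncard_le_ncard (t := {a, b}) h).trans
    ((Set.ncard_insert_le a {b}).trans (by rw [Set.ncard_singleton]))

theorem IsTwoPathStar.numDeg_one_le (h : IsTwoPathStar G w a a' b b') (hT : TreeLike G) :
    numDeg G 1 ≤ deg G w := by
  have hw := two_le_deg h.left.mid.left.symm h.right.mid.left.symm h.ne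
  have ha := h.left.mid.deg_eq
  have hb := h.right.mid.deg_eq
  refine (hT.numDeg_one_le_max fun u hu => ?_).trans (max_le le_rfl hw)
  by_contra! hu₃
  rcases h.cases hT (v := u) (by omega) with rfl | rfl | rfl | h
  exacts [hu rfl, by omega, by omega, by omega]

theorem IsPathBroom.numDeg_one_le (h : IsPathBroom G w s z t) (hT : TreeLike G) :
    numDeg G 1 ≤ deg G t := by
  have ht := h.three_le
  have hw := h.mid.deg_eq
  have hs := h.path.mid.deg_eq
  refine (hT.numDeg_one_le_max fun u hu => ?_).trans (max_le le_rfl (by omega))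
  by_contra! hu₃
  rcases h.cases hT (v := u) (by omega) with rfl | rfl | rfl | h
  exacts [by omega, by omega, hu rfl, by omega]

theorem IsExceptional.numDeg_two_le (h : IsExceptional G) (hT : TreeLike G)
    (h₁ : 3 ≤ numDeg G 1) : numDeg G 2 ≤ 2 := by
  rcases h with @⟨u, w, h⟩ | @⟨w, a, a', b, b', h⟩ | @⟨w, s, z, t, h⟩
  · exact numDeg_le_two_of_subset_pair fun v hv => h.eq v hv.ge
  · have := h.numDeg_one_le hT
    refine numDeg_le_two_of_subset_pair (a := a) (b := b) fun v hv => ?_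
    rcases h.cases hT (v := v) (by omega) with rfl | h | h | h
    exacts [by omega, .inl h, .inr h, by omega]
  · have := h.three_le
    refine numDeg_le_two_of_subset_pair (a := w) (b := s) fun v hv => ?_
    rcases h.cases hT (v := v) (by omega) with h | h | rfl | h
    exacts [.inl h, .inr h, by omega, by omega]

theorem IsDoubleStar.deg_eq_two (h : IsDoubleStar G u w) (h₂ : 2 ≤ numDeg G 2) :
    deg G u = 2 := by
  by_contra hu
  have hsub : {v | deg G v = 2} ⊆ {w} := fun v hv =>
    (h.eq v (ge_of_eq hv)).resolve_left (by rintro rfl; exact hu hv)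
  have := (h₂.trans (Set.ncard_le_ncard hsub)).trans_eq (Set.ncard_singleton w)
  omega

theorem IsExceptional.exists_isLeafAt (h : IsExceptional G) (hT : TreeLike G)
    (h₁ : 4 ≤ numDeg G 1) (h₂ : 2 ≤ numDeg G 2) : ∃ x v, IsLeafAt G x v ∧ 4 ≤ deg G v := by
  rcases h with @⟨u, w, h⟩ | @⟨w, a, a', b, b', h⟩ | @⟨w, s, z, t, h⟩
  · have hu := h.deg_eq_two h₂
    have hw := h.symm.deg_eq_two h₂
    have := hT.numDeg_one_eq_two fun v => by
      by_contra! hv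
      rcases h.eq v (by omega) with rfl | rfl <;> omega
    omega
  · have hw := h₁.trans (h.numDeg_one_le hT)
    obtain ⟨x, hx, hxa, hxb⟩ := exists_adj_ne_ne (by omega : 3 ≤ deg G w) a b
    exact ⟨x, w, ((h.eq x hx).resolve_left hxa).resolve_left hxb, hw⟩
  · have ht := h₁.trans (h.numDeg_one_le hT)
    obtain ⟨x, hx, hxw⟩ := exists_adj_ne (by omega : 2 ≤ deg G t) w
    exact ⟨x, t, (h.eq x hx).resolve_left hxw, ht⟩

theorem isExceptional_of_deleteLeaf (hx : IsLeafAt G x v) (hT : TreeLike (G ⊖ x))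
    (hv : 3 ≤ deg (G ⊖ x) v) (h : IsExceptional (G ⊖ x)) : IsExceptional G := by
  rcases h with @⟨u, w, h⟩ | @⟨w, a, a', b, b', h⟩ | @⟨w, s, z, t, h⟩
  · exact .doubleStar (h.of_deleteLeaf hx (by omega))
  · have ha := h.left.mid.deg_eq
    have hb := h.right.mid.deg_eq
    rcases h.cases hT (v := v) (by omega) with rfl | rfl | rfl | hv₁
    exacts [.twoPathStar (h.of_deleteLeaf hx), by omega, by omega, by omega]
  · have hw := h.mid.deg_eq
    have hs := h.path.mid.deg_eq
    rcases h.cases hT (v := v) (by omega) with rfl | rfl | rfl | hv₁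
    exacts [by omega, by omega, .pathBroom (h.of_deleteLeaf hx), by omega]

theorem IsTwoPathStar.vdColorable_of_leaf_left (hT : TreeLike G) (hx : IsLeafAt G x a)
    (h : IsTwoPathStar (G ⊖ x) w a a' b b') (hleaf : ∀ z u, IsLeafAt G z u → deg G u ≤ 3)
    (hG : ¬IsExceptional G) : VDColorable G (numDeg G 1) := by
  have hadj : ∀ {y z}, (G ⊖ x).Adj y z → G.Adj y z := fun h => (deleteIncidenceSet_adj.1 h).1
  have hwx := (deleteIncidenceSet_adj.1 h.left.mid.left).2.2
  have hax' := (deleteIncidenceSet_adj.1 h.left.mid.right).2.2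
  have hwa := hadj h.left.mid.left.symm
  have hb : IsPendantPath G w b b' := .of_deleteLeaf hx h.right h.ne.symm
    (by rintro rfl; have := h.left.mid.deg_eq; have := h.right.leaf.deg_eq; omega)
  have ha' : IsLeafAt G a' a := .of_deleteLeaf hx h.left.leaf h.left.mid.right.ne'
  have ha : IsFork G w a x a' := ⟨hx, ha', hax'.symm, hwa, hwx, h.left.mid.ne, fun u hu => by
    have := hx.adj_cases hu
    have := h.left.mid.eq u
    grind⟩
  by_cases hz : ∃ z, G.Adj w z ∧ z ≠ a ∧ z ≠ b
  · obtain ⟨z, hz, hza, hzb⟩ := hz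
    have hzx : z ≠ x := by rintro rfl; exact hwa.ne (hx.eq w hz.symm)
    have hz' : IsLeafAt G z w := .of_deleteLeaf hx (((h.eq z (deleteIncidenceSet_adj.2
      ⟨hz, hwx, hzx⟩)).resolve_left hza).resolve_left hzb) hza
    have hw : deg G w = 3 := le_antisymm (hleaf z w hz')
      (three_le_deg hz hwa hb.mid.left.symm hza hzb h.ne)
    have := hT.deg_add_deg_le (by omega) (by rw [ha.deg_eq]; omega) hwa.ne
    have := ha.deg_eq
    exact (hT.vdColorable_leaf_fork_path
      (.of_deg_eq_three hz hwa hb.mid.left.symm hza hzb h.ne hw) hz' ha hb).mono (by omega)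
  · push Not at hz
    refine absurd (.pathBroom (w := w) (s := b) (z := b') (t := a) ⟨⟨hb.mid.left.symm, hwa,
      h.ne.symm, fun u hu => or_iff_not_imp_right.2 fun hua => hz u hu hua⟩, hb, ha.deg_eq.ge,
      fun u hu => ?_⟩) hG
    rcases ha.eq u hu with rfl | rfl | rfl
    exacts [.inl rfl, .inr hx, .inr ha']

theorem IsPathBroom.exists_isFork (h : IsPathBroom G w s z t) (ht : deg G t = 3) :
    ∃ l₁ l₂, IsFork G w t l₁ l₂ := by
  obtain ⟨l₁, hl₁, hl₁w⟩ := exists_adj_ne (by omega : 2 ≤ deg G t) w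
  obtain ⟨l₂, hl₂, hl₂w, hl₂₁⟩ := exists_adj_ne_ne ht.ge w l₁
  exact ⟨l₁, l₂, .of_deg_eq_three ((h.eq l₁ hl₁).resolve_left hl₁w)
    ((h.eq l₂ hl₂).resolve_left hl₂w) hl₂₁.symm h.mid.right hl₁w.symm hl₂w.symm ht⟩

theorem IsPathBroom.vdColorable_of_leaf (hT : TreeLike G) {l₁ l₂ : V} (hx : IsLeafAt G x v)
    (h : IsPathBroom (G ⊖ x) w s z t) (ht : IsFork G w t l₁ l₂) (hv : deg G v = 3)
    (hvw : v = w ∨ v = s) : VDColorable G (numDeg G 1) := by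
  have hadj : ∀ {y z}, (G ⊖ x).Adj y z → G.Adj y z := fun h => (deleteIncidenceSet_adj.1 h).1
  have hws := hadj h.mid.left
  have hwt := hadj h.mid.right
  have hwx := (deleteIncidenceSet_adj.1 h.mid.left).2.1
  have hsx := (deleteIncidenceSet_adj.1 h.mid.left).2.2
  have htx := (deleteIncidenceSet_adj.1 h.mid.right).2.2
  have hzx := (deleteIncidenceSet_adj.1 h.path.mid.right).2.2
  have hvt : v ≠ t := by
    rcases hvw with rfl | rfl
    exacts [hwt.ne, h.mid.ne]
  have := hT.deg_add_deg_le (by omega : 2 ≤ deg G v) (by rw [ht.deg_eq]; omega) hvt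
  have := ht.deg_eq
  refine VDColorable.mono ?_ (by omega : 4 ≤ numDeg G 1)
  rcases hvw with rfl | rfl
  · exact hT.vdColorable_leaf_fork_path
      (.of_deg_eq_three hx.adj hwt hws htx.symm hsx.symm h.mid.ne.symm hv) hx ht
      (.of_deleteLeaf hx h.path hws.ne' h.path.mid.ne.symm)
  · exact hT.vdColorable_fork_fork (.of_deleteLeaf hx h.mid hws.ne) (.of_deg_eq_three hx
      (.of_deleteLeaf hx h.path.leaf h.path.mid.right.ne') hzx.symm hws hwx h.path.mid.ne hv) ht

theorem VDColorable.of_isExceptional_deleteLeaf (hT : TreeLike G) (hx : IsLeafAt G x v)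
    (hv : deg G v = 3) (hleaf : ∀ z u, IsLeafAt G z u → deg G u ≤ 3) (hG : ¬IsExceptional G)
    (h : IsExceptional (G ⊖ x)) : VDColorable G (numDeg G 1) := by
  have hT' := hT.deleteLeaf hx (by omega)
  have hv' : deg (G ⊖ x) v = 2 := by
    rw [deg_deleteLeaf_self hx, hv]
  rcases h with h | @⟨w, a, a', b, b', h⟩ | @⟨w, s, z, t, h⟩
  · exact absurd (.doubleStar (h.of_deleteLeaf hx hv'.ge)) hG
  · rcases h.cases hT' (v := v) (by omega) with rfl | rfl | rfl | h₁
    · exact absurd (.twoPathStar (h.of_deleteLeaf hx)) hG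
    · exact h.vdColorable_of_leaf_left hT hx hleaf hG
    · exact h.symm.vdColorable_of_leaf_left hT hx hleaf hG
    · omega
  · have ht := h.three_le
    have htv : t ≠ v := by rintro rfl; omega
    have hdt := deg_deleteLeaf_of_ne hx (deleteIncidenceSet_adj.1 h.mid.right).2.2 htv
    obtain ⟨l, hl, hlw⟩ := exists_adj_ne (by omega : 2 ≤ deg (G ⊖ x) t) w
    have hlt := (h.eq l hl).resolve_left hlw
    have ht₃ := hleaf l t (.of_deleteLeaf hx hlt (by rintro rfl; have := hlt.deg_eq; omega))
    obtain ⟨l₁, l₂, hf⟩ := h.exists_isFork (by omega)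
    have hf' : IsFork G w t l₁ l₂ := .of_deleteLeaf hx hf htv
      (by rintro rfl; have := hf.left.deg_eq; omega)
      (by rintro rfl; have := hf.right.deg_eq; omega)
    rcases h.cases hT' (v := v) (by omega) with hvw | hvs | hvt | h₁
    · exact h.vdColorable_of_leaf hT hx hf' hv (.inl hvw)
    · exact h.vdColorable_of_leaf hT hx hf' hv (.inr hvs)
    · exact absurd hvt.symm htv
    · omega

/-- The conclusion of the main theorem for all trees with smaller support than `G`: the induction
hypothesis of its proof. -/
def VDColorableBelow (G : SimpleGraph V) : Prop :=
  ∀ G' : SimpleGraph V, TreeLike G' → G'.support.ncard < G.support.ncard →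
    numDeg G' 2 ≤ numDeg G' 1 → ¬IsExceptional G' → VDColorable G' (numDeg G' 1)

theorem VDColorableBelow.vdColorable_of_add_two_le (ih : VDColorableBelow G) (hT : TreeLike G)
    (hG : ¬IsExceptional G) (h₂ : numDeg G 2 + 2 ≤ numDeg G 1) :
    VDColorable G (numDeg G 1) := by
  have hbranch : ∃ v, 3 ≤ deg G v := by
    by_contra! hdeg
    have := hT.numDeg_one_eq_two fun u => Nat.le_of_lt_succ (hdeg u)
    exact hG (hT.isExceptional_of_deg_le_two (fun u => Nat.le_of_lt_succ (hdeg u)) (by omega))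
  have step : ∀ x v, IsLeafAt G x v → 3 ≤ deg G v → ¬IsExceptional (G ⊖ x) →
      VDColorable G (numDeg G 1) := by
    intro x v hx hv hE
    obtain ⟨hT', hcard, h₁', h₂'⟩ := hT.counts_deleteLeaf hx (by omega)
    rw [if_neg (by omega)] at h₁' h₂'
    have := (ih _ hT' (by omega) (by split_ifs at h₂' <;> omega) hE).addLeaf hx
      (by rw [deg_deleteLeaf_self hx]; omega)
    rwa [h₁'] at this
  by_cases h₄ : ∃ x v, IsLeafAt G x v ∧ 4 ≤ deg G v
  · obtain ⟨x, v, hx, hv⟩ := h₄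
    refine step x v hx (by omega) fun hE => hG (isExceptional_of_deleteLeaf hx
      (hT.deleteLeaf hx (by omega)) ?_ hE)
    rw [deg_deleteLeaf_self hx]
    omega
  push Not at h₄
  obtain ⟨v₀, hv₀⟩ := hbranch
  obtain ⟨x, v, hx, hv⟩ := hT.exists_isLeafAt_three_le_deg hv₀ (by omega)
  have hv₃ : deg G v = 3 := by have := h₄ x v hx; omega
  by_cases hE : IsExceptional (G ⊖ x)
  · exact .of_isExceptional_deleteLeaf hT hx hv₃ (fun z u h => Nat.le_of_lt_succ (h₄ z u h)) hG hE
  · exact step x v hx hv hE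

end Exceptional

/-! ### The induction step -/

section AddOne

variable {G : SimpleGraph V}

theorem TreeLike.exists_isPendantPath [Finite V] (hT : TreeLike G) {v s s' : V} (hv : 3 ≤ deg G v)
    (hs : deg G s = 2) (hs' : IsLeafAt G s' s) : ∃ w, IsPendantPath G w s s' ∧ 2 ≤ deg G w := by
  obtain ⟨w, hw⟩ := exists_isMid_of_deg_eq_two hs'.adj.symm hs
  refine ⟨w, ⟨hw.symm, hs'⟩, ?_⟩
  by_contra! hlt
  have hw' := isLeafAt_of_deg_eq_one hw.right (by have := deg_pos hw.right.symm; omega)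
  have hclosed : ∀ a b, G.Adj a b → (a = s ∨ a = s' ∨ a = w) → b = s ∨ b = s' ∨ b = w := by
    rintro a b hab (rfl | rfl | rfl)
    · exact (hw.eq b hab).elim (.inr ∘ .inl) (.inr ∘ .inr)
    · exact .inl (hs'.eq b hab)
    · exact .inl (hw'.eq b hab)
  have hsv := hT.mem_of_closed (.inl rfl) (by omega) hclosed (u := v) (by omega)
  have := hs'.deg_eq
  rcases hsv with rfl | rfl | rfl <;> omega

theorem TreeLike.exists_two_isPendantPath [Finite V] (hT : TreeLike G) {v : V} (hv : 3 ≤ deg G v)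
    (h : 2 ≤ numPendant G) : ∃ w s s' g y y', IsPendantPath G w s s' ∧ 2 ≤ deg G w ∧
      IsPendantPath G g y y' ∧ y ≠ s := by
  obtain ⟨s, y, ⟨hs, s', hs'⟩, ⟨hy, y', hy'⟩, hsy⟩ := (Set.one_lt_ncard_iff).1 h
  obtain ⟨w, hw, hdw⟩ := hT.exists_isPendantPath hv hs hs'
  obtain ⟨g, hg, -⟩ := hT.exists_isPendantPath hv hy hy'
  exact ⟨w, s, s', g, y, y', hw, hdw, hg, hsy.symm⟩

variable [Finite V] {G' : SimpleGraph V}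

theorem VDColorableBelow.vdColorable {k : ℕ} (ih : VDColorableBelow G) (hT' : TreeLike G')
    (hlt : G'.support.ncard < G.support.ncard) (h₁ : numDeg G' 1 = k) (h₂ : 3 ≤ numDeg G' 2)
    (h₁₂ : numDeg G' 2 ≤ k) : VDColorable G' k := by
  subst h₁
  refine ih G' hT' hlt h₁₂ fun hE => ?_
  have := hE.numDeg_two_le hT' (h₂.trans h₁₂)
  omega

theorem VDColorableBelow.vdColorable_of_four_le_deg (ih : VDColorableBelow G) (hT : TreeLike G)
    {x v : V} (hx : IsLeafAt G x v) (hv : 4 ≤ deg G v) (h₂ : 3 ≤ numDeg G 2)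
    (h₁₂ : numDeg G 2 < numDeg G 1) : VDColorable G (numDeg G 1) := by
  obtain ⟨hT', hcard, h₁', h₂'⟩ := hT.counts_deleteLeaf hx (by omega)
  rw [if_neg (by omega)] at h₁' h₂'
  rw [if_neg (by omega)] at h₂'
  rw [add_zero] at h₁'
  rw [← h₁']
  exact (ih.vdColorable hT' (by omega) rfl (by omega) (by omega)).addLeaf hx
    (by rw [deg_deleteLeaf_self hx]; omega)

theorem VDColorableBelow.vdColorable_of_two_isPendantPath (ih : VDColorableBelow G)
    (hT : TreeLike G) {w s s' g y y' : V} (hs : IsPendantPath G w s s') (hw : 3 ≤ deg G w)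
    (hy : IsPendantPath G g y y') (hys : y ≠ s)
    (h₂ : 4 ≤ numDeg G 2 + (if deg G w = 3 then 1 else 0))
    (h₁₂ : numDeg G 2 + (if deg G w = 3 then 1 else 0) ≤ numDeg G 1) :
    VDColorable G (numDeg G 1) := by
  obtain ⟨hT', hcard, h₁', h₂'⟩ := hT.counts_deletePendantPath hs hw
  rw [← h₁']
  exact .addPendantPath_of_pendantPath hs hw hy hys
    (ih.vdColorable hT' (by omega) rfl (by omega) (by omega))

theorem TreeLike.exists_isLeafAt_of_isExceptional_suppressMid (hT : TreeLike G) {a s b : V}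
    (hs : IsMid G a s b) (ha : deg G a = 2) (h₁ : 4 ≤ numDeg G 1) (h₂ : 3 ≤ numDeg G 2)
    (hE : IsExceptional (suppressMid G a s b)) : ∃ x v, IsLeafAt G x v ∧ 4 ≤ deg G v := by
  classical
  obtain ⟨hT', -, h₁', h₂'⟩ := hT.counts_suppress hs
  obtain ⟨x, v, hx, hv⟩ := hE.exists_isLeafAt hT' (by omega) (by omega)
  have hdv := deg_suppressMid hs (hT.not_adj hs) v
  have hdx := deg_suppressMid hs (hT.not_adj hs) x
  rw [hx.deg_eq] at hdx
  rw [if_neg (by rintro rfl; rw [if_pos rfl] at hdv; omega)] at hdv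
  rw [if_neg (by rintro rfl; rw [if_pos rfl] at hdx; omega)] at hdx
  refine ⟨x, v, isLeafAt_of_deg_eq_one ?_ hdx.symm, by omega⟩
  rcases suppressMid_adj.1 hx.adj with h | ⟨⟨rfl, -⟩ | ⟨-, rfl⟩, -⟩
  · exact h.1
  · omega
  · omega

theorem VDColorableBelow.vdColorable_of_add_one_eq (ih : VDColorableBelow G) (hT : TreeLike G)
    (h₁₂ : numDeg G 2 + 1 = numDeg G 1) (h₁ : 4 ≤ numDeg G 1) : VDColorable G (numDeg G 1) := by
  by_cases hleaf : ∃ x v, IsLeafAt G x v ∧ 4 ≤ deg G v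
  · obtain ⟨x, v, hx, hv⟩ := hleaf
    exact ih.vdColorable_of_four_le_deg hT hx hv (by omega) (by omega)
  by_cases h₂₂ : ∃ a s, G.Adj a s ∧ deg G a = 2 ∧ deg G s = 2
  · obtain ⟨a, s, has, ha, hs⟩ := h₂₂
    obtain ⟨b, hb⟩ := exists_isMid_of_deg_eq_two has hs
    obtain ⟨hT', hcard, h₁', h₂'⟩ := hT.counts_suppress hb
    refine .subdivide hb (hT.not_adj hb) ha (.inl (by omega)) (h₁' ▸ ih _ hT' (by omega) (by omega)
      fun hE => hleaf ?_)
    exact hT.exists_isLeafAt_of_isExceptional_suppressMid hb ha h₁ (by omega) hE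
  push Not at hleaf h₂₂
  obtain ⟨v₀, hv₀⟩ : ∃ v, 3 ≤ deg G v := by
    by_contra! hdeg
    have := hT.numDeg_one_eq_two fun u => Nat.le_of_lt_succ (hdeg u)
    omega
  obtain ⟨x, v, hx, hv⟩ := hT.exists_isLeafAt_three_le_deg hv₀ (by omega)
  have hv₄ := hleaf x v hx
  have hpendant := hT.numDeg_two_le hv₀ h₂₂
  obtain ⟨w, s, s', g, y, y', hs, hw, hy, hys⟩ := hT.exists_two_isPendantPath hv₀ (by omega)
  have hw₂ : deg G w ≠ 2 := fun h => h₂₂ w s hs.mid.left.symm h hs.mid.deg_eq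
  refine ih.vdColorable_of_two_isPendantPath hT hs (by omega) hy hys ?_ (by split_ifs <;> omega)
  split_ifs with hw₃
  · omega
  · have := hT.deg_add_deg_le (v := v) (w := w) (by omega) (by omega) (by rintro rfl; omega)
    omega

end AddOne

section Balanced

open Finset

variable {G : SimpleGraph V} {N : ℕ}

theorem IsRooting.exists_two_isLeafAt [Finite V] {v : V} {h : V → ℕ} {par : V → V}
    (hR : IsRooting G v h par) (hv : deg G v ≠ 2) {a : V} (ha : deg G a = 2)
    (hpendant : ∀ s x, deg G s = 2 → ¬ IsLeafAt G x s) :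
    ∃ y y₁ y₂, 3 ≤ deg G y ∧ IsLeafAt G y₁ y ∧ IsLeafAt G y₂ y ∧ y₁ ≠ y₂ ∧ 2 ≤ h y := by
  classical
  cases nonempty_fintype V
  obtain ⟨σ, hσ, hσmax⟩ := exists_max_image ({u | deg G u = 2} : Finset V) h ⟨a, by simpa using ha⟩
  simp only [mem_filter_univ] at hσ hσmax
  have hσpar := hR.par σ (by omega) (by rintro rfl; exact hv hσ)
  obtain ⟨τ, hτ, hτpar⟩ := exists_adj_ne hσ.ge (par σ)
  have hτσ := (hR.child_of_ne_par hτ hτpar).1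
  have deg_above : ∀ u, h σ < h u → deg G u ≠ 2 := fun u hu hd => (hσmax u hd).not_gt hu
  have hτ₃ : 3 ≤ deg G τ := by
    have h₁ : deg G τ ≠ 1 := fun hd => hpendant σ τ hσ (isLeafAt_of_deg_eq_one hτ hd)
    have := deg_above τ (by omega)
    have := deg_pos hτ.symm
    omega
  obtain ⟨y, hy, hymax⟩ := exists_max_image ({u | 3 ≤ deg G u} : Finset V) h
    ⟨τ, by simpa using hτ₃⟩
  simp only [mem_filter_univ] at hy hymax
  have hyτ := hymax τ hτ₃
  have leaf : ∀ z, G.Adj y z → z ≠ par y → IsLeafAt G z y := fun z hz hzp => by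
    have hzy := (hR.child_of_ne_par hz hzp).1
    have h₂ := deg_above z (by omega)
    have h₃ : ¬ 3 ≤ deg G z := fun hd => by have := hymax z hd; omega
    have := deg_pos hz.symm
    exact isLeafAt_of_deg_eq_one hz (by omega)
  obtain ⟨y₁, hy₁, hy₁p⟩ := exists_adj_ne (by omega : 2 ≤ deg G y) (par y)
  obtain ⟨y₂, hy₂, hy₂p, hy₂₁⟩ := exists_adj_ne_ne hy (par y) y₁
  exact ⟨y, y₁, y₂, hy, leaf _ hy₁ hy₁p, leaf _ hy₂ hy₂p, hy₂₁.symm, by omega⟩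

theorem TreeLike.counts_deleteFork [Finite V] (hT : TreeLike G) {p v x₁ x₂ : V}
    (hv : IsFork G p v x₁ x₂) :
    TreeLike (G ⊖ x₁ ⊖ x₂) ∧ (G ⊖ x₁ ⊖ x₂).support.ncard + 2 = G.support.ncard ∧
      numDeg (G ⊖ x₁ ⊖ x₂) 1 + 1 = numDeg G 1 ∧ numDeg (G ⊖ x₁ ⊖ x₂) 2 = numDeg G 2 := by
  have hd := hv.deg_eq
  have hd' := deg_deleteLeaf_self hv.left
  obtain ⟨hT₁, hcard₁, h₁₁, h₁₂⟩ := hT.counts_deleteLeaf hv.left (by omega)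
  obtain ⟨hT₂, hcard₂, h₂₁, h₂₂⟩ := hT₁.counts_deleteLeaf hv.right_delete (by omega)
  rw [if_neg (by omega)] at h₁₁ h₁₂
  rw [if_pos hd] at h₁₂
  rw [if_pos (by omega)] at h₂₁ h₂₂
  rw [if_neg (by omega)] at h₂₂
  exact ⟨hT₂, by omega, by omega, by omega⟩

/-- The situation of the induction step in the extremal case of as many vertices of degree two as
leaves: `G` is a tree with `N + 1` vertices of each kind, and all smaller trees can be colored. -/
structure IsBalanced (G : SimpleGraph V) (N : ℕ) : Prop where
  tree : TreeLike G
  below : VDColorableBelow G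
  numDeg_one : numDeg G 1 = N + 1
  numDeg_two : numDeg G 2 = N + 1
  three_le : 3 ≤ N

namespace IsBalanced

variable [Finite V]

theorem vdColorable_of_isLeafAt_of_isMid (hG : IsBalanced G N) {x v a s b : V}
    (hx : IsLeafAt G x v) (hv : 4 ≤ deg G v) (hs : IsMid G a s b) (ha : 2 ≤ deg G a)
    (hav : deg G a ≠ deg G v) : VDColorable G (N + 1) := by
  obtain ⟨hT, ih, h₁, h₂, hN⟩ := hG
  have hsv : s ≠ v := by rintro rfl; have := hs.deg_eq; omega
  obtain ⟨hT₁, hcard₁, h₁₁, h₁₂⟩ := hT.counts_deleteLeaf hx (by omega)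
  obtain ⟨hT₂, hcard₂, h₂₁, h₂₂⟩ := hT₁.counts_suppress (hs.deleteLeaf hx hsv)
  rw [if_neg (by omega)] at h₁₁ h₁₂
  rw [if_neg (by omega)] at h₁₂
  exact .addLeaf_subdivide hx hs (hT.not_adj hs) (by omega) ha hav
    (ih.vdColorable hT₂ (by omega) (by omega) (by omega) (by omega))

theorem vdColorable_of_isLeafAt (hG : IsBalanced G N) {x v : V} (hx : IsLeafAt G x v)
    (hv : 4 ≤ deg G v) : VDColorable G (N + 1) := by
  obtain ⟨hT, ih, h₁, h₂, hN⟩ := id hG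
  by_cases h₂₂ : ∃ a s, G.Adj a s ∧ deg G a = 2 ∧ deg G s = 2
  · obtain ⟨a, s, has, ha, hs⟩ := h₂₂
    obtain ⟨b, hb⟩ := exists_isMid_of_deg_eq_two has hs
    exact hG.vdColorable_of_isLeafAt_of_isMid hx hv hb ha.ge (by omega)
  push Not at h₂₂
  have hpendant := hT.numDeg_two_le (v := v) (by omega) h₂₂
  obtain ⟨w, s, s', g, y, y', hs, hw, hy, hys⟩ :=
    hT.exists_two_isPendantPath (v := v) (by omega) (by omega)
  have hw₂ : deg G w ≠ 2 := fun h => h₂₂ w s hs.mid.left.symm h hs.mid.deg_eq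
  by_cases hw₃ : deg G w = 3
  · exact hG.vdColorable_of_isLeafAt_of_isMid hx hv hs.mid hw (by omega)
  · rw [← h₁]
    exact ih.vdColorable_of_two_isPendantPath hT hs (by omega) hy hys
      (by rw [if_neg hw₃]; omega) (by rw [if_neg hw₃]; omega)

theorem vdColorable_of_isPendantPath_of_isMid (hG : IsBalanced G N) {v s s' r z : V}
    (hv : 3 ≤ deg G v) (hs : IsPendantPath G v s s') (hr : IsMid G v r z) (hrs : r ≠ s) :
    VDColorable G (N + 1) := by
  obtain ⟨hT, ih, h₁, h₂, hN⟩ := hG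
  obtain ⟨hT₁, hcard₁, h₁₁, h₁₂⟩ := hT.counts_deletePendantPath hs hv
  by_cases hv₃ : deg G v = 3
  · rw [if_pos hv₃] at h₁₂
    obtain ⟨hT₂, hcard₂, h₂₁, h₂₂⟩ :=
      hT₁.counts_suppress (hr.deletePendantPath hs hrs hr.left.ne)
    exact .addPendantPath_subdivide hs hr hrs (hT.not_adj hr) hv (by omega)
      (ih.vdColorable hT₂ (by omega) (by omega) (by omega) (by omega))
  · rw [if_neg hv₃] at h₁₂
    exact .addPendantPath_of_isMid hs hv hr hrs
      (ih.vdColorable hT₁ (by omega) (by omega) (by omega) (by omega))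

theorem vdColorable_of_pendantThreePath_of_isMid (hG : IsBalanced G N) {v r₁ r₂ r' s u : V}
    (hv : 3 ≤ deg G v) (hr₁ : IsMid G v r₁ r₂) (hr : IsPendantPath G r₁ r₂ r')
    (hs : IsMid G v s u) (hne : s ≠ r₁) (hu : deg G v = 3 ∨ deg G u = 2 ∧ 4 ≤ N) :
    VDColorable G (N + 1) := by
  obtain ⟨hT, ih, h₁, h₂, hN⟩ := hG
  obtain ⟨-, hvr₂, hvr', hr₁₂, -, -⟩ := hr₁.ne_of_isPendantPath hr
  have hdr := hr.mid.deg_eq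
  have hdr₁ := deg_deleteLeaf_of_ne hr.leaf hvr' hvr₂
  obtain ⟨hT₁, hcard₁, h₁₁, h₁₂⟩ := hT.counts_deleteLeaf hr.leaf hdr.ge
  obtain ⟨hT₂, hcard₂, h₂₁, h₂₂⟩ := hT₁.counts_deletePendantPath
    ⟨hr₁.deleteLeaf hr.leaf hr₁₂, hr.mid.isLeafAt_delete⟩ (by omega)
  rw [if_pos hdr] at h₁₁ h₁₂
  rw [if_neg (by omega)] at h₁₂
  rw [hdr₁] at h₂₂
  have hcolor (hle : numDeg (G ⊖ r' ⊖ r₂ ⊖ r₁) 2 ≤ N) (hge : 3 ≤ numDeg (G ⊖ r' ⊖ r₂ ⊖ r₁) 2) :=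
    ih.vdColorable hT₂ (by omega) (by omega) hge hle
  refine .addPendantThreePath hr₁ hr hs hne hv ?_ (hcolor ?_ ?_) <;> split_ifs at h₂₂ <;> omega

theorem vdColorable_of_long_paths (hG : IsBalanced G N) {v r₁ r₂ r₃ r₄ u₁ u₂ u₃ : V}
    (hr₁ : IsMid G v r₁ r₂) (hr₂ : IsMid G r₁ r₂ r₃) (hr₃ : IsMid G r₂ r₃ r₄)
    (hu₁ : deg G u₁ = 2) (hu₂ : IsMid G u₁ u₂ u₃)
    (hne : ∀ r ∈ [r₁, r₂, r₃], r ≠ u₁ ∧ r ≠ u₂ ∧ r ≠ u₃) : VDColorable G (N + 1) := by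
  obtain ⟨hT, ih, h₁, h₂, hN⟩ := hG
  simp only [List.forall_mem_cons, List.not_mem_nil, false_imp_iff, implies_true, and_true] at hne
  obtain ⟨⟨h₁₁, h₁₂, h₁₃⟩, ⟨h₂₁, h₂₂, h₂₃⟩, ⟨h₃₁, h₃₂, h₃₃⟩⟩ := hne
  obtain ⟨hT', hcard', h₁', h₂'⟩ := hT.counts_suppress hu₂
  exact .subdivide hu₂ (hT.not_adj hu₂) hu₁ (.inr ⟨by omega, v, r₁, r₂, r₃, r₄,
    hu₂.suppress hr₁ h₁₂ h₁₁ h₁₃, hu₂.suppress hr₂ h₂₂ h₂₁ h₂₃, hu₂.suppress hr₃ h₃₂ h₃₁ h₃₃,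
    h₁₁, h₂₁, h₃₁⟩) (ih.vdColorable hT' (by omega) (by omega) (by omega) (by omega))

theorem vdColorable_of_isFork_of_isMid (hG : IsBalanced G N) {x₁ x₂ v p q : V}
    (hv : IsFork G p v x₁ x₂) (hp : IsMid G v p q) (hq : 2 ≤ deg G q) :
    VDColorable G (N + 1) := by
  obtain ⟨hT, ih, h₁, h₂, hN⟩ := hG
  obtain ⟨hT₁, hcard₁, h₁₁, h₁₂⟩ := hT.counts_deleteFork hv
  have hdp := (hv.delete_mid hp hp.left.ne).deg_eq
  obtain ⟨hT₂, hcard₂, h₂₁, h₂₂⟩ := hT₁.counts_deleteLeaf hv.isLeafAt_delete hdp.ge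
  rw [if_pos hdp] at h₂₁ h₂₂
  rw [if_neg (by omega)] at h₂₂
  exact .addFork hv hp hq hN (ih.vdColorable hT₂ (by omega) (by omega) (by omega) (by omega))

theorem vdColorable_of_isFork_of_three_le_deg (hG : IsBalanced G N) {x₁ x₂ v p : V}
    (hv : IsFork G p v x₁ x₂) (hp : 3 ≤ deg G p) : VDColorable G (N + 1) := by
  obtain ⟨hT, ih, h₁, h₂, hN⟩ := hG
  have hdv := hv.deg_eq
  obtain ⟨hT₁, hcard₁, h₁₁, h₁₂⟩ := hT.counts_deleteFork hv
  have color {a s b : V} (hs : IsMid G a s b) :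
      VDColorable (suppressMid (G ⊖ x₁ ⊖ x₂) a s b) N := by
    have hsv : s ≠ v := by rintro rfl; have := hs.deg_eq; omega
    obtain ⟨hT₂, hcard₂, h₂₁, h₂₂⟩ := hT₁.counts_suppress (hv.delete_mid hs hsv)
    exact ih.vdColorable hT₂ (by omega) (by omega) (by omega) (by omega)
  by_cases hpendant : ∃ s s', deg G s = 2 ∧ IsLeafAt G s' s
  · obtain ⟨s, s', hs, hs'⟩ := hpendant
    obtain ⟨w, hw, -⟩ := hT.exists_isPendantPath hp hs hs'
    exact .addTwoLeaves_subdivide_pendant hv hp hw (color hw.mid.symm)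
  push Not at hpendant
  obtain ⟨a, s, has, ha, hs⟩ : ∃ a s, G.Adj a s ∧ deg G a = 2 ∧ deg G s = 2 := by
    by_contra! h₂₂
    have hle := hT.numDeg_two_le hp h₂₂
    have : numPendant G = 0 := (Set.ncard_eq_zero).2 <| Set.eq_empty_of_forall_notMem
      fun s hs => hs.2.elim fun x hx => hpendant s x hs.1 hx
    omega
  obtain ⟨b, hm⟩ := exists_isMid_of_deg_eq_two has hs
  obtain ⟨h, par, hR⟩ := hT.exists_isRooting (v := v) (by omega)
  obtain ⟨y, y₁, y₂, hy, hy₁, hy₂, hy₁₂, hhy⟩ := hR.exists_two_isLeafAt (by omega) ha hpendant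
  have hroot := hR.root
  have hyp : y ≠ p := by
    rintro rfl
    rcases hR.adj _ _ hv.adj with h | h <;> omega
  exact .addTwoLeaves_subdivide_inner hv hp hm ha (hT.not_adj hm) hy₁ hy₂ hy₁₂ hy hyp
    (by rintro rfl; omega) (color hm)

theorem vdColorable_of_isLeafAt_of_isPendantPath (hG : IsBalanced G N) {x v s s' p : V}
    (hx : IsLeafAt G x v) (hs : IsPendantPath G v s s') (hp : G.Adj v p) (hv : deg G v = 3)
    (hps : p ≠ s) (hp₂ : 2 ≤ deg G p) : VDColorable G (N + 1) := by
  obtain ⟨hT, ih, h₁, h₂, hN⟩ := hG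
  have hdx := hx.deg_eq
  have hs' : IsPendantPath (G ⊖ x) v s s' := hs.deleteLeaf hx hs.mid.left.ne
    (by rintro rfl; exact hs.mid.left.ne (hx.eq s hs.leaf.adj.symm)) hs.mid.ne.symm
  have hdv := deg_deleteLeaf_self hx
  have hdv' := deg_deleteLeaf_of_ne hs'.leaf hs.mid.ne hs.mid.left.ne.symm
  obtain ⟨hT₁, hcard₁, h₁₁, h₁₂⟩ := hT.counts_deleteLeaf hx (by omega)
  obtain ⟨hT₂, hcard₂, h₂₁, h₂₂⟩ := hT₁.counts_deleteLeaf hs'.leaf hs'.mid.deg_eq.ge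
  obtain ⟨hT₃, hcard₃, h₃₁, h₃₂⟩ :=
    hT₂.counts_deleteLeaf hs'.mid.isLeafAt_delete (by omega)
  rw [if_neg (by omega)] at h₁₁ h₁₂
  rw [if_pos hv] at h₁₂
  rw [if_pos hs'.mid.deg_eq] at h₂₁ h₂₂
  rw [if_neg (by rw [hs'.mid.deg_eq]; omega)] at h₂₂
  rw [if_pos (by omega)] at h₃₁ h₃₂
  rw [if_neg (by omega)] at h₃₂
  exact .addLeaf_addPendantPath hx hs hp hv hps hp₂ hN
    (ih.vdColorable hT₃ (by omega) (by omega) (by omega) (by omega))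

theorem vdColorable_of_isLeafAt_of_two_isMid (hG : IsBalanced G N) {x v s₁ s₂ s₃ : V}
    (hx : IsLeafAt G x v) (hs₁ : IsMid G v s₁ s₂) (hs₂ : IsMid G s₁ s₂ s₃) (hv : deg G v = 3) :
    VDColorable G (N + 1) := by
  obtain ⟨hT, ih, h₁, h₂, hN⟩ := hG
  have hvs₃ : v ≠ s₃ := by
    rintro rfl
    exact hT.not_adj hs₁ hs₂.right.symm
  obtain ⟨hT₁, hcard₁, h₁₁, h₁₂⟩ := hT.counts_deleteLeaf hx (by omega)
  rw [if_neg (by omega)] at h₁₁ h₁₂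
  rw [if_pos hv] at h₁₂
  have hs₁' := hs₁.deleteLeaf hx hs₁.left.ne
  have hs₂' := hs₂.deleteLeaf hx hs₁.ne.symm
  obtain ⟨hT₂, hcard₂, h₂₁, h₂₂⟩ := hT₁.counts_suppress hs₁'
  obtain ⟨hT₃, hcard₃, h₃₁, h₃₂⟩ := hT₂.counts_suppress (hs₁'.suppressMid_next hs₂' hvs₃)
  exact .addLeaf_subdivide_subdivide hT hx hs₁ hs₂ hv.ge (by omega)
    (ih.vdColorable hT₃ (by omega) (by omega) (by omega) (by omega))

end IsBalanced

end Balanced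

/-! ### Legs -/

section Legs

variable {G : SimpleGraph V} {v a b : V} {l : List V}

/-- A leg at `v`: a path `v, a, …` that ends in a leaf and whose inner vertices have degree two.
The list consists of the inner vertices, so it is empty if `a` is the leaf. -/
inductive IsLeg (G : SimpleGraph V) : V → V → List V → Prop
  | leaf {v a : V} (h : IsLeafAt G a v) : IsLeg G v a []
  | cons {v a b : V} {l : List V} (h : IsMid G v a b) (h' : IsLeg G a b l) : IsLeg G v a (a :: l)

namespace IsLeg

theorem adj (hl : IsLeg G v a l) : G.Adj v a := by
  cases hl with
  | leaf h => exact h.adj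
  | cons h => exact h.left.symm

theorem isLeafAt (hl : IsLeg G v a []) : IsLeafAt G a v := by
  cases hl with | leaf h => exact h

theorem isPendantPath (hl : IsLeg G v a [b]) : ∃ x, IsPendantPath G v a x := by
  cases hl with
  | cons h h' => cases h' with | leaf h' => exact ⟨_, h, h'⟩

theorem mem_of_deg_eq_two (hl : IsLeg G v a l) (ha : deg G a = 2) : a ∈ l := by
  cases hl with
  | leaf h => have := h.deg_eq; omega
  | cons => exact List.mem_cons_self

theorem deg_eq_two (hl : IsLeg G v a l) : ∀ u ∈ l, deg G u = 2 := by
  induction hl with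
  | leaf => simp
  | cons h _ ih => exact List.forall_mem_cons.2 ⟨h.deg_eq, ih⟩

theorem mem_of_adj (hl : IsLeg G v a l) {u w : V} (hu : u ∈ l) (huw : G.Adj u w)
    (hw : deg G w = 2) : w = v ∨ w ∈ l := by
  induction hl with
  | leaf => simp at hu
  | cons h h' ih =>
    rcases List.mem_cons.1 hu with rfl | hu
    · rcases h.eq w huw with rfl | rfl
      · exact .inl rfl
      · exact .inr (List.mem_cons_of_mem _ (h'.mem_of_deg_eq_two hw))
    · exact .inr ((ih hu).elim (fun h => h ▸ List.mem_cons_self) (List.mem_cons_of_mem _))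

end IsLeg

namespace IsRooting

variable {r : V} {h : V → ℕ} {par : V → V}

theorem iterate_par_of_isLeg (hR : IsRooting G r h par) (hl : IsLeg G v a l)
    (ha : h a = h v + 1) {u : V} (hu : u ∈ l) : ∃ n, par^[n] u = a ∧ h u = h a + n := by
  induction hl with
  | leaf => simp at hu
  | @cons v a b l hm hl ih =>
    rcases List.mem_cons.1 hu with rfl | hu
    · exact ⟨0, rfl, rfl⟩
    · have hb := hR.child_of_ne_par hm.right (by rw [hR.par_eq hm.left.symm ha]; exact hm.ne.symm)
      obtain ⟨n, hn, hun⟩ := ih hb.1 hu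
      exact ⟨n + 1, by rw [Function.iterate_succ_apply', hn, hb.2], by omega⟩

theorem nodup_of_isLeg (hR : IsRooting G r h par) (hl : IsLeg G v a l) (ha : h a = h v + 1) :
    l.Nodup := by
  induction hl with
  | leaf => exact .nil
  | @cons v a b l hm hl ih =>
    have hb := (hR.child_of_ne_par hm.right
      (by rw [hR.par_eq hm.left.symm ha]; exact hm.ne.symm)).1
    refine List.nodup_cons.2 ⟨fun hal => ?_, ih hb⟩
    obtain ⟨n, -, hn⟩ := hR.iterate_par_of_isLeg hl hb hal
    omega

theorem disjoint_of_isLeg (hR : IsRooting G r h par) {m : List V} (hl : IsLeg G v a l)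
    (hm : IsLeg G v b m) (ha : h a = h v + 1) (hb : h b = h v + 1) (hab : a ≠ b) :
    l.Disjoint m := fun u hul hum => by
  obtain ⟨n, hn, hun⟩ := hR.iterate_par_of_isLeg hl ha hul
  obtain ⟨k, hk, huk⟩ := hR.iterate_par_of_isLeg hm hb hum
  obtain rfl : n = k := by omega
  exact hab (hn.symm.trans hk)

variable [Finite V]

theorem exists_isLeg (hR : IsRooting G r h par) (hdeg : ∀ u, h v < h u → deg G u ≤ 2)
    (hva : G.Adj v a) (ha : h a = h v + 1) : ∃ l, IsLeg G v a l := by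
  obtain ⟨M, hM⟩ := (Set.finite_range h).bddAbove
  have hM (u) : h u ≤ M := hM ⟨u, rfl⟩
  induction hn : M - h a using Nat.strong_induction_on generalizing v a with
  | h n ih =>
    have := deg_pos hva.symm
    have := hdeg a (by omega)
    by_cases ha₁ : deg G a = 1
    · exact ⟨[], .leaf (isLeafAt_of_deg_eq_one hva ha₁)⟩
    obtain ⟨b, hm⟩ := exists_isMid_of_deg_eq_two hva (by omega)
    have hb := (hR.child_of_ne_par hm.right (by rw [hR.par_eq hva ha]; exact hm.ne.symm)).1
    have := hM b
    obtain ⟨l, hl⟩ := ih (M - h b) (by omega) (fun u hu => hdeg u (by omega)) hm.right hb rfl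
    exact ⟨a :: l, .cons hm hl⟩

end IsRooting

end Legs

section Balanced

open Finset

variable {G : SimpleGraph V} {N : ℕ} [Finite V]

namespace IsBalanced

theorem four_le_of_four_le_deg (hG : IsBalanced G N) {v a b : V} (hv : 4 ≤ deg G v)
    (hleaf : ∀ x, ¬ IsLeafAt G x v) (ha : IsMid G v a b) (hb : deg G b = 2) : 4 ≤ N := by
  obtain ⟨hT, -, h₁, h₂, hN⟩ := hG
  by_contra! hlt
  have deg_neighbor (w) (hw : G.Adj v w) : deg G w = 2 := by
    have hd : deg G w ≠ 1 := fun hd => hleaf w (isLeafAt_of_deg_eq_one hw hd)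
    have := deg_pos hw.symm
    have := hT.deg_add_deg_le (by omega : 2 ≤ deg G v) (by omega : 2 ≤ deg G w) hw.ne
    omega
  have hbv : b ∉ G.neighborSet v := hT.not_adj ha
  have hle : (insert b (G.neighborSet v)).ncard ≤ {u | deg G u = 2}.ncard :=
    Set.ncard_le_ncard (Set.insert_subset hb deg_neighbor)
  rw [Set.ncard_insert_of_notMem hbv, ← deg_eq_ncard, ← numDeg_eq_ncard] at hle
  omega

theorem vdColorable_of_two_isLeg (hG : IsBalanced G N) {v a b : V} {l m : List V}
    (hleaf : 4 ≤ deg G v → ∀ x, ¬ IsLeafAt G x v) (hv : 3 ≤ deg G v) (hl : IsLeg G v a l)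
    (hm : IsLeg G v b m) (ha : l ≠ []) (hb : m ≠ []) (hab : a ≠ b) (hlm : l.Disjoint m) :
    VDColorable G (N + 1) := by
  cases hl with
  | leaf => exact absurd rfl ha
  | @cons _ _ a₂ l ha₁ hl =>
  cases hm with
  | leaf => exact absurd rfl hb
  | @cons _ _ b₂ m hb₁ hm =>
  cases hl with
  | leaf ha₂ => exact hG.vdColorable_of_isPendantPath_of_isMid hv ⟨ha₁, ha₂⟩ hb₁ hab.symm
  | @cons _ _ a₃ l ha₂ hl =>
  cases hm with
  | leaf hb₂ => exact hG.vdColorable_of_isPendantPath_of_isMid hv ⟨hb₁, hb₂⟩ ha₁ hab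
  | @cons _ _ b₃ m hb₂ hm =>
  cases hl with
  | leaf ha₃ =>
    refine hG.vdColorable_of_pendantThreePath_of_isMid hv ha₁ ⟨ha₂, ha₃⟩ hb₁ hab.symm ?_
    by_cases hv₃ : deg G v = 3
    · exact .inl hv₃
    · exact .inr ⟨hb₂.deg_eq,
        hG.four_le_of_four_le_deg (by omega) (hleaf (by omega)) ha₁ ha₂.deg_eq⟩
  | @cons _ _ a₄ l ha₃ hl =>
    refine hG.vdColorable_of_long_paths ha₁ ha₂ ha₃ hb₁.deg_eq hb₂ fun r hr => ?_
    have hrl : r ∈ a :: a₂ :: a₃ :: l := by grind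
    have hr₂ := (IsLeg.cons ha₁ (.cons ha₂ (.cons ha₃ hl))).deg_eq_two r hrl
    refine ⟨?_, ?_, ?_⟩ <;> rintro rfl
    · exact hlm hrl (by simp)
    · exact hlm hrl (by simp)
    · exact hlm hrl (by simp [hm.mem_of_deg_eq_two hr₂])

theorem vdColorable_of_isLeafAt_of_isLeg (hG : IsBalanced G N) {x v a p : V} {l : List V}
    (hx : IsLeafAt G x v) (hl : IsLeg G v a l) (hp : G.Adj v p) (hxa : x ≠ a) (hpx : p ≠ x)
    (hpa : p ≠ a) (hv : deg G v = 3) (hp₂ : 2 ≤ deg G p)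
    (hq : ∀ q, IsMid G v p q → 2 ≤ deg G q) : VDColorable G (N + 1) := by
  cases hl with
  | leaf ha =>
    have hfork := IsFork.of_deg_eq_three hx ha hxa hp.symm hpx hpa hv
    by_cases hp₃ : deg G p = 2
    · obtain ⟨q, hm⟩ := exists_isMid_of_deg_eq_two hp hp₃
      exact hG.vdColorable_of_isFork_of_isMid hfork hm (hq q hm)
    · exact hG.vdColorable_of_isFork_of_three_le_deg hfork (by omega)
  | @cons _ _ a₂ l ha hl =>
  cases hl with
  | leaf ha₂ => exact hG.vdColorable_of_isLeafAt_of_isPendantPath hx ⟨ha, ha₂⟩ hp hv hpa hp₂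
  | cons ha₂ => exact hG.vdColorable_of_isLeafAt_of_two_isMid hx ha ha₂ hv

theorem exists_three_le_deg (hG : IsBalanced G N) : ∃ v, 3 ≤ deg G v := by
  by_contra! hlt
  have := hG.tree.numDeg_one_eq_two fun u => Nat.le_of_lt_succ (hlt u)
  have := hG.numDeg_one
  have := hG.three_le
  omega

theorem ne_root {r v : V} {h : V → ℕ} {par : V → V} (hG : IsBalanced G N)
    (hR : IsRooting G r h par) (hv : deg G v = 3) (hdeg : ∀ u, h v < h u → deg G u ≤ 2) :
    v ≠ r := by
  rintro rfl
  have hle := hG.tree.numDeg_one_le_max (v := v) fun u huv => by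
    by_cases hu : deg G u = 0
    · omega
    · have := hR.par u hu huv
      have := hR.root
      exact hdeg u (by omega)
  have := hG.numDeg_one
  have := hG.three_le
  omega

theorem vdColorable_of_isLeafAt_child (hG : IsBalanced G N) {r x v a : V} {l : List V}
    {h : V → ℕ} {par : V → V} (hR : IsRooting G r h par) (hr : 3 ≤ deg G r) (hvr : v ≠ r)
    (hv : deg G v = 3) (hx : IsLeafAt G x v) (hl : IsLeg G v a l) (hxa : x ≠ a)
    (hpx : x ≠ par v) (hpa : a ≠ par v) : VDColorable G (N + 1) := by
  obtain ⟨hp, hhp⟩ := hR.par v (by omega) hvr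
  refine hG.vdColorable_of_isLeafAt_of_isLeg hx hl hp hxa hpx.symm hpa.symm hv
    (hR.two_le_deg_par (by omega) (by omega) hvr) fun q hm => ?_
  have hpr : par v ≠ r := fun he => by rw [← he, hm.deg_eq] at hr; omega
  obtain ⟨hadj, hpar⟩ := hR.par _ (deg_pos hp.symm).ne' hpr
  obtain hpv | rfl := hm.eq _ hadj
  · rw [hpv] at hpar; omega
  · exact hR.two_le_deg_par (by omega) (deg_pos hp.symm).ne' hpr

protected theorem vdColorable (hG : IsBalanced G N) : VDColorable G (N + 1) := by
  classical
  cases nonempty_fintype V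
  by_cases hbig : ∃ x v, IsLeafAt G x v ∧ 4 ≤ deg G v
  · obtain ⟨x, v, hx, hv⟩ := hbig
    exact hG.vdColorable_of_isLeafAt hx hv
  push Not at hbig
  obtain ⟨r, hr⟩ := hG.exists_three_le_deg
  obtain ⟨h, par, hR⟩ := hG.tree.exists_isRooting (v := r) (by omega)
  obtain ⟨v, hv, hmax⟩ := exists_max_image ({u | 3 ≤ deg G u} : Finset V) h ⟨r, by simpa using hr⟩
  simp only [mem_filter_univ] at hv hmax
  have hdeg (u) (hu : h v < h u) : deg G u ≤ 2 := by
    by_contra! hd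
    exact (hmax u hd).not_gt hu
  obtain ⟨a, ha, hap⟩ := exists_adj_ne (by omega : 2 ≤ deg G v) (par v)
  obtain ⟨b, hb, hbp, hba⟩ := exists_adj_ne_ne hv (par v) a
  have hha := (hR.child_of_ne_par ha hap).1
  have hhb := (hR.child_of_ne_par hb hbp).1
  obtain ⟨l, hl⟩ := hR.exists_isLeg hdeg ha hha
  obtain ⟨m, hm⟩ := hR.exists_isLeg hdeg hb hhb
  have hleaf {x} (hx : IsLeafAt G x v) : deg G v = 3 ∧ v ≠ r := by
    have hv₃ : deg G v = 3 := by have := hbig x v hx; omega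
    exact ⟨hv₃, hG.ne_root hR hv₃ hdeg⟩
  cases l with
  | nil =>
    have hx := hl.isLeafAt
    exact hG.vdColorable_of_isLeafAt_child hR hr (hleaf hx).2 (hleaf hx).1 hx hm hba.symm hap hbp
  | cons _ l =>
  cases m with
  | nil =>
    have hx := hm.isLeafAt
    exact hG.vdColorable_of_isLeafAt_child hR hr (hleaf hx).2 (hleaf hx).1 hx hl hba hbp hap
  | cons _ m =>
    exact hG.vdColorable_of_two_isLeg (fun hv₄ x hx => (hbig x v hx).not_ge hv₄) hv hl hm
      (List.cons_ne_nil _ _) (List.cons_ne_nil _ _) hba.symm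
      (hR.disjoint_of_isLeg hl hm hha hhb hba.symm)

end IsBalanced

end Balanced

/-! ### Trees with three leaves -/

section ThreeLeaves

open Finset

variable {G : SimpleGraph V} {v a b c : V} {l m n : List V}

theorem IsTripod.rotate (h : IsTripod G v a b c) : IsTripod G v b c a :=
  ⟨h.adj₂, h.adj₃, h.adj₁, h.ne₂₃, h.ne₁₂.symm, h.ne₁₃.symm, fun w hw => by grind [h.eq w hw]⟩

theorem IsTripod.swap (h : IsTripod G v a b c) : IsTripod G v b a c :=
  ⟨h.adj₂, h.adj₁, h.adj₃, h.ne₁₂.symm, h.ne₂₃, h.ne₁₃, fun w hw => by grind [h.eq w hw]⟩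

variable [Finite V]

theorem IsTripod.three_le_deg (h : IsTripod G v a b c) : 3 ≤ deg G v :=
  _root_.three_le_deg h.adj₁ h.adj₂ h.adj₃ h.ne₁₂ h.ne₁₃ h.ne₂₃

namespace IsRooting

variable {h : V → ℕ} {par : V → V}

theorem mem_isLeg_of_deg_eq_two (hR : IsRooting G v h par) (hv : IsTripod G v a b c)
    (hdeg : ∀ u, u ≠ v → deg G u ≤ 2) (hl : IsLeg G v a l) (hm : IsLeg G v b m)
    (hn : IsLeg G v c n) {u : V} (hu : deg G u = 2) : u ∈ l ++ m ++ n := by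
  have hv₃ := hv.three_le_deg
  have huv {u} (hu : deg G u = 2) : u ≠ v := by rintro rfl; omega
  induction hi : h u using Nat.strong_induction_on generalizing u with
  | h i ih =>
    obtain ⟨hadj, hpar⟩ := hR.par u (by omega) (huv hu)
    simp only [List.append_assoc, List.mem_append] at ih ⊢
    by_cases hp : par u = v
    · rcases hv.eq u (hp ▸ hadj.symm) with rfl | rfl | rfl
      · exact .inl (hl.mem_of_deg_eq_two hu)
      · exact .inr (.inl (hm.mem_of_deg_eq_two hu))
      · exact .inr (.inr (hn.mem_of_deg_eq_two hu))
    · have hp₂ := hR.two_le_deg_par (by omega) (by omega) (huv hu)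
      rcases ih (h (par u)) (by omega) (le_antisymm (hdeg _ hp) hp₂) rfl with hmem | hmem | hmem
      · exact .inl ((hl.mem_of_adj hmem hadj.symm hu).resolve_left (huv hu))
      · exact .inr (.inl ((hm.mem_of_adj hmem hadj.symm hu).resolve_left (huv hu)))
      · exact .inr (.inr ((hn.mem_of_adj hmem hadj.symm hu).resolve_left (huv hu)))

theorem numDeg_two_eq (hR : IsRooting G v h par) (hv : IsTripod G v a b c)
    (hdeg : ∀ u, u ≠ v → deg G u ≤ 2) (hl : IsLeg G v a l) (hm : IsLeg G v b m)
    (hn : IsLeg G v c n) : numDeg G 2 = l.length + m.length + n.length := by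
  classical
  cases nonempty_fintype V
  have height {u} (hu : G.Adj v u) : h u = h v + 1 := by
    have := hR.root
    rcases hR.adj v u hu with hvu | hvu <;> omega
  have ha := height hv.adj₁
  have hb := height hv.adj₂
  have hc := height hv.adj₃
  have hnodup : (l ++ m ++ n).Nodup := by
    refine ((hR.nodup_of_isLeg hl ha).append (hR.nodup_of_isLeg hm hb)
      (hR.disjoint_of_isLeg hl hm ha hb hv.ne₁₂)).append (hR.nodup_of_isLeg hn hc) ?_
    exact List.disjoint_append_left.2 ⟨hR.disjoint_of_isLeg hl hn ha hc hv.ne₁₃,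
      hR.disjoint_of_isLeg hm hn hb hc hv.ne₂₃⟩
  have hset : (univ.filter fun u => deg G u = 2) = (l ++ m ++ n).toFinset := by
    ext u
    rw [mem_filter_univ, List.mem_toFinset]
    refine ⟨hR.mem_isLeg_of_deg_eq_two hv hdeg hl hm hn, fun hu => ?_⟩
    rw [List.append_assoc, List.mem_append, List.mem_append] at hu
    exact hu.elim (hl.deg_eq_two u) (Or.elim · (hm.deg_eq_two u) (hn.deg_eq_two u))
  rw [numDeg_eq_card_filter, hset, List.toFinset_card_of_nodup hnodup, List.length_append,
    List.length_append]

end IsRooting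

theorem TreeLike.exists_isTripod_isLeg (hT : TreeLike G) (h₁ : numDeg G 1 = 3) :
    ∃ v a b c l m n, IsTripod G v a b c ∧ IsLeg G v a l ∧ IsLeg G v b m ∧ IsLeg G v c n ∧
      numDeg G 2 = l.length + m.length + n.length := by
  obtain ⟨v, hv⟩ : ∃ v, 3 ≤ deg G v := by
    by_contra! hlt
    have := hT.numDeg_one_eq_two fun u => Nat.le_of_lt_succ (hlt u)
    omega
  have hv₃ := hT.deg_le (v := v) (by omega)
  have hdeg (u) (hu : u ≠ v) : deg G u ≤ 2 := by
    by_contra! hu₃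
    have := hT.deg_add_deg_le (by omega) (by omega) hu
    omega
  obtain ⟨h, par, hR⟩ := hT.exists_isRooting (v := v) (by omega)
  have leg {a} (ha : G.Adj v a) : ∃ l, IsLeg G v a l := by
    have := hR.root
    refine hR.exists_isLeg (fun u hu => hdeg u (by rintro rfl; omega)) ha ?_
    rcases hR.adj v a ha with hva | hva <;> omega
  obtain ⟨a, ha⟩ := exists_adj_of_deg_ne_zero (by omega : deg G v ≠ 0)
  obtain ⟨b, hb, hba⟩ := exists_adj_ne (by omega : 2 ≤ deg G v) a
  obtain ⟨c, hc, hca, hcb⟩ := exists_adj_ne_ne hv a b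
  obtain ⟨l, hl⟩ := leg ha
  obtain ⟨m, hm⟩ := leg hb
  obtain ⟨n, hn⟩ := leg hc
  have htripod := IsTripod.of_deg_eq_three ha hb hc hba.symm hca.symm hcb.symm (by omega)
  exact ⟨v, a, b, c, l, m, n, htripod, hl, hm, hn, hR.numDeg_two_eq htripod hdeg hl hm hn⟩

theorem TreeLike.vdColorable_of_isLeg_of_length_le (hT : TreeLike G) (hG : ¬ IsExceptional G)
    (hv : IsTripod G v a b c) (hl : IsLeg G v a l) (hm : IsLeg G v b m) (hn : IsLeg G v c n)
    (hlm : l.length ≤ m.length) (hmn : m.length ≤ n.length)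
    (h₂ : 2 ≤ l.length + m.length + n.length) (h₃ : l.length + m.length + n.length ≤ 3) :
    VDColorable G 3 := by
  match l, m, n, hl, hm, hn with
  | [], [], [_, _], hl, hm, .cons hc (.cons hc₂ (.leaf hc₃)) =>
    refine absurd (.pathBroom ⟨hc.symm, ⟨hc₂, hc₃⟩, hv.three_le_deg, fun u hu => ?_⟩) hG
    rcases hv.eq u hu with rfl | rfl | rfl
    exacts [.inr hl.isLeafAt, .inr hm.isLeafAt, .inl rfl]
  | [], [], [_, _, _], hl, hm, .cons hc (.cons hc₂ (.cons hc₃ (.leaf hc₄))) =>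
    exact hT.vdColorable_spider_one_one_four hv hl.isLeafAt hm.isLeafAt hc hc₂ ⟨hc₃, hc₄⟩
  | [], [_], [_], hl, .cons hb (.leaf hb'), .cons hc (.leaf hc') =>
    refine absurd (.twoPathStar ⟨⟨hb, hb'⟩, ⟨hc, hc'⟩, hv.ne₂₃, fun u hu => ?_⟩) hG
    rcases hv.eq u hu with rfl | rfl | rfl
    exacts [.inr (.inr hl.isLeafAt), .inl rfl, .inr (.inl rfl)]
  | [], [_], [_, _], hl, .cons hb (.leaf hb'), .cons hc (.cons hc₂ (.leaf hc₃)) =>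
    exact hT.vdColorable_spider_one_two_three hv hl.isLeafAt ⟨hb, hb'⟩ hc ⟨hc₂, hc₃⟩
  | [_], [_], [_], .cons ha (.leaf ha'), .cons hb (.leaf hb'), .cons hc (.leaf hc') =>
    exact hT.vdColorable_spider_two_two_two hv ⟨ha, ha'⟩ ⟨hb, hb'⟩ ⟨hc, hc'⟩
  | [], [_], _ :: _ :: _ :: _, _, _, _ | [], _ :: _ :: _, _, _, _, _
  | [_], [_], _ :: _ :: _, _, _, _ | [_], _ :: _ :: _, _, _, _, _ | _ :: _ :: _, _, _, _, _, _ =>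
    simp only [List.length_cons, List.length_nil] at *
    omega

theorem TreeLike.vdColorable_of_numDeg_one_eq_three (hT : TreeLike G) (hG : ¬ IsExceptional G)
    (h₁ : numDeg G 1 = 3) (h₂ : 2 ≤ numDeg G 2) (h₃ : numDeg G 2 ≤ 3) : VDColorable G 3 := by
  obtain ⟨v, a, b, c, l, m, n, hv, hl, hm, hn, hlen⟩ := hT.exists_isTripod_isLeg h₁
  wlog hlm : l.length ≤ m.length generalizing a b l m
  · exact this b a m l hv.swap hm hl (by omega) (by omega)
  have hac := hv.rotate.rotate
  rcases le_total m.length n.length with hmn | hmn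
  · exact hT.vdColorable_of_isLeg_of_length_le hG hv hl hm hn hlm hmn (by omega) (by omega)
  rcases le_total l.length n.length with hln | hln
  · exact hT.vdColorable_of_isLeg_of_length_le hG hac.swap hl hn hm hln hmn (by omega) (by omega)
  · exact hT.vdColorable_of_isLeg_of_length_le hG hac hn hl hm hln hlm (by omega) (by omega)

end ThreeLeaves

theorem TreeLike.vdColorable [Finite V] {G : SimpleGraph V} (hT : TreeLike G)
    (hG : ¬ IsExceptional G) (h : numDeg G 2 ≤ numDeg G 1) : VDColorable G (numDeg G 1) := by
  induction hn : G.support.ncard using Nat.strong_induction_on generalizing G with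
  | h n ih =>
    have below : VDColorableBelow G := fun G' hT' hlt h' hG' => ih _ (hn ▸ hlt) hT' hG' h' rfl
    by_cases hgap : numDeg G 2 + 2 ≤ numDeg G 1
    · exact below.vdColorable_of_add_two_le hT hG hgap
    have h₂ := hT.two_le_numDeg_one
    by_cases h₁ : numDeg G 1 = 2
    · refine absurd (hT.isExceptional_of_deg_le_two (fun u => ?_) (by omega)) hG
      by_contra! hu
      have := hT.deg_le (v := u) (by omega)
      omega
    by_cases h₁ : numDeg G 1 = 3
    · rw [h₁]
      exact hT.vdColorable_of_numDeg_one_eq_three hG h₁ (by omega) (by omega)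
    by_cases hgap' : numDeg G 2 + 1 = numDeg G 1
    · exact below.vdColorable_of_add_one_eq hT hgap' (by omega)
    obtain ⟨N, hN⟩ : ∃ N, numDeg G 1 = N + 1 := ⟨numDeg G 1 - 1, by omega⟩
    rw [hN]
    exact IsBalanced.vdColorable ⟨hT, below, hN, by omega, by omega⟩

/-! ### Recognizing the trees `Q(r, m, n)` -/

section QGraph

variable {r m n : ℕ} {rv : Fin n → ℕ}

namespace QGraph

theorem adj_center_iff {x : QVert r m n rv} : (QGraph r m n rv).Adj (.inl ()) x ↔
    (∃ i, x = .inr (.inl i)) ∨ (∃ i, x = .inr (.inr (.inl (i, 0)))) ∨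
      ∃ i, x = .inr (.inr (.inr (.inl i))) := by
  rcases x with _ | _ | ⟨i, j⟩ | _ | _ <;> simp [QGraph]

theorem adj_t_iff {i : Fin n} {x : QVert r m n rv} :
    (QGraph r m n rv).Adj (.inr (.inr (.inr (.inl i)))) x ↔
      x = .inl () ∨ ∃ j, x = .inr (.inr (.inr (.inr ⟨i, j⟩))) := by
  rcases x with _ | _ | ⟨_, _⟩ | _ | ⟨_, _⟩ <;> simp [QGraph]

theorem isLeafAt_center (i : Fin r) : IsLeafAt (QGraph r m n rv) (.inr (.inl i)) (.inl ()) where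
  adj := adj_center_iff.2 (.inl ⟨i, rfl⟩)
  eq x hx := by rcases x with _ | _ | ⟨_, _⟩ | _ | _ <;> simp [QGraph] at hx ⊢

theorem isLeafAt_t (i : Fin n) (j : Fin (rv i)) : IsLeafAt (QGraph r m n rv)
    (.inr (.inr (.inr (.inr ⟨i, j⟩)))) (.inr (.inr (.inr (.inl i)))) where
  adj := adj_t_iff.2 (.inr ⟨j, rfl⟩)
  eq x hx := by
    rcases x with _ | _ | ⟨_, _⟩ | _ | ⟨_, _⟩ <;> simp_all [QGraph]

theorem isPendantPath (i : Fin m) : IsPendantPath (QGraph r m n rv) (.inl ())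
    (.inr (.inr (.inl (i, 0)))) (.inr (.inr (.inl (i, 1)))) where
  mid := by
    refine ⟨(adj_center_iff.2 (.inr (.inl ⟨i, rfl⟩))).symm,
      by simp [QGraph], by simp, fun x hx => ?_⟩
    rcases x with _ | _ | ⟨_, _⟩ | _ | _ <;> simp [QGraph] at hx ⊢
    grind
  leaf := by
    refine ⟨by simp [QGraph], fun x hx => ?_⟩
    rcases x with _ | _ | ⟨_, _⟩ | _ | _ <;> simp [QGraph] at hx ⊢
    grind

theorem preconnected : (QGraph r m n rv).Preconnected := by
  have hcenter (x : QVert r m n rv) : (QGraph r m n rv).Reachable x (.inl ()) := by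
    rcases x with _ | i | ⟨i, j⟩ | i | ⟨i, j⟩
    · rfl
    · exact (isLeafAt_center i).adj.symm.reachable
    · fin_cases j
      · exact (isPendantPath i).mid.left.reachable
      · exact (isPendantPath i).leaf.adj.symm.reachable.trans (isPendantPath i).mid.left.reachable
    · exact (adj_t_iff.2 (.inl rfl)).reachable
    · exact (isLeafAt_t i j).adj.symm.reachable.trans (adj_t_iff.2 (.inl rfl)).reachable
  exact fun x y => (hcenter x).trans (hcenter y).symm

/-- The map from the vertices of `Q(r, m, n)` that sends `w₀`, `wᵢ`, `sᵢ`, `s'ᵢ`, `tᵢ` and the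
leaves at `tᵢ` to the given vertices. -/
def vertexMap (w : V) (x : Fin r → V) (s s' : Fin m → V) (t : Fin n → V)
    (y : ∀ i, Fin (rv i) → V) : QVert r m n rv → V :=
  Sum.elim (fun _ => w) <| Sum.elim x <| Sum.elim (fun p => ![s p.1, s' p.1] p.2) <|
    Sum.elim t fun p => y p.1 p.2

variable {G : SimpleGraph V} {w : V} {s s' : Fin m → V} {t : Fin n → V}

theorem bijOn_vertexMap_center (e : Fin r ≃ {u // IsLeafAt G u w})
    (hs : ∀ i, IsPendantPath G w (s i) (s' i)) (hsinj : s.Injective) (hwt : ∀ i, G.Adj w (t i))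
    (htinj : t.Injective) (ht : ∀ i, 3 ≤ deg G (t i)) (y : ∀ i, Fin (rv i) → V)
    (hadj : ∀ u, G.Adj w u → IsLeafAt G u w ∨ u ∈ Set.range s ∨ u ∈ Set.range t) :
    Set.BijOn (vertexMap w (fun i => e i) s s' t y) ((QGraph r m n rv).neighborSet (.inl ()))
      (G.neighborSet w) := by
  refine ⟨fun x hx => ?_, fun x hx y hy hxy => ?_, fun u hu => ?_⟩
  · obtain ⟨i, rfl⟩ | ⟨i, rfl⟩ | ⟨i, rfl⟩ := adj_center_iff.1 hx
    exacts [(e i).2.adj, (hs i).mid.left.symm, hwt i]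
  · have he (i j) (h : (e i : V) = e j) : i = j := e.injective (Subtype.ext h)
    have hx₁ (i) : deg G (e i) = 1 := (e i).2.deg_eq
    have hs₂ (i) : deg G (s i) = 2 := (hs i).mid.deg_eq
    obtain ⟨i, rfl⟩ | ⟨i, rfl⟩ | ⟨i, rfl⟩ := adj_center_iff.1 hx <;>
      obtain ⟨j, rfl⟩ | ⟨j, rfl⟩ | ⟨j, rfl⟩ := adj_center_iff.1 hy <;>
      simp [vertexMap] at hxy ⊢ <;> grind [Function.Injective]
  · obtain hu | ⟨i, rfl⟩ | ⟨i, rfl⟩ := hadj u hu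
    · exact ⟨.inr (.inl (e.symm ⟨u, hu⟩)), (isLeafAt_center _).adj, by simp [vertexMap]⟩
    · exact ⟨_, (isPendantPath i).mid.left.symm, rfl⟩
    · exact ⟨_, adj_center_iff.2 (.inr (.inr ⟨i, rfl⟩)), rfl⟩

theorem bijOn_vertexMap_t {i : Fin n} (hwt : G.Adj (t i) w) (hw : ¬ IsLeafAt G w (t i))
    (f : ∀ i, Fin (rv i) ≃ {u // IsLeafAt G u (t i)})
    (hadj : ∀ u, G.Adj (t i) u → u = w ∨ IsLeafAt G u (t i)) (x : Fin r → V) :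
    Set.BijOn (vertexMap w x s s' t fun i j => f i j)
      ((QGraph r m n rv).neighborSet (.inr (.inr (.inr (.inl i))))) (G.neighborSet (t i)) := by
  have hne (j) : w ≠ f i j := fun h => hw (h ▸ (f i j).2)
  refine ⟨fun x hx => ?_, fun x hx y hy hxy => ?_, fun u hu => ?_⟩
  · obtain rfl | ⟨j, rfl⟩ := adj_t_iff.1 hx
    exacts [hwt, (f i j).2.adj]
  · obtain rfl | ⟨j, rfl⟩ := adj_t_iff.1 hx <;> obtain rfl | ⟨k, rfl⟩ := adj_t_iff.1 hy
    · rfl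
    · exact absurd hxy (hne k)
    · exact absurd hxy.symm (hne j)
    · obtain rfl : j = k := (f i).injective (Subtype.ext hxy)
      rfl
  · obtain rfl | hu := hadj u hu
    · exact ⟨_, adj_t_iff.2 (.inl rfl), rfl⟩
    · exact ⟨_, adj_t_iff.2 (.inr ⟨(f i).symm ⟨u, hu⟩, rfl⟩), by simp [vertexMap]⟩

end QGraph

theorem TreeLike.nonempty_iso_QGraph [Finite V] {G : SimpleGraph V} (hT : TreeLike G)
    (h0 : ∀ u, deg G u ≠ 0) {w : V} {s s' : Fin m → V} {t : Fin n → V} (hw : 2 ≤ deg G w)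
    (e : Fin r ≃ {u // IsLeafAt G u w}) (hs : ∀ i, IsPendantPath G w (s i) (s' i))
    (hsinj : s.Injective) (hwt : ∀ i, G.Adj w (t i)) (htinj : t.Injective)
    (ht : ∀ i, 3 ≤ deg G (t i)) (f : ∀ i, Fin (rv i) ≃ {u // IsLeafAt G u (t i)})
    (hadj : ∀ u, G.Adj w u → IsLeafAt G u w ∨ u ∈ Set.range s ∨ u ∈ Set.range t)
    (htadj : ∀ i u, G.Adj (t i) u → u = w ∨ IsLeafAt G u (t i)) :
    Nonempty (G ≃g QGraph r m n rv) := by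
  let φ : QVert r m n rv → V :=
    QGraph.vertexMap w (fun i => e i) s s' t fun i j => f i j
  refine IsGraphCovering.nonempty_iso (φ := φ) ?_ hT QGraph.preconnected h0
  rintro (_ | i | ⟨i, j⟩ | i | ⟨i, j⟩)
  · exact QGraph.bijOn_vertexMap_center e hs hsinj hwt htinj ht _ hadj
  · exact IsLeafAt.bijOn (φ := φ) (j := .inl ()) (e i).2 (QGraph.isLeafAt_center i)
  · fin_cases j
    · exact IsMid.bijOn (φ := φ) (a := .inl ()) (b := .inr (.inr (.inl (i, 1)))) (hs i).mid
        (QGraph.isPendantPath i).mid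
    · exact IsLeafAt.bijOn (φ := φ) (j := .inr (.inr (.inl (i, 0)))) (hs i).leaf
        (QGraph.isPendantPath i).leaf
  · refine QGraph.bijOn_vertexMap_t (hwt i).symm (fun h => ?_) f (htadj i) _
    have := h.deg_eq
    omega
  · exact IsLeafAt.bijOn (φ := φ) (j := .inr (.inr (.inr (.inl i)))) (f i j).2
      (QGraph.isLeafAt_t i j)

end QGraph

theorem IsTwoPathStar.exists_iso [Finite V] {G : SimpleGraph V} {w a a' b b' : V}
    (h : IsTwoPathStar G w a a' b b') (hT : TreeLike G) (h0 : ∀ u, deg G u ≠ 0) :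
    ∃ r, Nonempty (G ≃g QGraph r 2 0 Fin.elim0) := by
  have hw : 2 ≤ deg G w := two_le_deg h.left.mid.left.symm h.right.mid.left.symm h.ne
  refine ⟨_, hT.nonempty_iso_QGraph h0 hw (Finite.equivFin _).symm (s := ![a, b]) (s' := ![a', b'])
    (t := Fin.elim0) ?_ ?_ (fun i => i.elim0) (fun i => i.elim0) (fun i => i.elim0)
    (fun i => i.elim0) (fun u hu => ?_) (fun i => i.elim0)⟩
  · simpa [Fin.forall_fin_two] using ⟨h.left, h.right⟩
  · simp [Function.Injective, Fin.forall_fin_two, h.ne, h.ne.symm]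
  · obtain rfl | rfl | hu := h.eq u hu <;> simp [*]

theorem IsPathBroom.exists_iso [Finite V] {G : SimpleGraph V} {w s z t : V}
    (h : IsPathBroom G w s z t) (hT : TreeLike G) (h0 : ∀ u, deg G u ≠ 0) :
    ∃ rv : Fin 1 → ℕ, 2 ≤ rv 0 ∧ Nonempty (G ≃g QGraph 0 1 1 rv) := by
  have hws : IsMid G s w t := h.mid
  have hw : 2 ≤ deg G w := hws.deg_eq.ge
  have ht₃ := h.three_le
  have hs₂ : deg G s = 2 := h.path.mid.deg_eq
  have hempty : IsEmpty {u // IsLeafAt G u w} := by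
    refine ⟨fun ⟨u, hu⟩ => ?_⟩
    have := hu.deg_eq
    obtain rfl | rfl := hws.eq u hu.adj <;> omega
  refine ⟨fun _ => Nat.card {u // IsLeafAt G u t}, ?_, hT.nonempty_iso_QGraph h0 hw
    (Equiv.equivOfIsEmpty _ _) (s := fun _ => s) (s' := fun _ => z) (t := fun _ => t)
    (fun _ => h.path) (Function.injective_of_subsingleton _) (fun _ => hws.right)
    (Function.injective_of_subsingleton _) (fun _ => ht₃) (fun _ => (Finite.equivFin _).symm)
    (fun u hu => ?_) fun _ => h.eq⟩
  · obtain ⟨x, hx, hxw⟩ := exists_adj_ne (show 2 ≤ deg G t by omega) w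
    obtain ⟨y, hy, hyw, hyx⟩ := exists_adj_ne_ne ht₃ w x
    have : Nontrivial {u // IsLeafAt G u t} :=
      ⟨⟨x, (h.eq x hx).resolve_left hxw⟩,
        ⟨y, (h.eq y hy).resolve_left hyw⟩, by simpa using hyx.symm⟩
    exact Finite.one_lt_card
  · obtain rfl | rfl := hws.eq u hu <;> simp

/-! ### Trees of diameter at least four -/

theorem deg_ne_zero_of_preconnected [Finite V] [Nontrivial V] {G : SimpleGraph V}
    (hG : G.Preconnected) (u : V) : deg G u ≠ 0 :=
  mem_support_iff_deg_ne_zero.1 (hG.support_eq_univ ▸ Set.mem_univ u)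

theorem treeLike_of_isTree [Nontrivial V] {G : SimpleGraph V} (hT : G.IsTree) : TreeLike G where
  nonempty := hT.connected.preconnected.support_eq_univ ▸ Set.univ_nonempty
  acyclic := hT.isAcyclic
  reachable u _ w _ := hT.connected.preconnected u w

theorem IsDoubleStar.diam_le_three [Finite V] {G : SimpleGraph V} {u w : V}
    (h : IsDoubleStar G u w) (hG : G.Connected) : G.diam ≤ 3 := by
  have hclose (v : V) : ∃ x, (x = u ∨ x = w) ∧ G.dist v x ≤ 1 := by
    obtain ⟨p, hp⟩ := (hG v u).exists_isPath
    match p, hp with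
    | .nil, _ => exact ⟨v, .inl rfl, by simp⟩
    | .cons hx .nil, _ => exact ⟨u, .inl rfl, (dist_eq_one_iff_adj.2 hx).le⟩
    | .cons (v := x) hx (.cons (v := y) hy q), hp =>
      have hvy : v ≠ y := by
        rintro rfl
        simp [Walk.cons_isPath_iff] at hp
      exact ⟨x, h.eq x (two_le_deg hx.symm hy hvy), (dist_eq_one_iff_adj.2 hx).le⟩
  have := hG.nonempty
  obtain ⟨a, b, hab⟩ := G.exists_dist_eq_diam
  obtain ⟨x, hx, hax⟩ := hclose a
  obtain ⟨y, hy, hby⟩ := hclose b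
  have hxy : G.dist x y ≤ 1 := by
    obtain rfl | rfl := hx <;> obtain rfl | rfl := hy <;>
      simp [dist_eq_one_iff_adj.2 h.adj, dist_eq_one_iff_adj.2 h.adj.symm]
  have hab' : G.dist a b ≤ G.dist a x + (G.dist x y + G.dist y b) :=
    hG.dist_triangle.trans (Nat.add_le_add_left hG.dist_triangle _)
  rw [SimpleGraph.dist_comm (u := y)] at hab'
  omega

theorem VDColorable.exists_isVDEC {G : SimpleGraph V} {k : ℕ} (h : VDColorable G k)
    (hk : 0 < k) (h0 : ∀ u, deg G u ≠ 0) : ∃ c : Sym2 V → Fin k, IsVDEC G k c := by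
  obtain ⟨c, S, hc, hS, hd⟩ := h
  let c' : Sym2 V → Fin k := fun e => ⟨c e % k, Nat.mod_lt _ hk⟩
  have hc' (u w) (huw : G.Adj u w) : (c' s(u, w) : ℕ) = c s(u, w) :=
    Nat.mod_eq_of_lt (Finset.mem_range.1 (hS u ((hc.mem u _).2 ⟨w, huw, rfl⟩)))
  have hmem (u : V) (i : Fin k) :
      i ∈ {i : Fin k | ∃ w, G.Adj u w ∧ c' s(u, w) = i} ↔ (i : ℕ) ∈ S u := by
    rw [hc.mem]
    exact exists_congr fun w => and_congr_right fun hw => by rw [Fin.ext_iff, hc' _ _ hw]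
  refine ⟨c', fun u v w huv huw hne he => ?_, fun u v huv he => huv (hd u v ?_ ?_)⟩
  · exact hne (hc.inj u v w huv huw (by rw [← hc' _ _ huv, ← hc' _ _ huw, he]))
  · ext i
    by_cases hi : i < k
    · exact ((hmem u ⟨i, hi⟩).symm.trans (Set.ext_iff.1 he _)).trans (hmem v ⟨i, hi⟩)
    · exact iff_of_false (fun h => hi (Finset.mem_range.1 (hS u h)))
        fun h => hi (Finset.mem_range.1 (hS v h))
  · obtain ⟨w, hw⟩ := exists_adj_of_deg_ne_zero (h0 u)
    exact ⟨_, (hc.mem u _).2 ⟨w, hw, rfl⟩⟩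

theorem IsVDEC.numDeg_one_le [Finite V] {G : SimpleGraph V} {k : ℕ} {c : Sym2 V → Fin k}
    (h : IsVDEC G k c) : numDeg G 1 ≤ k := by
  choose n hn using fun u : {u : V // deg G u = 1} => exists_isLeafAt_of_deg_eq_one u.2
  have hcolors (u : {u : V // deg G u = 1}) :
      {i : Fin k | ∃ w, G.Adj u w ∧ c s(↑u, w) = i} = {c s(↑u, n u)} := by
    ext i
    exact ⟨fun ⟨w, hw, hi⟩ => by rw [← hi, (hn u).eq w hw]; rfl,
      fun hi => ⟨n u, (hn u).adj.symm, hi.symm⟩⟩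
  rw [← Nat.card_fin k]
  refine Nat.card_le_card_of_injective (fun u : {u : V // deg G u = 1} => c s(↑u, n u)) ?_
  intro u v huv
  by_contra hne
  exact h.2 u v (Subtype.coe_ne_coe.2 hne)
    ((hcolors u).trans (.trans (congrArg _ huv) (hcolors v).symm))

/-- A tree `T` with at least three vertices, `n₂(T) ≤ n₁(T)`, diameter at
least 4, not isomorphic to any `Q(r,2,0)` (`r ≥ 0`) nor to `Q(0,1,1)`, satisfies
`χ'ₛ(T) = n₁(T)`. -/
theorem vdecNum_of_tree_diam_ge_four {V : Type*} [Fintype V] (G : SimpleGraph V)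
    (hT : G.IsTree) (hcard : 3 ≤ Fintype.card V)
    (hn : numDeg G 2 ≤ numDeg G 1) (hdiam : 4 ≤ G.diam)
    (hQ1 : ∀ r : ℕ, ¬ Nonempty (G ≃g QGraph r 2 0 Fin.elim0))
    (hQ2 : ∀ rv : Fin 1 → ℕ, 2 ≤ rv 0 → ¬ Nonempty (G ≃g QGraph 0 1 1 rv)) :
    vdecNum G = numDeg G 1 := by
  have : Nontrivial V := Fintype.one_lt_card_iff_nontrivial.1 (by omega)
  have h0 := deg_ne_zero_of_preconnected hT.connected.preconnected
  have hL := treeLike_of_isTree hT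
  have hE : ¬ IsExceptional G := by
    rintro (h | h | h)
    · exact absurd (h.diam_le_three hT.connected) (by omega)
    · obtain ⟨r, hr⟩ := h.exists_iso hL h0
      exact hQ1 r hr
    · obtain ⟨rv, hrv, hr⟩ := h.exists_iso hL h0
      exact hQ2 rv hrv hr
  have hpos : 0 < numDeg G 1 := by have := hL.two_le_numDeg_one; omega
  have hmem := (hL.vdColorable hE hn).exists_isVDEC hpos h0
  refine le_antisymm (Nat.sInf_le hmem) (le_csInf ⟨_, hmem⟩ ?_)
  rintro k ⟨c, hc⟩
  exact hc.numDeg_one_le
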